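/- arXiv:1709.03335 — 4 statements merged into one kernel-verified Lean document; each statement's English description precedes it below -/
import Mathlib

section
/- Let π : ℝⁿ → ℝᵐ be a surjective linear map, P̃ ⊆ ℝⁿ a polytope, and P = π(P̃). Suppose π restricts to a bijection from the set of extreme points of P̃ onto the set of extreme points of P. If F̃ is a face of P̃ such that π(F̃) is a face of P, then F̃ is defined by a valid inequality φ̃(x̃) ≤ c where φ̃ is a linear functional with ker π ⊆ ker φ̃. -/
/-- A face of a convex set `P` cut out by a valid linear inequality. -/
def IsFaceOf {V : Type*} [AddCommGroup V] [Module ℝ V] (F P : Set V) : Prop :=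
  ∃ (φ : V →ₗ[ℝ] ℝ) (c : ℝ), (∀ x ∈ P, φ x ≤ c) ∧ F = {x ∈ P | φ x = c}

/-- assume `π` restricts to a bijection from the vertices (extreme points) of the
polytope `P̃` onto those of `P = π(P̃)`. If `F̃` is a face of `P̃` whose projection is a face of
`P`, then `F̃` is cut out by a valid inequality whose functional kills `ker π`. -/
theorem stmt5 {n m : ℕ}
    (π : EuclideanSpace ℝ (Fin n) →ₗ[ℝ] EuclideanSpace ℝ (Fin m))
    (hπ : Function.Surjective π)
    (V : Finset (EuclideanSpace ℝ (Fin n)))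
    (Pt : Set (EuclideanSpace ℝ (Fin n)))
    (hPt : Pt = convexHull ℝ (V : Set (EuclideanSpace ℝ (Fin n))))
    (P : Set (EuclideanSpace ℝ (Fin m))) (hP : P = π '' Pt)
    (hbij : Set.BijOn π (Set.extremePoints ℝ Pt) (Set.extremePoints ℝ P))
    (Ft : Set (EuclideanSpace ℝ (Fin n)))
    (hFt : IsFaceOf Ft Pt)
    (hface : IsFaceOf (π '' Ft) P) :
    ∃ (φt : EuclideanSpace ℝ (Fin n) →ₗ[ℝ] ℝ) (c : ℝ),
      LinearMap.ker π ≤ LinearMap.ker φt ∧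
      (∀ x ∈ Pt, φt x ≤ c) ∧ Ft = {x ∈ Pt | φt x = c} := by
  subst hP
  have hc : IsCompact Pt := hPt ▸ V.finite_toSet.isCompact_convexHull ℝ
  have hconv : Convex ℝ Pt := hPt ▸ convex_convexHull ℝ _
  obtain ⟨ψ, d, hψ, hFtd⟩ := hFt
  obtain ⟨φ, c, hφ, hF⟩ := hface
  have cπ : Continuous π := π.continuous_of_finiteDimensional
  have cψ : Continuous ψ := ψ.continuous_of_finiteDimensional
  have cφ : Continuous φ := φ.continuous_of_finiteDimensional
  have key : ∀ (f : EuclideanSpace ℝ (Fin n) →ₗ[ℝ] ℝ) (e : ℝ), (∀ x ∈ Pt, f x ≤ e) →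
      IsExtreme ℝ Pt {x ∈ Pt | f x = e} := by
    intro f e hf
    refine ⟨fun x hx => hx.1, ?_⟩
    rintro x hx y hy z ⟨hz, hze⟩ ⟨a, b, ha, hb, hab, rfl⟩
    refine ⟨hx, le_antisymm (hf x hx) ?_⟩
    simp only [map_add, map_smul, smul_eq_mul] at hze
    have h1 := hf y hy
    have h2 : a * e ≤ a * f x := by
      have : e = a * e + b * e := by rw [← add_mul, hab, one_mul]
      nlinarith
    exact le_of_mul_le_mul_left h2 ha
  have hFclosed : IsClosed Ft := by
    have : Ft = Pt ∩ {x | ψ x = d} := hFtd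
    rw [this]
    exact hc.isClosed.inter (isClosed_eq cψ continuous_const)
  have hFconv : Convex ℝ Ft := by
    have : Ft = Pt ∩ {x | ψ x = d} := hFtd
    rw [this]
    exact hconv.inter (convex_hyperplane ψ.isLinear d)
  have hFsub : Ft ⊆ Pt := by rw [hFtd]; exact fun x hx => hx.1
  have hFext : IsExtreme ℝ Pt Ft := by rw [hFtd]; exact key ψ d hψ
  have hval : ∀ x ∈ Pt, (φ ∘ₗ π) x ≤ c := fun x hx => hφ _ ⟨x, hx, rfl⟩
  refine ⟨φ ∘ₗ π, c, LinearMap.ker_le_ker_comp π φ, hval, ?_⟩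
  have hGext := key (φ ∘ₗ π) c hval
  set G := {x ∈ Pt | (φ ∘ₗ π) x = c} with hG
  have hG' : G = Pt ∩ {x | (φ ∘ₗ π) x = c} := rfl
  have hGc : IsCompact G := by
    rw [hG']
    exact hc.inter_right (isClosed_eq (cφ.comp cπ) continuous_const)
  have hGconv : Convex ℝ G := by
    rw [hG']
    exact hconv.inter (convex_hyperplane (φ ∘ₗ π).isLinear c)
  apply Set.Subset.antisymm
  · intro x hx
    have : π x ∈ π '' Ft := ⟨x, hx, rfl⟩
    rw [hF] at this
    exact ⟨hFsub hx, this.2⟩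
  · rw [← closure_convexHull_extremePoints hGc hGconv]
    refine closure_minimal (convexHull_min ?_ hFconv) hFclosed
    intro v hv
    have hvP : v ∈ Set.extremePoints ℝ Pt := hGext.extremePoints_subset_extremePoints hv
    have hvG : v ∈ G := hv.1
    have hπv : π v ∈ Set.extremePoints ℝ (π '' Pt) := hbij.mapsTo hvP
    have hmem : π v ∈ π '' Ft := by
      rw [hF]
      exact ⟨⟨v, hvG.1, rfl⟩, hvG.2⟩
    obtain ⟨x, hx, hxv⟩ := hmem
    have hKext : IsExtreme ℝ Pt (Ft ∩ {x | π x = π v}) := by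
      refine ⟨fun x hx => hFsub hx.1, ?_⟩
      rintro x hx y hy z ⟨hz, hze⟩ hzs
      refine ⟨hFext.2 hx hy hz hzs, ?_⟩
      refine hπv.2 ⟨x, hx, rfl⟩ ⟨y, hy, rfl⟩ ?_
      obtain ⟨a, b, ha, hb, hab, rfl⟩ := hzs
      exact ⟨a, b, ha, hb, hab, by rw [← hze.out]; simp⟩
    have hKc : IsCompact (Ft ∩ {x | π x = π v}) :=
      (hc.of_isClosed_subset hFclosed hFsub).inter_right (isClosed_eq cπ continuous_const)
    obtain ⟨w, hw⟩ := hKc.extremePoints_nonempty ⟨x, hx, hxv⟩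
    have hwP := hKext.extremePoints_subset_extremePoints hw
    have : w = v := hbij.injOn hwP hvP hw.1.2
    exact this ▸ hw.1.1
end

section
/- Let s ≥ 2, a = 3^{s−1}, ζ = e^{2πi/3^s} ∈ ℂ, and let Γ be the subgroup of ℂ* generated by −ζ. For each integer ℓ coprime to 3, let r be an integer with rℓ ≡ 1 (mod 3^s), set ζ_ℓ = ζ^{r(3^{s−1}+1)}, and define τ_ℓ = (ζ_ℓ − 1)(ζ_ℓ^{2a−1} − 1) / (ζ_ℓ^{a+(a+1)/2+1} + 1) ∈ ℂ* (a well-defined element of ℂ*/Γ depending only on ℓ mod 3^s). Then: (i) τ_ℓ·τ_{−ℓ}⁻¹ ∈ Γ for every ℓ coprime to 3; (ii) if ℓ₁, …, ℓ_k are integers coprime to 3 whose residues represent pairwise distinct classes of (ℤ/3^sℤ)*/{±1}, and e₁, …, e_k are integers with τ_{ℓ₁}^{e₁} ⋯ τ_{ℓ_k}^{e_k} ∈ Γ, then e₁ = ⋯ = e_k = 0; i.e., the τ_ℓ are multiplicatively independent in ℂ*/Γ. -/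
section helpers
open Complex Set Filter Topology Asymptotics MeasureTheory

lemma aux_denom {z : ℂ} (hz : ‖z‖ = 1) (hz1 : z ≠ 1) {t : ℝ} (ht : 0 ≤ t) :
    0 < (1 - z * (Real.exp (-t) : ℂ)).re := by
  have h1 : z.re < 1 := by
    have h2 : z.re ≤ 1 := (re_le_norm z).trans hz.le
    refine lt_of_le_of_ne h2 fun h => hz1 ?_
    have := Complex.sq_norm z
    rw [hz, Complex.normSq_apply, h] at this
    apply Complex.ext <;> simp [h]
    nlinarith
  have h3 : Real.exp (-t) ≤ 1 := by simpa using ht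
  have h4 := Real.exp_pos (-t)
  rw [sub_re, one_re, re_mul_ofReal]
  nlinarith

lemma expZeta_one_eq (x : ℝ) (hx : cexp (2 * Real.pi * I * x) ≠ 1) :
    HurwitzZeta.expZeta (x : UnitAddCircle) 1 = - log (1 - cexp (2 * Real.pi * I * x)) := by
  set z := cexp (2 * Real.pi * I * x) with hzdef
  have hz : ‖z‖ = 1 := by
    rw [hzdef, show (2 * Real.pi * I * x : ℂ) = ((2 * Real.pi * x : ℝ) : ℂ) * I by push_cast; ring]
    exact norm_exp_ofReal_mul_I _
  have hx0 : (x : UnitAddCircle) ≠ 0 := by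
    intro h
    rw [AddCircle.coe_eq_zero_iff] at h
    obtain ⟨n, hn⟩ := h
    apply hx
    rw [hzdef, ← hn]
    simp only [zsmul_eq_mul, mul_one, ofReal_intCast]
    rw [show (2 * Real.pi * I * n : ℂ) = n * (2 * Real.pi * I) by ring]
    exact exp_int_mul_two_pi_mul_I n
  let F : ℝ → ℂ := fun t => z * (Real.exp (-t) : ℂ) / (1 - z * (Real.exp (-t) : ℂ))
  have hd : ∀ t : ℝ, 0 ≤ t → (1 - z * (Real.exp (-t) : ℂ)) ≠ 0 := fun t ht h => by
    have := aux_denom hz hx ht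
    rw [h] at this; simp at this
  have hFc : ContinuousOn F (Ici 0) := by
    apply ContinuousOn.div
    · fun_prop
    · fun_prop
    · exact fun t ht => hd t ht
  have hFtop : F =O[atTop] fun t => Real.exp (-1 * t) := by
    have h1 : Tendsto (fun t : ℝ => z / (1 - z * (Real.exp (-t) : ℂ))) atTop (𝓝 (z / (1 - z * 0))) := by
      apply Tendsto.div tendsto_const_nhds _ (by simp)
      apply tendsto_const_nhds.sub
      apply tendsto_const_nhds.mul
      have := (continuous_ofReal.tendsto 0).comp Real.tendsto_exp_neg_atTop_nhds_zero
      rw [ofReal_zero] at this; exact this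
    have h2 := (h1.isBigO_one ℝ).mul (g₁ := fun t => (1:ℝ)) (g₂ := fun t => Real.exp (-1 * t))
      (f₂ := fun t : ℝ => (Real.exp (-t) : ℂ)) (IsBigO.of_bound 1 (Eventually.of_forall fun t => by
        rw [norm_real]; simp))
    refine (h2.congr_left fun t => ?_).congr_right fun t => one_mul _
    simp only [F]; ring
  have hFbot : F =O[𝓝[>] 0] ((· ^ (-(0:ℝ))) : ℝ → ℝ) := by
    have h1 : Tendsto F (𝓝[>] 0) (𝓝 (F 0)) :=
      ((hFc 0 self_mem_Ici).mono_left (nhdsWithin_mono _ Ioi_subset_Ici_self))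
    simpa using h1.isBigO_one ℝ
  have hloc : LocallyIntegrableOn F (Ioi 0) :=
    (hFc.mono Ioi_subset_Ici_self).locallyIntegrableOn measurableSet_Ioi
  have hdiff : DifferentiableAt ℂ (mellin F) 1 :=
    mellin_differentiableAt_of_isBigO_rpow_exp one_pos hloc hFtop hFbot (by simp)
  -- equality for s > 1
  have heq : ∀ s : ℂ, 1 < s.re → Complex.Gamma s * HurwitzZeta.expZeta (x : UnitAddCircle) s = mellin F s := by
    intro s hs
    have h1 := HurwitzZeta.hasSum_expZeta_of_one_lt_re x hs
    have h2 : HasSum (fun n : ℕ => Complex.Gamma s * z ^ (n+1) / (((n+1 : ℕ) : ℝ) : ℂ) ^ s)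
        (mellin F s) := by
      apply hasSum_mellin (p := fun n : ℕ => ((n+1 : ℕ) : ℝ))
      · intro i; right; positivity
      · linarith
      · intro t ht
        have hlt : ‖z * (Real.exp (-t) : ℂ)‖ < 1 := by
          rw [norm_mul, hz, one_mul, norm_real, Real.norm_eq_abs, Real.abs_exp]
          simpa using ht
        have := (hasSum_geometric_of_norm_lt_one hlt).mul_left (z * (Real.exp (-t) : ℂ))
        convert! this using 2 with n
        rw [← pow_succ', mul_pow, ← ofReal_pow, ← Real.exp_nat_mul]
        congr 3
        ring
      · simp only [norm_pow, hz, one_pow]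
        have := (summable_nat_add_iff 1).mpr (Real.summable_one_div_nat_rpow.mpr hs)
        exact this
    have h3 := (hasSum_nat_add_iff' 1).mpr h1
    have h4 := h3.mul_left (Complex.Gamma s)
    have hs0 : s ≠ 0 := by rintro rfl; simp at hs; linarith
    have h5 := h4.unique (a₂ := mellin F s) ?_
    · rw [← h5]; simp [zero_cpow hs0]
    · convert! h2 using 2 with n
      rw [hzdef, ← Complex.exp_nat_mul, mul_div_assoc]
      congr 3
      · push_cast; ring
  -- limit
  have hlim : Complex.Gamma 1 * HurwitzZeta.expZeta (x : UnitAddCircle) 1 = mellin F 1 := by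
    have hseq : Tendsto (fun n : ℕ => (1 : ℂ) + 1 / ((n : ℂ) + 1)) atTop (𝓝 1) := by
      have := (tendsto_one_div_add_atTop_nhds_zero_nat (𝕜 := ℂ)).const_add 1
      simpa using this
    have hc1 : ContinuousAt (fun s => Complex.Gamma s * HurwitzZeta.expZeta (x : UnitAddCircle) s) 1 := by
      apply ContinuousAt.mul
      · apply (differentiableAt_Gamma 1 _).continuousAt
        intro m h
        have := congrArg re h
        simp at this
        have h0 : (0:ℝ) ≤ m := by positivity
        linarith
      · exact (HurwitzZeta.differentiable_expZeta_of_ne_zero hx0 1).continuousAt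
    refine tendsto_nhds_unique (hc1.tendsto.comp hseq) ?_
    refine (hdiff.continuousAt.tendsto.comp hseq).congr fun n => ?_
    refine (heq _ ?_).symm
    beta_reduce
    rw [show (1 : ℂ) + 1 / ((n : ℂ) + 1) = ((1 + 1 / ((n:ℝ) + 1) : ℝ) : ℂ) by push_cast; rfl, ofReal_re]
    have : 0 < 1 / ((n:ℝ) + 1) := by positivity
    linarith
  rw [Complex.Gamma_one, one_mul] at hlim
  rw [hlim, mellin]
  simp only [sub_self, cpow_zero, one_smul]
  have hint : IntegrableOn F (Ioi 0) := by
    have := mellinConvergent_of_isBigO_rpow_exp one_pos hloc hFtop hFbot (s := 1) (by simp)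
    simpa [MellinConvergent] using this
  have hder : ∀ t ∈ Ioi (0:ℝ), HasDerivAt (fun t : ℝ => log (1 - z * (Real.exp (-t) : ℂ))) (F t) t := by
    intro t ht
    have h1 : HasDerivAt (fun t : ℝ => 1 - z * (Real.exp (-t) : ℂ)) (z * (Real.exp (-t) : ℂ)) t := by
      have := ((Real.hasDerivAt_exp (-t)).comp t (hasDerivAt_neg t)).ofReal_comp
      have := (this.const_mul z).const_sub 1
      convert! this using 1
      push_cast; ring
    exact h1.clog_real (Or.inl (aux_denom hz hx (le_of_lt ht)))
  have hcont : ContinuousWithinAt (fun t : ℝ => log (1 - z * (Real.exp (-t) : ℂ))) (Ici 0) 0 := by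
    apply ContinuousWithinAt.clog
    · fun_prop
    · exact Or.inl (aux_denom hz hx le_rfl)
  have htend : Tendsto (fun t : ℝ => log (1 - z * (Real.exp (-t) : ℂ))) atTop (𝓝 0) := by
    have h0 : Tendsto (fun t : ℝ => (1 - z * (Real.exp (-t) : ℂ))) atTop (𝓝 (1 - z * 0)) := by
      apply tendsto_const_nhds.sub
      apply tendsto_const_nhds.mul
      have := (continuous_ofReal.tendsto 0).comp Real.tendsto_exp_neg_atTop_nhds_zero
      rw [ofReal_zero] at this; exact this
    have := h0.clog (by simp)
    simpa using this
  rw [integral_Ioi_of_hasDerivAt_of_tendsto hcont hder hint htend]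
  simp

noncomputable def fl {N : ℕ} [NeZero N] (x : ZMod N) : ℝ := Real.log ‖1 - ZMod.stdAddChar x‖

lemma expZeta_toAddCircle {N : ℕ} [NeZero N] (j : ZMod N) (hj : j ≠ 0) :
    HurwitzZeta.expZeta (ZMod.toAddCircle j) 1 = - log (1 - ZMod.stdAddChar j) := by
  have hne : ZMod.stdAddChar j ≠ 1 := fun h => hj
    (ZMod.injective_stdAddChar (by rw [h, AddChar.map_zero_eq_one]))
  obtain ⟨k, rfl⟩ := ZMod.intCast_surjective j
  have e : ZMod.stdAddChar (k : ZMod N) = cexp (2 * Real.pi * I * ((k / N : ℝ) : ℝ)) := by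
    rw [ZMod.stdAddChar_coe]; push_cast; congr 1; ring
  rw [ZMod.toAddCircle_intCast, expZeta_one_eq, e]
  rwa [← e]

lemma norm_std {N : ℕ} [NeZero N] (j : ZMod N) : ‖(ZMod.stdAddChar j : ℂ)‖ = 1 := by
  rw [ZMod.stdAddChar_apply]; exact Circle.norm_coe _

lemma std_neg {N : ℕ} [NeZero N] (j : ZMod N) :
    (ZMod.stdAddChar (-j) : ℂ) = (starRingEnd ℂ) (ZMod.stdAddChar j) := by
  rw [AddChar.map_neg_eq_conj]

lemma fl_neg {N : ℕ} [NeZero N] (j : ZMod N) : fl (-j) = fl j := by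
  unfold fl
  rw [std_neg, ← map_one (starRingEnd ℂ), ← map_sub, RCLike.norm_conj, map_one]

lemma expZeta_add {N : ℕ} [NeZero N] (j : ZMod N) (hj : j ≠ 0) :
    HurwitzZeta.expZeta (ZMod.toAddCircle j) 1 + HurwitzZeta.expZeta (ZMod.toAddCircle (-j)) 1
      = - 2 * (fl j : ℂ) := by
  have hne : ZMod.stdAddChar j ≠ 1 := fun h => hj
    (ZMod.injective_stdAddChar (by rw [h, AddChar.map_zero_eq_one]))
  rw [expZeta_toAddCircle j hj, expZeta_toAddCircle (-j) (neg_ne_zero.mpr hj), std_neg]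
  have h1 := aux_denom (norm_std j) hne le_rfl
  simp only [neg_zero, Real.exp_zero, ofReal_one, mul_one] at h1
  have h2 : log (1 - (starRingEnd ℂ) (ZMod.stdAddChar j)) = 
      (starRingEnd ℂ) (log (1 - ZMod.stdAddChar j)) := by
    rw [← log_conj _ (mem_slitPlane_iff_arg.mp (Or.inl h1)).1]
    simp
  rw [h2, ← neg_add, add_conj, log_re, fl]
  push_cast; ring

lemma prim_ne_zero {N : ℕ} [NeZero N] (χ : DirichletCharacter ℂ N) (hp : χ.IsPrimitive)
    (he : χ.Even) (h1 : χ ≠ 1) : ∑ j : ZMod N, χ j * (fl j : ℂ) ≠ 0 := by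
  have hN : N ≠ 1 := by
    rintro rfl; exact h1 (Subsingleton.elim _ _)
  have hχ0 : χ 0 = 0 := DirichletCharacter.map_zero' χ hN
  intro hS
  have hL := ZMod.LFunction_dft (χ : ZMod N → ℂ) (s := 1) (Or.inl hχ0)
  have hR : ∑ j : ZMod N, χ j * HurwitzZeta.expZeta (ZMod.toAddCircle (-j)) 1 = 0 := by
    have e1 : ∑ j : ZMod N, χ j * HurwitzZeta.expZeta (ZMod.toAddCircle (-j)) 1 =
        ∑ j : ZMod N, χ j * HurwitzZeta.expZeta (ZMod.toAddCircle j) 1 :=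
      Fintype.sum_equiv (Equiv.neg _) _ _ fun j => by
        rw [Equiv.neg_apply, he.eval_neg]
    have e2 : ∑ j : ZMod N, χ j * HurwitzZeta.expZeta (ZMod.toAddCircle j) 1 +
        ∑ j : ZMod N, χ j * HurwitzZeta.expZeta (ZMod.toAddCircle (-j)) 1 = 
        -2 * ∑ j : ZMod N, χ j * (fl j : ℂ) := by
      rw [← Finset.sum_add_distrib, Finset.mul_sum]
      refine Finset.sum_congr rfl fun j _ => ?_
      by_cases hj : j = 0
      · simp [hj, hχ0]
      · rw [← mul_add, expZeta_add j hj]; ring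
    rw [hS, ← e1] at e2
    linear_combination e2 / 2
  rw [hR] at hL
  have hF : ZMod.dft (χ : ZMod N → ℂ) = fun k => gaussSum χ ZMod.stdAddChar * χ⁻¹ k := by
    ext k
    rw [hp.fourierTransform_eq_inv_mul_gaussSum, mul_comm]
    congr 1
    have : χ⁻¹ (-1) = 1 := by
      rw [MulChar.inv_apply_eq_inv', he]; simp
    rw [← neg_one_mul, map_mul, this, one_mul]
  have hg : gaussSum χ ZMod.stdAddChar ≠ 0 := by
    intro h
    rw [h] at hF
    simp only [zero_mul] at hF
    have : (χ : ZMod N → ℂ) = 0 := by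
      apply ZMod.dft.injective
      rw [hF, map_zero]; rfl
    have := congrFun this 1
    simp at this
  rw [hF] at hL
  have : ZMod.LFunction (fun k => gaussSum χ ZMod.stdAddChar * χ⁻¹ k) 1 = 
     gaussSum χ ZMod.stdAddChar * ZMod.LFunction (χ⁻¹ : DirichletCharacter ℂ N) 1 := by
    simp only [ZMod.LFunction, Finset.mul_sum]
    refine Finset.sum_congr rfl fun j _ => ?_
    ring
  rw [this] at hL
  have h3 := DirichletCharacter.LFunction_apply_one_ne_zero (χ := χ⁻¹) (inv_ne_one.mpr h1)
  exact (mul_ne_zero hg h3) hL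

lemma sum_mul_unit {N : ℕ} [NeZero N] (χ : DirichletCharacter ℂ N) (F : ZMod N → ℂ) (u : ZMod N)
    (hu : IsUnit u) : χ u * ∑ v, χ v * F (v * u) = ∑ v, χ v * F v := by
  obtain ⟨u, rfl⟩ := hu
  rw [Finset.mul_sum]
  refine Fintype.sum_equiv (Units.mulRight u) _ _ fun v => ?_
  rw [Units.mulRight_apply, map_mul]; ring

section lev
variable (n : ℕ)

/-- the element `3^(s-1)` of `ℤ/3^s` -/
def aa : ZMod (3 ^ (n + 2)) := ((3 ^ (n + 1) : ℕ) : ZMod (3 ^ (n + 2)))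

lemma three_aa : 3 * aa n = 0 := by
  have : ((3 ^ (n + 2) : ℕ) : ZMod (3 ^ (n + 2))) = 0 := ZMod.natCast_self _
  rw [← this, aa]; push_cast; ring

lemma aa_sq : aa n * aa n = 0 := by
  have : aa n * aa n = (3 * aa n) * (3 ^ n : ℕ) := by
    simp only [aa]; push_cast; ring
  rw [this, three_aa, zero_mul]

lemma aa_ne : aa n ≠ 0 := by
  intro h
  rw [aa, ZMod.natCast_eq_zero_iff, Nat.pow_dvd_pow_iff_le_right (by norm_num)] at h
  omega

lemma aa_mul : (1 + aa n) * (1 + 2 * aa n) = 1 := by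
  linear_combination three_aa n + 2 * aa_sq n

lemma aa_sq' : (1 + aa n) * (1 + aa n) = 1 + 2 * aa n := by
  linear_combination aa_sq n

instance : Fact (1 < 3 ^ (n + 2)) := ⟨Nat.one_lt_pow (by omega) (by norm_num)⟩

lemma fl_three (v : ZMod (3 ^ (n + 2))) (hv : IsUnit v) :
    fl (3 * v) = fl v + fl (v * (1 + aa n)) + fl (v * (1 + 2 * aa n)) := by
  have hu1 : IsUnit (1 + aa n) := IsUnit.of_mul_eq_one _ (aa_mul n)
  have hu2 : IsUnit (1 + 2 * aa n) := IsUnit.of_mul_eq_one (1 + aa n) (by rw [mul_comm]; exact aa_mul n)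
  have key : ∀ w : ZMod (3 ^ (n + 2)), w ≠ 0 → (ZMod.stdAddChar w : ℂ) ≠ 1 := fun w hw h => hw
    (ZMod.injective_stdAddChar (by rw [h, AddChar.map_zero_eq_one]))
  have ne : ∀ w : ZMod (3 ^ (n + 2)), IsUnit w → ‖1 - (ZMod.stdAddChar w : ℂ)‖ ≠ 0 := fun w hw h => by
    rw [norm_eq_zero, sub_eq_zero] at h
    exact key w hw.ne_zero h.symm
  unfold fl
  rw [← Real.log_mul (ne _ hv) (ne _ (hv.mul hu1)),
    ← Real.log_mul (mul_ne_zero (ne _ hv) (ne _ (hv.mul hu1))) (ne _ (hv.mul hu2)), ← norm_mul, ← norm_mul]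
  congr 2
  set X : ℂ := ZMod.stdAddChar v
  set ω : ℂ := ZMod.stdAddChar (v * aa n) with hω
  have h1 : (ZMod.stdAddChar (v * (1 + aa n)) : ℂ) = X * ω := by
    rw [mul_add, mul_one, AddChar.map_add_eq_mul]
  have h2 : (ZMod.stdAddChar (v * (1 + 2 * aa n)) : ℂ) = X * ω ^ 2 := by
    rw [show v * (1 + 2 * aa n) = v + (v * aa n + v * aa n) by ring, AddChar.map_add_eq_mul,
      AddChar.map_add_eq_mul, sq]
  have h3 : (ZMod.stdAddChar (3 * v) : ℂ) = X ^ 3 := by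
    rw [show 3 * v = v + v + v by ring, AddChar.map_add_eq_mul,
      AddChar.map_add_eq_mul]; ring
  have h4 : ω ^ 3 = 1 := by
    have : (ZMod.stdAddChar (3 * (v * aa n)) : ℂ) = ω ^ 3 := by
      rw [show 3 * (v * aa n) = v * aa n + v * aa n + v * aa n by ring, AddChar.map_add_eq_mul,
      AddChar.map_add_eq_mul]; ring
    rw [← this, show 3 * (v * aa n) = v * (3 * aa n) by ring, three_aa, mul_zero, AddChar.map_zero_eq_one]
  have h5 : ω ≠ 1 := by
    apply key
    intro h
    exact aa_ne n ((hv.mul_right_eq_zero).mp h)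
  have h6 : 1 + ω + ω ^ 2 = 0 := by
    have : (ω - 1) * (1 + ω + ω ^ 2) = 0 := by linear_combination h4
    exact (mul_eq_zero.mp this).resolve_left (sub_ne_zero.mpr h5)
  rw [h1, h2, h3]
  linear_combination (X - X ^ 2 * ω) * h6 + X ^ 3 * h4

lemma sum_three (χ : DirichletCharacter ℂ (3 ^ (n + 2))) :
    ∑ v, χ v * (fl (3 * v) : ℂ) =
      (1 + χ (1 + aa n) + χ (1 + aa n) ^ 2) * ∑ v, χ v * (fl v : ℂ) := by
  have hu1 : IsUnit (1 + aa n) := IsUnit.of_mul_eq_one _ (aa_mul n)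
  have hu2 : IsUnit (1 + 2 * aa n) := IsUnit.of_mul_eq_one (1 + aa n) (by rw [mul_comm]; exact aa_mul n)
  have e0 : ∑ v, χ v * (fl (3 * v) : ℂ) = ∑ v, χ v * (fl v : ℂ) +
      ∑ v, χ v * (fl (v * (1 + aa n)) : ℂ) + ∑ v, χ v * (fl (v * (1 + 2 * aa n)) : ℂ) := by
    rw [← Finset.sum_add_distrib, ← Finset.sum_add_distrib]
    refine Finset.sum_congr rfl fun v _ => ?_
    by_cases hv : IsUnit v
    · rw [fl_three n v hv]; push_cast; ring
    · simp [MulChar.map_nonunit χ hv]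
  have e1 := sum_mul_unit χ (fun v => (fl v : ℂ)) _ hu1
  have e2 := sum_mul_unit χ (fun v => (fl v : ℂ)) _ hu2
  have c1 : χ (1 + aa n) * χ (1 + 2 * aa n) = 1 := by rw [← map_mul, aa_mul, map_one]
  have c2 : χ (1 + aa n) ^ 2 = χ (1 + 2 * aa n) := by rw [sq, ← map_mul, aa_sq']
  rw [e0, c2]
  linear_combination χ (1 + 2 * aa n) * e1 + χ (1 + aa n) * e2 - 
    (∑ v, χ v * (fl (v * (1 + aa n)) : ℂ)) * c1 - (∑ v, χ v * (fl (v * (1 + 2 * aa n)) : ℂ)) * c1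

lemma fl_three_cast (k : ℕ) : fl (3 * (k : ZMod (3 ^ (n + 2)))) = fl (k : ZMod (3 ^ (n + 1))) := by
  unfold fl
  have e1 : (3 * (k : ZMod (3 ^ (n + 2)))) = ((3 * k : ℤ) : ZMod (3 ^ (n + 2))) := by push_cast; rfl
  have e2 : (k : ZMod (3 ^ (n + 1))) = ((k : ℤ) : ZMod (3 ^ (n + 1))) := by push_cast; rfl
  rw [e1, e2, ZMod.stdAddChar_coe, ZMod.stdAddChar_coe]
  congr 4
  push_cast
  field_simp
  ring

lemma dvd_lev : 3 ^ (n + 1) ∣ 3 ^ (n + 2) := pow_dvd_pow 3 (by omega)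

lemma sum_fiber (G : ZMod (3 ^ (n + 1)) → ℂ) : ∃ K : ℕ, K ≠ 0 ∧
    ∑ v : ZMod (3 ^ (n + 2)), G (ZMod.castHom (dvd_lev n) (ZMod (3 ^ (n + 1))) v) = K * ∑ w, G w := by
  set φ := ZMod.castHom (dvd_lev n) (ZMod (3 ^ (n + 1)))
  refine ⟨(Finset.univ.filter fun v => φ v = 0).card, ?_, ?_⟩
  · exact Finset.card_ne_zero_of_mem (a := 0) (by simp)
  rw [← Finset.sum_fiberwise (s := Finset.univ) (g := φ), Finset.mul_sum]
  refine Finset.sum_congr rfl fun w _ => ?_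
  have hs : Function.Surjective φ := ZMod.castHom_surjective _
  rw [Finset.sum_congr rfl (g := fun _ => G w) (by
    intro x hx; rw [(Finset.mem_filter.mp hx).2])]
  rw [Finset.sum_const, nsmul_eq_mul]
  congr 2
  exact AddMonoidHom.card_fiber_eq_of_mem_range φ (hs w) (hs 0)

lemma sum_level (χ : DirichletCharacter ℂ (3 ^ (n + 1))) : ∃ K : ℕ, K ≠ 0 ∧
    ∑ v, (DirichletCharacter.changeLevel (dvd_lev n) χ) v * (fl (3 * v) : ℂ) =
      K * ∑ v, χ v * (fl v : ℂ) := by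
  obtain ⟨K, hK0, hK⟩ := sum_fiber n (fun v => χ v * (fl v : ℂ))
  refine ⟨K, hK0, ?_⟩
  rw [← hK]
  refine Finset.sum_congr rfl fun v _ => ?_
  obtain ⟨k, rfl⟩ := ZMod.natCast_zmod_surjective v
  rw [fl_three_cast, map_natCast (ZMod.castHom (dvd_lev n) (ZMod (3 ^ (n + 1))))]
  congr 1
  by_cases hk : IsUnit (k : ZMod (3 ^ (n + 2)))
  · obtain ⟨u, hu⟩ := hk
    rw [← hu, DirichletCharacter.changeLevel_eq_cast_of_dvd, hu, ZMod.cast_natCast (dvd_lev n)]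
  · rw [MulChar.map_nonunit _ hk, MulChar.map_nonunit]
    rw [ZMod.isUnit_iff_coprime] at hk ⊢
    rw [Nat.coprime_pow_right_iff (by omega)] at hk ⊢
    exact hk

end lev

lemma prim_or (n : ℕ) (χ : DirichletCharacter ℂ (3 ^ (n + 1))) :
    χ.IsPrimitive ∨ χ.FactorsThrough (3 ^ n) := by
  by_cases h : χ.IsPrimitive
  · exact Or.inl h
  · right
    obtain ⟨j, hj, hc⟩ := (Nat.dvd_prime_pow Nat.prime_three).mp χ.conductor_dvd_level
    have hj' : j ≠ n + 1 := by
      rintro rfl; exact h hc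
    apply DirichletCharacter.FactorsThrough.mono χ χ.factorsThrough_conductor
    · rw [hc]; exact pow_dvd_pow 3 (by omega)
    · exact pow_dvd_pow 3 (by omega)

lemma base_trivial : ∑ v, (1 : DirichletCharacter ℂ (3 ^ (0 + 1))) v * (fl v : ℂ) ≠ 0 := by
  have hsum : ∑ v, (1 : DirichletCharacter ℂ (3 ^ (0 + 1))) v * (fl v : ℂ) =
      2 * (fl (1 : ZMod (3 ^ (0 + 1))) : ℂ) := by
    have : ∀ G : ZMod 3 → ℂ, ∑ v, G v = G 0 + G 1 + G (-1) := fun G => Fin.sum_univ_three G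
    refine (this _).trans ?_
    have h1 : (1 : DirichletCharacter ℂ (3 ^ (0 + 1))) (-1) = 1 := by
      rw [MulChar.one_apply]; exact isUnit_one.neg
    have h2 := fl_neg (1 : ZMod (3 ^ (0 + 1)))
    have h3 : (1 : DirichletCharacter ℂ (3 ^ (0 + 1))) 0 = 0 :=
      DirichletCharacter.map_zero' _ (by norm_num)
    have h4 : (1 : DirichletCharacter ℂ (3 ^ (0 + 1))) 1 = 1 := map_one _
    erw [h3, h1, h2, h4]
    ring
  rw [hsum]
  set ω : ℂ := ZMod.stdAddChar (1 : ZMod (3 ^ (0 + 1))) with hω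
  have h4 : ω ^ 3 = 1 := by
    rw [hω, ← AddChar.map_nsmul_eq_pow]
    have : (3 : ℕ) • (1 : ZMod (3 ^ (0 + 1))) = 0 := by decide
    rw [this, AddChar.map_zero_eq_one]
  have h5 : ω ≠ 1 := by
    intro h
    have : (1 : ZMod (3 ^ (0 + 1))) = 0 := ZMod.injective_stdAddChar (by rw [AddChar.map_zero_eq_one]; exact h)
    revert this; decide
  have h6 : 1 + ω + ω ^ 2 = 0 := by
    have : (ω - 1) * (1 + ω + ω ^ 2) = 0 := by linear_combination h4
    exact (mul_eq_zero.mp this).resolve_left (sub_ne_zero.mpr h5)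
  have h7 : ‖1 - ω‖ ^ 2 = 3 := by
    have e : (1 - ω) ^ 2 = -3 * ω := by linear_combination h6
    rw [← norm_pow, e, norm_mul, norm_std]; simp
  have h8 : fl (1 : ZMod (3 ^ (0 + 1))) ≠ 0 := by
    unfold fl
    intro h
    have := Real.log_pow ‖1 - ω‖ 2
    rw [h7, h] at this
    have h9 : 0 < Real.log 3 := Real.log_pos (by norm_num)
    simp at this
    norm_num at this
  simpa using h8

lemma S_ne_zero (n : ℕ) (χ : DirichletCharacter ℂ (3 ^ (n + 1))) (he : χ.Even) :
    ∑ v, χ v * (fl v : ℂ) ≠ 0 := by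
  induction n with
  | zero =>
    by_cases h1 : χ = 1
    · rw [h1]; exact base_trivial
    · rcases prim_or 0 χ with h | h
      · exact prim_ne_zero χ h he h1
      · exact absurd ((DirichletCharacter.factorsThrough_one_iff χ).mp (by simpa using h)) h1
  | succ n ih =>
    rcases prim_or (n + 1) χ with h | h
    · refine prim_ne_zero χ h he ?_
      rintro rfl
      rw [DirichletCharacter.IsPrimitive, DirichletCharacter.conductor_one] at h
      have := Nat.one_lt_pow (n := n + 1 + 1) (a := 3) (by omega) (by norm_num)
      omega
    · obtain ⟨hd, χ₀, h0⟩ := h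
      have he0 : χ₀.Even := by
        have h1 := DirichletCharacter.changeLevel_eq_cast_of_dvd' χ₀ hd (a := -1) (isCoprime_one_left.neg_left)
        rw [← h0] at h1
        push_cast at h1
        rw [DirichletCharacter.Even, ← h1]; exact he
      obtain ⟨K, hK0, hK⟩ := sum_level n χ₀
      intro hS
      have hs3 := sum_three n χ
      rw [hS, mul_zero, h0, hK] at hs3
      rcases mul_eq_zero.mp hs3 with h | h
      · exact hK0 (by exact_mod_cast h)
      · exact ih χ₀ he0 h

lemma g_ne_zero (n : ℕ) (m : ZMod (3 ^ (n + 2))) (hm : IsUnit m)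
    (χ : DirichletCharacter ℂ (3 ^ (n + 2))) (he : χ.Even) :
    ∑ v, χ v * ((fl (3 * (v * m)) - fl v : ℝ) : ℂ) ≠ 0 := by
  have hS := S_ne_zero (n + 1) χ he
  have h3 := sum_three n χ
  have e1 := sum_mul_unit χ (fun v => (fl (3 * v) : ℂ)) _ hm
  intro h
  have h' : ∑ v, χ v * (fl (3 * (v * m)) : ℂ) = ∑ v, χ v * (fl v : ℂ) := by
    rw [← sub_eq_zero, ← Finset.sum_sub_distrib, ← h]
    refine Finset.sum_congr rfl fun v _ => ?_
    push_cast; ring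
  rw [h', h3] at e1
  have e2 : χ m = 1 + χ (1 + aa n) + χ (1 + aa n) ^ 2 := mul_right_cancel₀ hS e1
  have hn : ‖χ m‖ = 1 := by
    obtain ⟨u, rfl⟩ := hm
    exact DirichletCharacter.unit_norm_eq_one χ u
  have c1 : χ (1 + aa n) * χ (1 + 2 * aa n) = 1 := by rw [← map_mul, aa_mul, map_one]
  have c2 : χ (1 + aa n) ^ 2 = χ (1 + 2 * aa n) := by rw [sq, ← map_mul, aa_sq']
  set c := χ (1 + aa n)
  by_cases hc : c = 1
  · rw [hc] at e2
    rw [e2] at hn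
    norm_num at hn
  · have : (c - 1) * (1 + c + c ^ 2) = 0 := by
      rw [← c2] at c1
      linear_combination c1
    have := (mul_eq_zero.mp this).resolve_left (sub_ne_zero.mpr hc)
    rw [e2, this] at hn
    simp at hn

lemma indep (n : ℕ) (m : ZMod (3 ^ (n + 2))) (hm : IsUnit m) (k : ℕ)
    (ρ : Fin k → ZMod (3 ^ (n + 2))) (hρ : ∀ i, IsUnit (ρ i)) (e : Fin k → ℤ)
    (hd : ∀ i j, i ≠ j → ¬ (ρ i = ρ j ∨ ρ i = - ρ j))
    (h : ∀ u : ZMod (3 ^ (n + 2)), IsUnit u →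
      ∑ i, (e i : ℝ) * (fl (3 * (u * ρ i * m)) - fl (u * ρ i)) = 0) : ∀ i, e i = 0 := by
  have hev : ∀ χ : DirichletCharacter ℂ (3 ^ (n + 2)), χ.Even →
      ∑ i, (e i : ℂ) * χ (ρ i)⁻¹ = 0 := by
    intro χ he
    have hg := g_ne_zero n m hm χ he
    set g : ZMod (3 ^ (n + 2)) → ℂ := fun v => ((fl (3 * (v * m)) - fl v : ℝ) : ℂ) with hgdef
    have e1 : ∑ u, χ u * ∑ i, (e i : ℂ) * g (u * ρ i) = 0 := by
      refine Finset.sum_eq_zero fun u _ => ?_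
      by_cases hu : IsUnit u
      · have := congrArg (fun x : ℝ => (x : ℂ)) (h u hu)
        simp only [ofReal_sum, ofReal_mul, ofReal_zero, ofReal_intCast] at this
        rw [this, mul_zero]
      · rw [MulChar.map_nonunit χ hu, zero_mul]
    have e2 : ∑ u, χ u * ∑ i, (e i : ℂ) * g (u * ρ i) =
        (∑ i, (e i : ℂ) * χ (ρ i)⁻¹) * ∑ v, χ v * g v := by
      simp_rw [Finset.mul_sum]
      rw [Finset.sum_comm]
      simp_rw [← Finset.mul_sum]
      rw [Finset.sum_mul]
      refine Finset.sum_congr rfl fun i _ => ?_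
      rw [← sum_mul_unit χ g (ρ i) (hρ i), mul_assoc, ← mul_assoc (χ (ρ i)⁻¹), ← map_mul,
        ZMod.inv_mul_of_unit _ (hρ i), map_one, one_mul, Finset.mul_sum]
      refine Finset.sum_congr rfl fun u _ => by ring
    rw [e2] at e1
    exact (mul_eq_zero.mp e1).resolve_right hg
  intro j
  have hall : ∀ χ : DirichletCharacter ℂ (3 ^ (n + 2)),
      ∑ i, (e i : ℂ) * (χ (ρ i)⁻¹ * χ (ρ j) + χ (ρ i)⁻¹ * χ (- ρ j)) = 0 := by
    intro χ
    rcases χ.even_or_odd with he | ho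
    · have := hev χ he
      rw [he.eval_neg]
      have e3 : ∑ i, (e i : ℂ) * (χ (ρ i)⁻¹ * χ (ρ j) + χ (ρ i)⁻¹ * χ (ρ j)) =
        (∑ i, (e i : ℂ) * χ (ρ i)⁻¹) * (2 * χ (ρ j)) := by
        rw [Finset.sum_mul]; exact Finset.sum_congr rfl fun i _ => by ring
      rw [e3, this, zero_mul]
    · rw [ho.eval_neg]
      exact Finset.sum_eq_zero fun i _ => by ring
  have hsum : ∑ χ : DirichletCharacter ℂ (3 ^ (n + 2)),
      ∑ i, (e i : ℂ) * (χ (ρ i)⁻¹ * χ (ρ j) + χ (ρ i)⁻¹ * χ (- ρ j)) = 0 :=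
    Finset.sum_eq_zero fun χ _ => hall χ
  rw [Finset.sum_comm] at hsum
  simp_rw [← Finset.mul_sum, Finset.sum_add_distrib] at hsum
  simp_rw [DirichletCharacter.sum_char_inv_mul_char_eq ℂ (hρ _)] at hsum
  rw [Finset.sum_eq_single j] at hsum
  · have ht : ((3 ^ (n + 2)).totient : ℂ) ≠ 0 := by
      simp
    rw [if_pos rfl] at hsum
    rcases mul_eq_zero.mp hsum with h | h
    · exact_mod_cast h
    · exfalso
      split_ifs at h
      · apply ht; linear_combination h / 2
      · apply ht; linear_combination h
  · intro i _ hij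
    have := hd i j hij
    push Not at this
    rw [if_neg this.1, if_neg this.2]; ring
  · simp

/-- the torsion expression -/
noncomputable def PP {K : Type*} [Field K] (a : ℕ) (z : K) : K :=
  (z - 1) * (z ^ (2 * a - 1) - 1) / (z ^ (a + (a + 1) / 2 + 1) + 1)

lemma map_PP {K L : Type*} [Field K] [Field L] (φ : K →+* L) (a : ℕ) (z : K) :
    φ (PP a z) = PP a (φ z) := by
  simp [PP]

lemma galois_conj (N : ℕ) [NeZero N] (a k : ℕ) (ζ w : ℂ) (hζ : IsPrimitiveRoot ζ N)
    (hw : IsPrimitiveRoot w N) (R : Fin k → ℤ) (e : Fin k → ℤ) (M : ℤ)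
    (h : ∏ i, PP a (ζ ^ R i) ^ e i = (-ζ) ^ M) : ∏ i, PP a (w ^ R i) ^ e i = (-w) ^ M := by
  have : NeZero ((N : ℕ) : ℚ) := ⟨by exact_mod_cast NeZero.ne N⟩
  have : IsCyclotomicExtension {N} ℚ (CyclotomicField N ℚ) := CyclotomicField.isCyclotomicExtension N ℚ
  have hz := IsCyclotomicExtension.zeta_spec N ℚ (CyclotomicField N ℚ)
  set z := IsCyclotomicExtension.zeta N ℚ (CyclotomicField N ℚ)
  have hirr := Polynomial.cyclotomic.irreducible_rat (NeZero.pos N)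
  have hex : ∀ x : ℂ, IsPrimitiveRoot x N → ∃ φ : CyclotomicField N ℚ →ₐ[ℚ] ℂ, φ z = x := by
    intro x hx
    refine ⟨(hz.embeddingsEquivPrimitiveRoots ℂ hirr).symm
      ⟨x, (mem_primitiveRoots (NeZero.pos N)).mpr hx⟩, ?_⟩
    rw [← hz.embeddingsEquivPrimitiveRoots_apply_coe ℂ hirr, Equiv.apply_symm_apply]
  obtain ⟨φ, hφ⟩ := hex ζ hζ
  obtain ⟨ψ, hψ⟩ := hex w hw
  have key : ∀ (θ : CyclotomicField N ℚ →ₐ[ℚ] ℂ), 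
     θ (∏ i, PP a (z ^ R i) ^ e i) = ∏ i, PP a (θ z ^ R i) ^ e i := by
    intro θ
    rw [map_prod]
    refine Finset.prod_congr rfl fun i _ => ?_
    rw [map_zpow₀, ← map_zpow₀ θ z]
    congr 1
    exact map_PP (θ : CyclotomicField N ℚ →+* ℂ) a _
  have hK : ∏ i, PP a (z ^ R i) ^ e i = (-z) ^ M := by
    apply φ.injective
    change φ _ = φ _
    rw [key, hφ, h, map_zpow₀, map_neg, hφ]
  rw [← hψ, ← key, hK, map_zpow₀, map_neg]

lemma PP_eq (n : ℕ) (v : ℂ) (hv : IsPrimitiveRoot v (3 ^ (n + 2))) :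
    PP (3 ^ (n + 1)) (v ^ (3 ^ (n + 1) + 1)) =
      - (v ^ (3 ^ (n + 1)) * v⁻¹) * ((v ^ (3 * ((3 ^ (n + 1) + 1) / 2)) - 1) / (v - 1)) := by
  set a := 3 ^ (n + 1) with ha
  have haodd : Odd a := Odd.pow (by decide)
  obtain ⟨b, hb⟩ := haodd
  have hm : (a + 1) / 2 = b + 1 := by omega
  rw [hm]
  have hN : v ^ (3 * a) = 1 := by
    rw [show 3 * a = 3 ^ (n + 2) by rw [ha]; ring]; exact hv.pow_eq_one
  have ha1 : 1 ≤ a := by omega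
  have hv0 : v ≠ 0 := hv.ne_zero (by positivity)
  have hv1 : v ≠ 1 := hv.ne_one (Nat.one_lt_pow (by omega) (by norm_num))
  set ω := v ^ a with hω
  have hω3 : ω ^ 3 = 1 := by rw [hω, ← pow_mul, mul_comm, hN]
  have hω1 : ω ≠ 1 := by
    intro h
    have := hv.dvd_of_pow_eq_one a h
    rw [ha, Nat.pow_dvd_pow_iff_le_right (by norm_num)] at this
    omega
  have h6 : 1 + ω + ω ^ 2 = 0 := by
    have : (ω - 1) * (1 + ω + ω ^ 2) = 0 := by linear_combination hω3
    exact (mul_eq_zero.mp this).resolve_left (sub_ne_zero.mpr hω1)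
  have hω0 : ω ≠ 0 := pow_ne_zero _ hv0
  have hz : v ^ (a + 1) = ω * v := pow_succ v a
  have hωa : ω ^ a = 1 := by
    rw [ha, pow_succ', pow_mul, hω3, one_pow]
  set y := v ^ (3 * (b + 1)) with hy
  have hy2 : y ^ 2 = v ^ 3 := by
    rw [hy, ← pow_mul, show 3 * (b + 1) * 2 = 3 * a + 3 by rw [hb]; ring, pow_add, hN, one_mul]
  have hyN : y ^ (3 * a) = 1 := by rw [hy, ← pow_mul, mul_comm, pow_mul, hN, one_pow]
  have hy1 : y + 1 ≠ 0 := by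
    intro h
    rw [eq_neg_of_add_eq_zero_left h, Odd.neg_one_pow ⟨3 * b + 1, by rw [hb]; ring⟩] at hyN
    norm_num at hyN
  have hza : (ω * v) ^ a = ω := by rw [mul_pow, hωa, one_mul]
  have e1 : (ω * v) ^ (2 * a - 1) = ω * v⁻¹ := by
    have : (ω * v) ^ (2 * a - 1) * (ω * v) = ω ^ 2 := by
      rw [← pow_succ, show 2 * a - 1 + 1 = a * 2 by omega, pow_mul, hza]
    field_simp
    apply mul_left_cancel₀ hω0
    linear_combination this
  have e2 : (ω * v) ^ (a + (a + 1) / 2 + 1) = y := by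
    rw [hm, show a + (b + 1) + 1 = 3 * (b + 1) by omega, mul_pow, pow_mul, hω3, one_pow, one_mul]
  rw [PP, hz, e1, e2]
  have hv1' : v - 1 ≠ 0 := sub_ne_zero.mpr hv1
  have hgoal : (ω * v - 1) * (ω * v⁻¹ - 1) * (v - 1) * v = - ω * (y - 1) * (y + 1) := by
    have : (ω * v - 1) * (ω * v⁻¹ - 1) * (v - 1) * v = (ω * v - 1) * (ω * (v⁻¹ * v) - v) * (v - 1) := by ring
    rw [this, inv_mul_cancel₀ hv0]
    linear_combination ω * hy2 + (v-1) * v * h6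
  field_simp
  field_simp at hgoal
  linear_combination hgoal

lemma prim_std (N : ℕ) [NeZero N] (u : ZMod N) (hu : IsUnit u) :
    IsPrimitiveRoot (ZMod.stdAddChar u : ℂ) N := by
  refine ⟨?_, fun l hl => ?_⟩
  · rw [← AddChar.map_nsmul_eq_pow, nsmul_eq_mul, ZMod.natCast_self, zero_mul, AddChar.map_zero_eq_one]
  · rw [← AddChar.map_nsmul_eq_pow] at hl
    have h0 : l • u = 0 := ZMod.injective_stdAddChar (by rw [hl, AddChar.map_zero_eq_one])
    rw [nsmul_eq_mul, hu.mul_left_eq_zero] at h0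
    exact (ZMod.natCast_eq_zero_iff _ _).mp h0

lemma log_PP (n : ℕ) (x : ZMod (3 ^ (n + 2))) (hx : IsUnit x)
    (hm : IsUnit (((3 ^ (n + 1) + 1) / 2 : ℕ) : ZMod (3 ^ (n + 2)))) :
    PP (3 ^ (n + 1)) ((ZMod.stdAddChar x : ℂ) ^ (3 ^ (n + 1) + 1)) ≠ 0 ∧
    Real.log ‖PP (3 ^ (n + 1)) ((ZMod.stdAddChar x : ℂ) ^ (3 ^ (n + 1) + 1))‖ =
      fl (3 * (x * (((3 ^ (n + 1) + 1) / 2 : ℕ) : ZMod (3 ^ (n + 2))))) - fl x := by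
  have hv := prim_std _ x hx
  rw [PP_eq n _ hv]
  set m := (3 ^ (n + 1) + 1) / 2
  have hy : (ZMod.stdAddChar x : ℂ) ^ (3 * m) = ZMod.stdAddChar (3 * (x * (m : ZMod (3 ^ (n + 2))))) := by
    rw [← AddChar.map_nsmul_eq_pow, nsmul_eq_mul]
    congr 1; push_cast; ring
  have key : ∀ w : ZMod (3 ^ (n + 2)), w ≠ 0 → (ZMod.stdAddChar w : ℂ) - 1 ≠ 0 := fun w hw h => hw
    (ZMod.injective_stdAddChar (by rw [sub_eq_zero.mp h, AddChar.map_zero_eq_one]))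
  have h3 : (3 : ZMod (3 ^ (n + 2))) ≠ 0 := by
    intro h
    have : ((3 : ℕ) : ZMod (3 ^ (n + 2))) = 0 := by exact_mod_cast h
    rw [ZMod.natCast_eq_zero_iff] at this
    have := Nat.le_of_dvd (by norm_num) this
    have h9 : 1 ≤ 3 ^ n := Nat.one_le_pow _ _ (by norm_num)
    rw [pow_add] at this
    omega
  have n1 := key x hx.ne_zero
  have n2 : (ZMod.stdAddChar (3 * (x * (m : ZMod (3 ^ (n + 2))))) : ℂ) - 1 ≠ 0 := by
    apply key
    intro h
    exact h3 (((hx.mul hm).mul_left_eq_zero).mp h)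
  have hx0 : (ZMod.stdAddChar x : ℂ) ≠ 0 := hv.ne_zero (by positivity)
  rw [hy]
  constructor
  · exact mul_ne_zero (neg_ne_zero.mpr (mul_ne_zero (pow_ne_zero _ hx0) (inv_ne_zero hx0)))
      (div_ne_zero n2 n1)
  · rw [norm_mul, norm_neg, norm_mul, norm_pow, norm_inv, norm_std, norm_div, one_pow, inv_one,
      one_mul, one_mul, Real.log_div (norm_ne_zero_iff.mpr n2) (norm_ne_zero_iff.mpr n1), fl, fl,
      norm_sub_rev, norm_sub_rev _ (1:ℂ)]

end helpers

theorem stmt13 (s : ℕ) (hs : 2 ≤ s) (a : ℕ) (ha : a = 3 ^ (s - 1))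
    (ζ : ℂ) (hζ : ζ = Complex.exp (2 * Real.pi * Complex.I / (3 ^ s : ℕ)))
    (Γ : Set ℂ) (hΓ : Γ = {w : ℂ | ∃ k : ℤ, w = (-ζ) ^ k})
    (ζl : ℤ → ℂ)
    (hζl : ∀ ℓ r : ℤ, Int.ModEq (3 ^ s) (r * ℓ) 1 →
      ζl ℓ = ζ ^ (r * (3 ^ (s - 1) + 1)))
    (τ : ℤ → ℂ)
    (hτ : ∀ ℓ : ℤ, τ ℓ =
      (ζl ℓ - 1) * (ζl ℓ ^ (2 * a - 1) - 1) / (ζl ℓ ^ (a + (a + 1) / 2 + 1) + 1)) :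
    (∀ ℓ : ℤ, IsCoprime ℓ 3 → τ ℓ * (τ (-ℓ))⁻¹ ∈ Γ) ∧
    (∀ (k : ℕ) (ℓ : Fin k → ℤ) (e : Fin k → ℤ),
      (∀ i, IsCoprime (ℓ i) 3) →
      (∀ i j, i ≠ j →
        ¬ ((ℓ i : ZMod (3 ^ s)) = (ℓ j : ZMod (3 ^ s)) ∨
           (ℓ i : ZMod (3 ^ s)) = -(ℓ j : ZMod (3 ^ s)))) →
      (∏ i, τ (ℓ i) ^ (e i)) ∈ Γ → ∀ i, e i = 0) := by
  obtain ⟨n, rfl⟩ : ∃ n, s = n + 2 := ⟨s - 2, by omega⟩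
  have hs1 : n + 2 - 1 = n + 1 := by omega
  rw [hs1] at ha
  simp only [hs1] at hζl
  subst ha
  have hPP : ∀ ℓ, τ ℓ = PP (3 ^ (n + 1)) (ζl ℓ) := hτ
  have hζ1 : ζ = ZMod.stdAddChar (1 : ZMod (3 ^ (n + 2))) := by
    rw [hζ]
    have := ZMod.stdAddChar_coe (N := 3 ^ (n + 2)) 1
    rw [Int.cast_one] at this
    rw [this]; simp
  have hprim : IsPrimitiveRoot ζ (3 ^ (n + 2)) := hζ1 ▸ prim_std _ 1 isUnit_one
  have hζ0 : ζ ≠ 0 := hprim.ne_zero (by positivity)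
  have hodd : Odd (3 ^ (n + 2)) := Odd.pow (by decide)
  have hmem : ∀ M : ℤ, ζ ^ M ∈ Γ := by
    intro M
    rw [hΓ]
    refine ⟨((3 ^ (n + 2) + 1 : ℕ) : ℤ) * M, ?_⟩
    rw [zpow_mul, zpow_natCast, Even.neg_pow hodd.add_one, pow_succ, hprim.pow_eq_one, one_mul]
  -- inverses
  have hinv : ∀ ℓ : ℤ, IsCoprime ℓ 3 → ∃ r : ℤ, Int.ModEq (3 ^ (n + 2)) (r * ℓ) 1 ∧
      (r : ZMod (3 ^ (n + 2))) * (ℓ : ZMod (3 ^ (n + 2))) = 1 := by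
    intro ℓ hℓ
    obtain ⟨r, t, hrt⟩ := hℓ.pow_right (n := n + 2)
    have h1 : Int.ModEq (3 ^ (n + 2)) (r * ℓ) 1 := by
      rw [Int.modEq_iff_dvd]
      exact ⟨t, by linear_combination -hrt⟩
    refine ⟨r, h1, ?_⟩
    have := (ZMod.intCast_eq_intCast_iff (r * ℓ) 1 (3 ^ (n + 2))).mpr (by exact_mod_cast h1)
    exact_mod_cast this
  have hzl : ∀ ℓ r : ℤ, Int.ModEq (3 ^ (n + 2)) (r * ℓ) 1 →
      ζl ℓ = (ζ ^ r) ^ (3 ^ (n + 1) + 1) := by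
    intro ℓ r h
    rw [hζl ℓ r h, zpow_mul, ← zpow_natCast]
    push_cast; rfl
  have hzr : ∀ r : ℤ, ζ ^ r = ZMod.stdAddChar (r : ZMod (3 ^ (n + 2))) := by
    intro r
    rw [hζ1, ← AddChar.map_zsmul_eq_zpow, zsmul_eq_mul, mul_one]
  have hm2 : IsUnit (((3 ^ (n + 1) + 1) / 2 : ℕ) : ZMod (3 ^ (n + 2))) := by
    rw [ZMod.isUnit_iff_coprime]
    apply Nat.Coprime.pow_right
    rw [Nat.coprime_comm, Nat.Prime.coprime_iff_not_dvd Nat.prime_three]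
    obtain ⟨b, hb⟩ : Odd (3 ^ (n + 1)) := Odd.pow (by decide)
    have : 3 ∣ 3 ^ (n + 1) := dvd_pow_self 3 (by omega)
    omega
  constructor
  · intro ℓ hℓ
    obtain ⟨r, hr, hru⟩ := hinv ℓ hℓ
    have hr' : Int.ModEq (3 ^ (n + 2)) (-r * -ℓ) 1 := by rwa [neg_mul_neg]
    have hu : IsUnit (r : ZMod (3 ^ (n + 2))) := IsUnit.of_mul_eq_one _ hru
    have hv := prim_std _ _ hu
    rw [← hzr] at hv
    have hne := (log_PP n _ hu hm2).1
    rw [← hzr, PP_eq n _ hv] at hne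
    rw [hPP, hPP, hzl ℓ r hr, hzl (-ℓ) (-r) hr', zpow_neg, PP_eq n _ hv, PP_eq n _ hv.inv]
    have hv0 : ζ ^ r ≠ 0 := zpow_ne_zero _ hζ0
    have hfin : ∀ (v : ℂ) (A B : ℕ), v ≠ 0 →
        -(v ^ A * v⁻¹) * ((v ^ B - 1) / (v - 1)) ≠ 0 →
        -(v ^ A * v⁻¹) * ((v ^ B - 1) / (v - 1)) *
        (-(v⁻¹ ^ A * v⁻¹⁻¹) * ((v⁻¹ ^ B - 1) / (v⁻¹ - 1)))⁻¹ = v ^ (2 * A + B - 3 : ℤ) := by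
      intro v A B h0 hne
      have h2 : v ^ B - 1 ≠ 0 := by
        intro h; apply hne; rw [h]; simp
      have h3 : v - 1 ≠ 0 := by
        intro h; apply hne; rw [h]; simp
      have h2' : 1 - v ^ B ≠ 0 := fun h => h2 (by linear_combination -h)
      have h3' : 1 - v ≠ 0 := fun h => h3 (by linear_combination -h)
      have e1 : v⁻¹ ^ B - 1 = -(v ^ B - 1) * (v ^ B)⁻¹ := by
        rw [inv_pow]; field_simp; ring
      have e2 : v⁻¹ - 1 = -(v - 1) * v⁻¹ := by field_simp; ring
      rw [e1, e2, zpow_sub₀ h0, zpow_add₀ h0, zpow_mul, zpow_natCast, zpow_natCast]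
      rw [inv_pow]
      have : (v ^ (2:ℤ)) ^ A = v ^ A * v ^ A := by
        rw [zpow_ofNat, ← pow_mul, ← pow_add, two_mul]
      rw [this, zpow_ofNat]
      field_simp
    rw [hfin _ _ _ hv0 hne, ← zpow_mul]
    exact hmem _
  · intro k ℓ e hℓ hd hprod
    choose r hr hru using fun i => hinv (ℓ i) (hℓ i)
    rw [hΓ] at hprod
    obtain ⟨M, hM⟩ := hprod
    have hun : ∀ i, IsUnit (r i : ZMod (3 ^ (n + 2))) := fun i => IsUnit.of_mul_eq_one _ (hru i)
    have hM' : ∏ i, PP (3 ^ (n + 1)) (ζ ^ (r i * (3 ^ (n + 1) + 1))) ^ e i = (-ζ) ^ M := by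
      rw [← hM]
      refine Finset.prod_congr rfl fun i _ => ?_
      rw [hPP, hζl _ _ (hr i)]
    refine indep n _ hm2 k (fun i => (r i : ZMod (3 ^ (n + 2)))) hun e ?_ ?_
    · intro i j hij h
      apply hd i j hij
      rcases h with h | h
      · left
        apply (hun i).mul_left_cancel
        rw [hru i, h, hru j]
      · right
        apply (hun i).mul_left_cancel
        rw [hru i, h, neg_mul_neg, hru j]
    · intro u hu
      have hc := galois_conj _ _ k ζ _ hprim (prim_std _ u hu) _ e M hM'
      have hN := congrArg (fun x : ℂ => Real.log ‖x‖) hc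
      simp only [norm_prod, norm_zpow, norm_neg, norm_std, one_zpow, Real.log_one] at hN
      have hterm : ∀ i, (ZMod.stdAddChar u : ℂ) ^ (r i * (3 ^ (n + 1) + 1)) =
          (ZMod.stdAddChar (u * (r i : ZMod (3 ^ (n + 2)))) : ℂ) ^ (3 ^ (n + 1) + 1) := by
        intro i
        rw [zpow_mul, mul_comm u, ← zsmul_eq_mul, AddChar.map_zsmul_eq_zpow, ← zpow_natCast]
        push_cast; rfl
      simp only [hterm] at hN
      rw [Real.log_prod (fun i _ => zpow_ne_zero _ (norm_ne_zero_iff.mpr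
        (log_PP n _ (hu.mul (hun i)) hm2).1))] at hN
      rw [← hN]
      refine Finset.sum_congr rfl fun i _ => ?_
      rw [Real.log_zpow, (log_PP n _ (hu.mul (hun i)) hm2).2]
end

section
/- Let s ≥ 2 and let G = P'_{8·3^s} be the generalized binary tetrahedral group. The group homology of G with coefficients in the trivial G-module ℤ is: H₀(G; ℤ) ≅ ℤ; H_n(G; ℤ) = 0 for n > 0 with n ≡ 0 (mod 4); H_n(G; ℤ) ≅ ℤ/3^sℤ for n ≡ 1 (mod 4); H_n(G; ℤ) = 0 for n ≡ 2 (mod 4); and H_n(G; ℤ) ≅ ℤ/(8·3^s)ℤ for n ≡ 3 (mod 4). In particular the abelianization of G is cyclic of order 3^s. -/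
/-- Generators of the generalized binary tetrahedral group. -/
inductive Gen : Type
  | p : Gen
  | q : Gen
  | z : Gen

/-- The relations of the presentation
`⟨p, q, z | p² = (pq)² = q², z p z⁻¹ = q, z q z⁻¹ = pq, z^{3^s} = 1⟩`. -/
def rels (s : ℕ) : Set (FreeGroup Gen) :=
  {FreeGroup.of Gen.p ^ 2 * (FreeGroup.of Gen.q ^ 2)⁻¹,
   (FreeGroup.of Gen.p * FreeGroup.of Gen.q) ^ 2 * (FreeGroup.of Gen.q ^ 2)⁻¹,
   FreeGroup.of Gen.z * FreeGroup.of Gen.p * (FreeGroup.of Gen.z)⁻¹ *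
     (FreeGroup.of Gen.q)⁻¹,
   FreeGroup.of Gen.z * FreeGroup.of Gen.q * (FreeGroup.of Gen.z)⁻¹ *
     (FreeGroup.of Gen.p * FreeGroup.of Gen.q)⁻¹,
   FreeGroup.of Gen.z ^ (3 ^ s)}

/-- The differential of the standard (inhomogeneous) chain complex computing the group
homology of `G` with trivial coefficients in `M`:
`d(g₁,…,g_{n+1}) = (g₂,…,g_{n+1}) + ∑ᵢ (−1)ⁱ (g₁,…,gᵢgᵢ₊₁,…,g_{n+1}) + (−1)^{n+1}(g₁,…,gₙ)`. -/
noncomputable def trivialChainsD (G : Type) [Group G] (M : Type) [AddCommGroup M] (n : ℕ) :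
    ((Fin (n + 1) → G) →₀ M) →+ ((Fin n → G) →₀ M) :=
  Finsupp.mapDomain.addMonoidHom (fun x => x ∘ Fin.succ) +
    ∑ j : Fin (n + 1),
      (-1 : ℤ) ^ ((j : ℕ) + 1) • Finsupp.mapDomain.addMonoidHom (Fin.contractNth j (· * ·))

/-- The differential leaving degree `n` (the zero map in degree `0`). -/
noncomputable def trivialChainsDFrom (G : Type) [Group G] (M : Type) [AddCommGroup M] :
    (n : ℕ) → (((Fin n → G) →₀ M) →+ ((Fin (n - 1) → G) →₀ M))
  | 0 => 0
  | (k + 1) => trivialChainsD G M k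

/-- The group homology `Hₙ(G; M)` with trivial coefficients, as the `n`-th homology of the
standard inhomogeneous chain complex: cycles in degree `n` modulo boundaries. -/
noncomputable abbrev groupHomologyTriv (G : Type) [Group G] (M : Type) [AddCommGroup M]
    (n : ℕ) : Type :=
  (trivialChainsDFrom G M n).ker ⧸
    ((trivialChainsD G M n).range.addSubgroupOf (trivialChainsDFrom G M n).ker)


open CategoryTheory in
noncomputable def HQ {A B C : Type} [AddCommGroup A] [AddCommGroup B] [AddCommGroup C]
    (f : A →+ B) (g : B →+ C) : Type := g.ker ⧸ (f.range.addSubgroupOf g.ker)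

noncomputable instance {A B C : Type} [AddCommGroup A] [AddCommGroup B] [AddCommGroup C]
    (f : A →+ B) (g : B →+ C) : AddCommGroup (HQ f g) :=
  inferInstanceAs (AddCommGroup (g.ker ⧸ (f.range.addSubgroupOf g.ker)))

theorem quotEquiv_aux {R M N : Type*} [Ring R] [AddCommGroup M] [Module R M] [AddCommGroup N]
    (P : Submodule R M) (Q : AddSubgroup N) (φ : M ≃+ N) (h : ∀ x, x ∈ P ↔ φ x ∈ Q) :
    Nonempty ((M ⧸ P) ≃+ (N ⧸ Q)) := by
  refine ⟨(QuotientAddGroup.congr P.toAddSubgroup Q φ ?_)⟩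
  ext x
  simp only [AddSubgroup.mem_map, Submodule.mem_toAddSubgroup]
  constructor
  · rintro ⟨y, hy, rfl⟩
    exact (h y).1 hy
  · intro hx
    exact ⟨φ.symm x, (h _).2 (by simpa using hx), by simp⟩

open CategoryTheory in
theorem shortComplex_HQ {k : Type} [CommRing k] (S : ShortComplex (ModuleCat.{0} k)) :
    Nonempty (S.homology ≃+ HQ S.f.hom.toAddMonoidHom S.g.hom.toAddMonoidHom) := by
  have e1 := S.moduleCatHomologyIso.toLinearEquiv.toAddEquiv
  let φ : LinearMap.ker S.g.hom ≃+ S.g.hom.toAddMonoidHom.ker := AddEquiv.refl _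
  obtain ⟨e2⟩ := quotEquiv_aux (LinearMap.range S.moduleCatToCycles)
    (S.f.hom.toAddMonoidHom.range.addSubgroupOf S.g.hom.toAddMonoidHom.ker) φ (by
      rintro ⟨x, hx⟩
      constructor
      · rintro ⟨y, hy⟩
        exact ⟨y, congrArg Subtype.val hy⟩
      · rintro ⟨y, hy⟩
        exact ⟨y, Subtype.ext hy⟩)
  exact ⟨e1.trans e2⟩

open CategoryTheory in
theorem chainComplex_HQ {k : Type} [CommRing k] (K : ChainComplex (ModuleCat.{0} k) ℕ) (n : ℕ) :
    Nonempty (K.homology n ≃+ HQ (K.d (n+1) n).hom.toAddMonoidHom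
      (K.d n (n-1)).hom.toAddMonoidHom) := by
  have e := K.homologyIsoSc' (n+1) n (n-1) (by simp) (by cases n <;> simp)
  obtain ⟨f⟩ := shortComplex_HQ (K.sc' (n+1) n (n-1))
  exact ⟨e.toLinearEquiv.toAddEquiv.trans f⟩

open CategoryTheory in
theorem triv_eq_groupHomology (G : Type) [Group G] (n : ℕ) :
    Nonempty (groupHomologyTriv G ℤ n ≃+ groupHomology (Rep.trivial ℤ G ℤ) n) := by
  obtain ⟨e⟩ := chainComplex_HQ (groupHomology.inhomogeneousChains (Rep.trivial ℤ G ℤ)) n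
  have key : ∀ n, ((groupHomology.inhomogeneousChains (Rep.trivial ℤ G ℤ)).d (n+1) n).hom.toAddMonoidHom = trivialChainsD G ℤ n := by
    intro n
    rw [groupHomology.inhomogeneousChains.d_def]
    refine Finsupp.addHom_ext fun x y => ?_
    have := groupHomology.inhomogeneousChains.d_single (A := Rep.trivial ℤ G ℤ) n x y
    refine Eq.trans this ?_
    simp [trivialChainsD, Finsupp.mapDomain.addMonoidHom]
    rfl
  have key2 : ∀ n, ((groupHomology.inhomogeneousChains (Rep.trivial ℤ G ℤ)).d n (n-1)).hom.toAddMonoidHom = trivialChainsDFrom G ℤ n := by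
    intro n
    cases n with
    | zero =>
      rw [HomologicalComplex.shape _ _ _ (by simp)]; rfl
    | succ n => exact key n
  rw [key, key2] at e
  exact ⟨e.symm⟩


theorem HQ_congr {A B C A' B' C' : Type} [AddCommGroup A] [AddCommGroup B] [AddCommGroup C]
    [AddCommGroup A'] [AddCommGroup B'] [AddCommGroup C']
    (f : A →+ B) (g : B →+ C) (f' : A' →+ B') (g' : B' →+ C')
    (a : A ≃+ A') (b : B ≃+ B') (c : C ≃+ C')
    (hf : ∀ x, b (f x) = f' (a x)) (hg : ∀ x, c (g x) = g' (b x)) :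
    Nonempty (HQ f g ≃+ HQ f' g') := by
  let φ : g.ker ≃+ g'.ker :=
    { toFun := fun x => ⟨b x.1, by rw [AddMonoidHom.mem_ker, ← hg, x.2, map_zero]⟩
      invFun := fun x => ⟨b.symm x.1, by
        rw [AddMonoidHom.mem_ker]
        apply c.injective
        rw [hg, map_zero, b.apply_symm_apply]; exact x.2⟩
      left_inv := fun x => by simp
      right_inv := fun x => by simp
      map_add' := fun x y => by ext; simp }
  refine ⟨(QuotientAddGroup.congr _ _ φ ?_)⟩
  ext ⟨x, hx⟩
  simp only [AddSubgroup.mem_map, AddSubgroup.mem_addSubgroupOf]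
  constructor
  · rintro ⟨⟨y, hy⟩, ⟨w, hw⟩, h⟩
    have h' : b y = x := congrArg Subtype.val h
    refine ⟨a w, ?_⟩
    change f w = y at hw
    rw [← hf, hw, h']
  · rintro ⟨w, hw⟩
    change f' w = x at hw
    have hm : b (f (a.symm w)) = x := by rw [hf]; simpa using hw
    refine ⟨⟨f (a.symm w), ?_⟩, ⟨a.symm w, rfl⟩, Subtype.ext hm⟩
    rw [AddMonoidHom.mem_ker]
    apply c.injective
    rw [hg, hm, map_zero]; exact hx

/-- Augmentation of the integral group ring. -/
noncomputable def aug (G : Type) [Group G] : MonoidAlgebra ℤ G →+* ℤ :=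
  (MonoidAlgebra.lift ℤ ℤ G (1 : G →* ℤ)).toRingHom

theorem aug_single (G : Type) [Group G] (g : G) (r : ℤ) :
    aug G (MonoidAlgebra.single g r) = r := by
  simp [aug]

section bridge

open CategoryTheory in
theorem rep_exact {k G : Type} [CommRing k] [Group G] (S : ShortComplex (Rep.{0} k G))
    (h : ∀ v : S.X₂, S.g.hom v = 0 → ∃ w : S.X₁, S.f.hom w = v) : S.Exact := by
  apply (forget₂ (Rep.{0} k G) (ModuleCat k)).reflects_exact_of_faithful
  rw [ShortComplex.moduleCat_exact_iff]
  exact h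

variable (G : Type) [Group G] (X : ℕ → Type)
  (M : ∀ n, X (n+1) → (X n →₀ MonoidAlgebra ℤ G))

noncomputable def mD (n : ℕ) :
    (X (n+1) →₀ MonoidAlgebra ℤ G) →ₗ[MonoidAlgebra ℤ G] (X n →₀ MonoidAlgebra ℤ G) :=
  Finsupp.linearCombination _ (M n)

noncomputable def mE (n : ℕ) : (X (n+1) →₀ ℤ) →ₗ[ℤ] (X n →₀ ℤ) :=
  Finsupp.linearCombination ℤ (fun i => (M n i).mapRange (aug G) (map_zero _))

noncomputable def mEFrom : (n : ℕ) → ((X n →₀ ℤ) →ₗ[ℤ] (X (n-1) →₀ ℤ))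
  | 0 => 0
  | (k + 1) => mE G X M k

noncomputable def augX (Y : Type) : (Y →₀ MonoidAlgebra ℤ G) →+ ℤ :=
  Finsupp.liftAddHom (fun _ => (aug G).toAddMonoidHom)

open CategoryTheory

noncomputable def rD (n : ℕ) : Rep.free ℤ G (X (n+1)) ⟶ Rep.free ℤ G (X n) :=
  Rep.freeLift ℤ G (Rep.free ℤ G (X n)) (M n)

theorem free_apply (Y : Type) (g : G) (x : Y →₀ MonoidAlgebra ℤ G) :
    Representation.free ℤ G Y g x = MonoidAlgebra.single g (1 : ℤ) • x := by
  induction x using Finsupp.induction_linear with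
  | zero => simp
  | add f g hf hg => rw [map_add, smul_add, hf, hg]
  | single i r =>
    induction r using MonoidAlgebra.induction_linear with
    | zero => simp
    | add f g hf hg => rw [Finsupp.single_add, map_add, smul_add, hf, hg]
    | single h r =>
      simp [MonoidAlgebra.single_mul_single]

theorem rD_apply (n : ℕ) (v : X (n+1) →₀ MonoidAlgebra ℤ G) :
    (rD G X M n).hom v = mD G X M n v := by
  have : ((rD G X M n).hom.toLinearMap.toAddMonoidHom : (X (n+1) →₀ MonoidAlgebra ℤ G) →+ _)
      = (mD G X M n).toAddMonoidHom := by
    refine Finsupp.addHom_ext fun i r => ?_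
    induction r using MonoidAlgebra.induction_linear with
    | zero => simp
    | add f g hf hg => rw [Finsupp.single_add, map_add, map_add, hf, hg]
    | single g r =>
      refine Eq.trans (Representation.freeLift_single_single _ i g r (M n)) ?_
      simp only [mD, LinearMap.toAddMonoidHom_coe, Finsupp.linearCombination_single]
      refine Eq.trans (congrArg (fun t => r • t) (free_apply G (X n) g (M n i))) ?_
      rw [← smul_assoc, MonoidAlgebra.smul_single]
      simp
  exact DFunLike.congr_fun this v

noncomputable def rEps : Rep.free ℤ G (X 0) ⟶ Rep.trivial ℤ G ℤ :=
  Rep.freeLift ℤ G (Rep.trivial ℤ G ℤ) (fun _ => (1 : ℤ))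

theorem rEps_apply (v : X 0 →₀ MonoidAlgebra ℤ G) :
    (rEps G X).hom v = augX G (X 0) v := by
  have : ((rEps G X).hom.toLinearMap.toAddMonoidHom : (X 0 →₀ MonoidAlgebra ℤ G) →+ _)
      = augX G (X 0) := by
    refine Finsupp.addHom_ext fun i r => ?_
    induction r using MonoidAlgebra.induction_linear with
    | zero => simp
    | add f g hf hg => rw [Finsupp.single_add, map_add, map_add, hf, hg]
    | single g r =>
      refine Eq.trans (Representation.freeLift_single_single (Rep.trivial ℤ G ℤ).ρ i g r (fun _ => (1 : ℤ))) ?_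
      simp [augX, aug_single]
  exact DFunLike.congr_fun this v

noncomputable def rComplex (h1 : ∀ n v, mD G X M n (mD G X M (n+1) v) = 0) :
    ChainComplex (Rep ℤ G) ℕ :=
  ChainComplex.of (fun n => Rep.free ℤ G (X n)) (fun n => rD G X M n) (by
    intro n
    refine Rep.hom_ext (Representation.IntertwiningMap.ext (LinearMap.ext fun v => ?_))
    exact (by rw [rD_apply, rD_apply, h1] : (rD G X M n).hom ((rD G X M (n+1)).hom v) = 0))

theorem rComplex_d (h1 : ∀ n v, mD G X M n (mD G X M (n+1) v) = 0) (n : ℕ) :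
    (rComplex G X M h1).d (n+1) n = rD G X M n := by
  simp only [rComplex, ChainComplex.of, ChainComplex.of_d]

theorem rD_rEps (h3 : ∀ v, augX G (X 0) (mD G X M 0 v) = 0) :
    rD G X M 0 ≫ rEps G X = 0 := by
  refine Rep.hom_ext (Representation.IntertwiningMap.ext (LinearMap.ext fun v => ?_))
  exact (by rw [rD_apply, rEps_apply, h3] : (rEps G X).hom ((rD G X M 0).hom v) = 0)

noncomputable def rPi (h1 : ∀ n v, mD G X M n (mD G X M (n+1) v) = 0)
    (h3 : ∀ v, augX G (X 0) (mD G X M 0 v) = 0) :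
    rComplex G X M h1 ⟶ (ChainComplex.single₀ (Rep ℤ G)).obj (Rep.trivial ℤ G ℤ) :=
  ((rComplex G X M h1).toSingle₀Equiv _).symm ⟨rEps G X, by
    rw [rComplex_d]
    exact rD_rEps G X M h3⟩

theorem rPi_zero (h1 : ∀ n v, mD G X M n (mD G X M (n+1) v) = 0)
    (h3 : ∀ v, augX G (X 0) (mD G X M 0 v) = 0) :
    (rPi G X M h1 h3).f 0 = rEps G X := by
  exact ChainComplex.toSingle₀Equiv_symm_apply_f_zero _ _

theorem rExact_zero (h3 : ∀ v, augX G (X 0) (mD G X M 0 v) = 0)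
    (h4 : ∀ v, augX G (X 0) v = 0 → ∃ w, mD G X M 0 w = v) :
    (ShortComplex.mk (rD G X M 0) (rEps G X) (rD_rEps G X M h3)).Exact := by
  apply rep_exact
  intro v hv
  obtain ⟨w, hw⟩ := h4 v ((rEps_apply G X v).symm.trans hv)
  exact ⟨w, (rD_apply G X M 0 w).trans hw⟩

theorem rExact_succ (h1 : ∀ n v, mD G X M n (mD G X M (n+1) v) = 0)
    (h2 : ∀ n v, mD G X M n v = 0 → ∃ w, mD G X M (n+1) w = v) (n : ℕ)
    (h : rD G X M (n+1) ≫ rD G X M n = 0) :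
    (ShortComplex.mk (rD G X M (n+1)) (rD G X M n) h).Exact := by
  apply rep_exact
  intro v hv
  obtain ⟨w, hw⟩ := h2 n v ((rD_apply G X M n v).symm.trans hv)
  exact ⟨w, (rD_apply G X M (n+1) w).trans hw⟩

theorem rPi_quasiIso [Nonempty (X 0)] (h1 : ∀ n v, mD G X M n (mD G X M (n+1) v) = 0)
    (h2 : ∀ n v, mD G X M n v = 0 → ∃ w, mD G X M (n+1) w = v)
    (h3 : ∀ v, augX G (X 0) (mD G X M 0 v) = 0)
    (h4 : ∀ v, augX G (X 0) v = 0 → ∃ w, mD G X M 0 w = v) :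
    QuasiIso (rPi G X M h1 h3) where
  quasiIsoAt m := by
    induction m with
    | zero =>
      rw [ChainComplex.quasiIsoAt₀_iff, ShortComplex.quasiIso_iff_of_zeros' _ rfl rfl rfl]
      constructor
      · have := rExact_zero G X M h3 h4
        convert this using 1
        congr 1
      · rw [Rep.epi_iff_surjective]
        intro x
        obtain ⟨i⟩ := (inferInstance : Nonempty (X 0))
        refine ⟨(Finsupp.single i (MonoidAlgebra.single 1 x) : X 0 →₀ MonoidAlgebra ℤ G), ?_⟩
        have e1 := rEps_apply G X (Finsupp.single i (MonoidAlgebra.single 1 x))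
        have e2 : augX G (X 0) (Finsupp.single i (MonoidAlgebra.single 1 x)) = x := by
          exact (by simp [augX, aug_single] : ∀ y : ℤ, augX G (X 0) (Finsupp.single i (MonoidAlgebra.single 1 y)) = y) x
        have e3 := rPi_zero G X M h1 h3
        refine Eq.trans ?_ (e1.trans e2)
        change ((rPi G X M h1 h3).f 0).hom _ = _
        rw [e3]
        rfl
    | succ m _ =>
      rw [quasiIsoAt_iff_exactAt' (hL := ChainComplex.exactAt_succ_single_obj ..),
          HomologicalComplex.exactAt_iff' _ (m + 2) (m + 1) m (by simp) (by simp)]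
      have h : rD G X M (m+1) ≫ rD G X M m = 0 := by
        rw [← rComplex_d G X M h1, ← rComplex_d G X M h1]
        exact (rComplex G X M h1).d_comp_d _ _ _
      have := rExact_succ G X M h1 h2 m h
      convert this using 1
      simp only [HomologicalComplex.sc', HomologicalComplex.shortComplexFunctor', rComplex_d]
      rfl



noncomputable def mAug (Y : Type) : (Y →₀ MonoidAlgebra ℤ G) →+ (Y →₀ ℤ) :=
  Finsupp.mapRange.addMonoidHom (aug G).toAddMonoidHom

theorem mAug_smul (Y : Type) (r : MonoidAlgebra ℤ G) (v : Y →₀ MonoidAlgebra ℤ G) :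
    mAug G Y (r • v) = aug G r • mAug G Y v := by
  ext i
  simp [mAug]

theorem mAug_mD (n : ℕ) (v : X (n+1) →₀ MonoidAlgebra ℤ G) :
    mAug G (X n) (mD G X M n v) = mE G X M n (mAug G (X (n+1)) v) := by
  have : (mAug G (X n)).comp (mD G X M n).toAddMonoidHom =
      (mE G X M n).toAddMonoidHom.comp (mAug G (X (n+1))) := by
    refine Finsupp.addHom_ext fun i r => ?_
    simp only [AddMonoidHom.comp_apply, LinearMap.toAddMonoidHom_coe, mD,
      Finsupp.linearCombination_single, mAug_smul, mE]
    simp [mAug]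
  exact DFunLike.congr_fun this v

noncomputable def fMk (Y : Type) (a : ℤ) : (Y →₀ MonoidAlgebra ℤ G) →+
    (Representation.Coinvariants ((Rep.trivial ℤ G ℤ).ρ.tprod (Representation.free ℤ G Y))) :=
  (Representation.Coinvariants.mk
    ((Rep.trivial ℤ G ℤ).ρ.tprod (Representation.free ℤ G Y))).toAddMonoidHom.comp
    (TensorProduct.mk ℤ (Rep.trivial ℤ G ℤ) (Y →₀ MonoidAlgebra ℤ G) a).toAddMonoidHom

noncomputable def fTo (Y : Type) [DecidableEq Y] :
    (Representation.Coinvariants ((Rep.trivial ℤ G ℤ).ρ.tprod (Representation.free ℤ G Y))) ≃+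
    (Y →₀ ℤ) :=
  (Rep.coinvariantsTensorFreeLEquiv (Rep.trivial ℤ G ℤ) Y).toAddEquiv

theorem fTo_single (Y : Type) [DecidableEq Y] (a : ℤ) (i : Y) (g : G) (r : ℤ) :
    fTo G Y (fMk G Y a (Finsupp.single i (MonoidAlgebra.single g r))) =
      a • mAug G Y (Finsupp.single i (MonoidAlgebra.single g r)) := by
  have h : a • mAug G Y (Finsupp.single i (MonoidAlgebra.single g r)) =
      Finsupp.single i (r * a) := by
    simp [mAug, aug_single, mul_comm]
  rw [h]
  exact (Rep.coinvariantsTensorFreeToFinsupp_mk_tmul_single (Rep.trivial ℤ G ℤ) a i g r)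

theorem fTo_mk (Y : Type) [DecidableEq Y] (a : ℤ) (v : Y →₀ MonoidAlgebra ℤ G) :
    fTo G Y (fMk G Y a v) = a • mAug G Y v := by
  have : (fTo G Y).toAddMonoidHom.comp (fMk G Y a) = a • mAug G Y := by
    refine Finsupp.addHom_ext fun i r => ?_
    induction r using MonoidAlgebra.induction_linear with
    | zero => simp
    | add f g hf hg => rw [Finsupp.single_add, map_add, map_add, hf, hg]
    | single g r => exact fTo_single G Y a i g r
  exact DFunLike.congr_fun this v

noncomputable def rRes [Nonempty (X 0)] (h1 : ∀ n v, mD G X M n (mD G X M (n+1) v) = 0)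
    (h2 : ∀ n v, mD G X M n v = 0 → ∃ w, mD G X M (n+1) w = v)
    (h3 : ∀ v, augX G (X 0) (mD G X M 0 v) = 0)
    (h4 : ∀ v, augX G (X 0) v = 0 → ∃ w, mD G X M 0 w = v) :
    ProjectiveResolution (Rep.trivial ℤ G ℤ) where
  complex := rComplex G X M h1
  projective n := by classical exact (inferInstance : Projective (Rep.free ℤ G (X n)))
  π := rPi G X M h1 h3
  quasiIso := rPi_quasiIso G X M h1 h2 h3 h4

abbrev CoV (Y : Type) : Type :=
  Representation.Coinvariants ((Rep.trivial ℤ G ℤ).ρ.tprod (Representation.free ℤ G Y))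

theorem CoV_hom_ext (Y : Type) {B : Type} [AddCommGroup B] (f g : CoV G Y →+ B)
    (h : ∀ a v, f (fMk G Y a v) = g (fMk G Y a v)) : f = g := by
  ext x
  obtain ⟨y, rfl⟩ := Representation.Coinvariants.mk_surjective _ x
  induction y using TensorProduct.induction_on with
  | zero => simp
  | add y z hy hz => simp only [map_add, hy, hz]
  | tmul a v => exact h a v

noncomputable def dC (h1 : ∀ n v, mD G X M n (mD G X M (n+1) v) = 0) (m n : ℕ) :
    CoV G (X m) →+ CoV G (X n) :=
  (((rComplex G X M h1).coinvariantsTensorObj (Rep.trivial ℤ G ℤ)).d m n).hom.toAddMonoidHom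

theorem dC_mk (h1 : ∀ n v, mD G X M n (mD G X M (n+1) v) = 0) (n : ℕ) (a : ℤ)
    (v : X (n+1) →₀ MonoidAlgebra ℤ G) :
    dC G X M h1 (n+1) n (fMk G _ a v) = fMk G _ a (mD G X M n v) := by
  have h := rD_apply G X M n v
  rw [← rComplex_d G X M h1] at h
  exact congrArg (fMk G _ a) h

theorem dC_fTo [∀ n, DecidableEq (X n)]
    (h1 : ∀ n v, mD G X M n (mD G X M (n+1) v) = 0) (n : ℕ) (x : CoV G (X (n+1))) :
    fTo G (X n) (dC G X M h1 (n+1) n x) = mE G X M n (fTo G (X (n+1)) x) := by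
  have : (fTo G (X n)).toAddMonoidHom.comp (dC G X M h1 (n+1) n) =
      (mE G X M n).toAddMonoidHom.comp (fTo G (X (n+1))).toAddMonoidHom := by
    refine CoV_hom_ext G _ _ _ fun a v => ?_
    change fTo G (X n) (dC G X M h1 (n+1) n _) = mE G X M n (fTo G (X (n+1)) _)
    rw [dC_mk, fTo_mk, fTo_mk, map_zsmul, mAug_mD]
  exact DFunLike.congr_fun this x

theorem dC_HQ (h1 : ∀ n v, mD G X M n (mD G X M (n+1) v) = 0) (n : ℕ) :
    Nonempty (HQ (dC G X M h1 (n+1) n) (dC G X M h1 n (n-1)) ≃+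
      HQ (mE G X M n).toAddMonoidHom (mEFrom G X M n).toAddMonoidHom) := by
  classical
  refine HQ_congr _ _ (mE G X M n).toAddMonoidHom (mEFrom G X M n).toAddMonoidHom
    (fTo G (X (n+1))) (fTo G (X n)) (fTo G (X (n-1))) (dC_fTo G X M h1 n) (fun x => ?_)
  cases n with
  | zero =>
    have : dC G X M h1 0 0 = 0 := by
      unfold dC
      rw [HomologicalComplex.shape _ _ _ (by simp)]
      rfl
    change fTo G (X 0) (dC G X M h1 0 0 x) = 0
    rw [this]; simp
  | succ n => exact dC_fTo G X M h1 n x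

theorem bridge [Nonempty (X 0)] (h1 : ∀ n v, mD G X M n (mD G X M (n+1) v) = 0)
    (h2 : ∀ n v, mD G X M n v = 0 → ∃ w, mD G X M (n+1) w = v)
    (h3 : ∀ v, augX G (X 0) (mD G X M 0 v) = 0)
    (h4 : ∀ v, augX G (X 0) v = 0 → ∃ w, mD G X M 0 w = v) (n : ℕ) :
    Nonempty (groupHomologyTriv G ℤ n ≃+
      HQ (mE G X M n).toAddMonoidHom (mEFrom G X M n).toAddMonoidHom) := by
  classical
  obtain ⟨e1⟩ := triv_eq_groupHomology G n
  have e2 := (groupHomologyIso (Rep.trivial ℤ G ℤ) n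
    (rRes G X M h1 h2 h3 h4)).toLinearEquiv.toAddEquiv
  obtain ⟨e3⟩ := chainComplex_HQ ((rComplex G X M h1).coinvariantsTensorObj (Rep.trivial ℤ G ℤ)) n
  obtain ⟨e4⟩ := dC_HQ G X M h1 n
  exact ⟨e1.trans (e2.trans (e3.trans e4))⟩

end bridge


section concrete

def XX : ℕ → Type
  | 0 => Unit
  | 1 => Bool
  | 2 => Bool
  | 3 => Unit
  | (n + 4) => XX n

theorem lc_bool {R N : Type} [Ring R] [AddCommGroup N] [Module R N] (f : Bool → N)
    (v : Bool →₀ R) : Finsupp.linearCombination R f v = v true • f true + v false • f false := by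
  rw [Finsupp.linearCombination_apply, Finsupp.sum_fintype _ _ (by simp)]
  simp

theorem lc_unit {R N : Type} [Ring R] [AddCommGroup N] [Module R N] (f : Unit → N)
    (v : Unit →₀ R) : Finsupp.linearCombination R f v = v () • f () := by
  rw [Finsupp.linearCombination_apply, Finsupp.sum_fintype _ _ (by simp)]
  simp

variable (G : Type) [Group G]

/-- group element as an element of the group ring -/
noncomputable def gr (g : G) : MonoidAlgebra ℤ G := MonoidAlgebra.of ℤ G g

noncomputable def nrm [Fintype G] : MonoidAlgebra ℤ G := ∑ g : G, gr G g

noncomputable def geo (k : ℕ) (g : G) : MonoidAlgebra ℤ G := ∑ i ∈ Finset.range k, gr G g ^ i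

noncomputable def A0 (y e : G) (b : Bool) : Unit →₀ MonoidAlgebra ℤ G :=
  Finsupp.single () (bif b then gr G y - 1 else gr G e - 1)

noncomputable def A1 (K : ℕ) (y e : G) (b : Bool) : Bool →₀ MonoidAlgebra ℤ G :=
  bif b then
      Finsupp.single true (geo G 3 y) + Finsupp.single false (-(1 + gr G e)) else
      Finsupp.single true (geo G 3 (y * e ^ K))
        + Finsupp.single false (geo G 3 (y * e ^ K) * gr G y * geo G K e - (1 + gr G e))

noncomputable def A2 (K : ℕ) (y e : G) (_ : Unit) : Bool →₀ MonoidAlgebra ℤ G :=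
  Finsupp.single true (-(gr G y - 1)) + Finsupp.single false (gr G (y * e ^ K) - 1)

noncomputable def A3 [Fintype G] (_ : Unit) : Unit →₀ MonoidAlgebra ℤ G :=
  Finsupp.single () (nrm G)

noncomputable def MM [Fintype G] (K : ℕ) (y e : G) :
    ∀ n, XX (n+1) → (XX n →₀ MonoidAlgebra ℤ G)
  | 0 => A0 G y e
  | 1 => A1 G K y e
  | 2 => A2 G K y e
  | 3 => A3 G
  | (n + 4) => MM K y e n

noncomputable def D0 (y e : G) :
    (Bool →₀ MonoidAlgebra ℤ G) →ₗ[MonoidAlgebra ℤ G] (Unit →₀ MonoidAlgebra ℤ G) :=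
  Finsupp.linearCombination _ (A0 G y e)
noncomputable def D1 (K : ℕ) (y e : G) :
    (Bool →₀ MonoidAlgebra ℤ G) →ₗ[MonoidAlgebra ℤ G] (Bool →₀ MonoidAlgebra ℤ G) :=
  Finsupp.linearCombination _ (A1 G K y e)
noncomputable def D2 (K : ℕ) (y e : G) :
    (Unit →₀ MonoidAlgebra ℤ G) →ₗ[MonoidAlgebra ℤ G] (Bool →₀ MonoidAlgebra ℤ G) :=
  Finsupp.linearCombination _ (A2 G K y e)
noncomputable def D3 [Fintype G] :
    (Unit →₀ MonoidAlgebra ℤ G) →ₗ[MonoidAlgebra ℤ G] (Unit →₀ MonoidAlgebra ℤ G) :=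
  Finsupp.linearCombination _ (A3 G)

variable {G} {K : ℕ} {y e : G}

theorem D0_apply (v : Bool →₀ MonoidAlgebra ℤ G) :
    D0 G y e v () = v true * (gr G y - 1) + v false * (gr G e - 1) := by
  rw [D0, lc_bool]; simp only [A0, Finsupp.add_apply, Finsupp.smul_apply, cond_true, cond_false,
    Finsupp.single_eq_same, smul_eq_mul]

theorem D1_true (v : Bool →₀ MonoidAlgebra ℤ G) :
    D1 G K y e v true = v true * geo G 3 y + v false * geo G 3 (y * e ^ K) := by
  rw [D1, lc_bool]; simp [A1]

theorem D1_false (v : Bool →₀ MonoidAlgebra ℤ G) :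
    D1 G K y e v false = v true * (-(1 + gr G e)) + v false *
      (geo G 3 (y * e ^ K) * gr G y * geo G K e - (1 + gr G e)) := by
  rw [D1, lc_bool]; simp [A1]; noncomm_ring

theorem D2_true (v : Unit →₀ MonoidAlgebra ℤ G) :
    D2 G K y e v true = v () * (-(gr G y - 1)) := by
  rw [D2, lc_unit]; simp [A2]

theorem D2_false (v : Unit →₀ MonoidAlgebra ℤ G) :
    D2 G K y e v false = v () * (gr G (y * e ^ K) - 1) := by
  rw [D2, lc_unit]; simp [A2]

theorem D3_apply [Fintype G] (v : Unit →₀ MonoidAlgebra ℤ G) :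
    D3 G v () = v () * nrm G := by
  rw [D3, lc_unit]; simp [A3]

theorem gr_mul (g h : G) : gr G (g * h) = gr G g * gr G h := map_mul _ _ _
theorem gr_pow (g : G) (n : ℕ) : gr G (g ^ n) = gr G g ^ n := map_pow _ _ _
theorem gr_one : gr G (1 : G) = 1 := map_one _

theorem geo_mul (k : ℕ) (g : G) : geo G k g * (gr G g - 1) = gr G (g ^ k) - 1 := by
  rw [geo, geom_sum_mul, gr_pow]
theorem mul_geo (k : ℕ) (g : G) : (gr G g - 1) * geo G k g = gr G (g ^ k) - 1 := by
  rw [geo, mul_geom_sum, gr_pow]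


theorem nrm_mul [Fintype G] (g : G) : nrm G * gr G g = nrm G := by
  simp only [nrm, Finset.sum_mul, ← gr_mul]
  exact Fintype.sum_equiv (Equiv.mulRight g) _ _ (fun _ => rfl)

theorem mul_nrm_gr [Fintype G] (g : G) : gr G g * nrm G = nrm G := by
  simp only [nrm, Finset.mul_sum, ← gr_mul]
  exact Fintype.sum_equiv (Equiv.mulLeft g) _ _ (fun _ => rfl)

theorem gr_smul_single (g : G) (r : ℤ) : MonoidAlgebra.single g r = r • gr G g := by
  simp [gr]

theorem aug_gr (g : G) : aug G (gr G g) = 1 := aug_single G g 1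

theorem mul_nrm [Fintype G] (x : MonoidAlgebra ℤ G) : x * nrm G = aug G x • nrm G := by
  induction x using MonoidAlgebra.induction_linear with
  | zero => simp
  | add f g hf hg => rw [add_mul, hf, hg, map_add, add_smul]
  | single g r => rw [gr_smul_single, smul_mul_assoc, mul_nrm_gr, map_zsmul, aug_gr]; simp

theorem nrm_coeff [Fintype G] (g : G) : (nrm G).coeff g = 1 := by
  classical
  simp [nrm, gr, MonoidAlgebra.coeff_sum, Finsupp.single_apply]

theorem coeff_mul_gr (x : MonoidAlgebra ℤ G) (g k : G) :
    (x * gr G g).coeff k = x.coeff (k * g⁻¹) := by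
  have := MonoidAlgebra.coeff_mul_single_eq_coeff_mul (x := x) (r := (1:ℤ)) (m := g) (m₁ := k) (k * g⁻¹)
    (fun m' _ => eq_mul_inv_iff_mul_eq.symm)
  rw [mul_one] at this
  exact this

structure TRel (K : ℕ) (y e : G) : Prop where
  r1 : y ^ 3 = e ^ 2
  r2 : (y * e ^ K) ^ 3 = e ^ 2

theorem D0_D1 (h : TRel K y e) (v : Bool →₀ MonoidAlgebra ℤ G) : D0 G y e (D1 G K y e v) = 0 := by
  refine Finsupp.ext fun _ => ?_
  rw [D0_apply, D1_true, D1_false]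
  have h1 := geo_mul 3 y
  have h2 := geo_mul 3 (y * e ^ K)
  have h3 := geo_mul K e
  rw [h.r1] at h1
  rw [h.r2, gr_mul] at h2
  have h4 : gr G (e^2) - 1 = (1 + gr G e) * (gr G e - 1) := by rw [gr_pow]; noncomm_ring
  rw [h4] at h1 h2
  have h5 : geo G 3 (y * e ^ K) * gr G y * geo G K e * (gr G e - 1) =
      geo G 3 (y * e ^ K) * (gr G y * gr G (e ^ K) - 1) - geo G 3 (y * e ^ K) * (gr G y - 1) := by
    rw [mul_assoc, h3]; noncomm_ring
  rw [h2] at h5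
  rw [add_mul, add_mul, mul_assoc, h1, mul_assoc, mul_assoc, mul_assoc, sub_mul, h5]
  simp only [Finsupp.coe_zero, Pi.zero_apply]
  noncomm_ring

theorem D1_D2 (h : TRel K y e) (v : Unit →₀ MonoidAlgebra ℤ G) :
    D1 G K y e (D2 G K y e v) = 0 := by
  have h1 := mul_geo 3 y
  have h2 := mul_geo 3 (y * e ^ K)
  have h3 := mul_geo K e
  rw [h.r1] at h1
  rw [h.r2] at h2
  have hc : gr G (e ^ 2) * gr G y = gr G y * gr G (e ^ 2) := by
    rw [← gr_mul, ← gr_mul, ← h.r1, pow_mul_comm']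
  have h4 : gr G (e^2) - 1 = (1 + gr G e) * (gr G e - 1) := by rw [gr_pow]; noncomm_ring
  ext b : 1
  cases b
  · rw [D1_false, D2_true, D2_false]
    have h6 : (gr G (y * e ^ K) - 1) * (geo G 3 (y * e ^ K) * gr G y * geo G K e - (1 + gr G e)) =
       (gr G y - 1) * -(1 + gr G e) := by
      rw [mul_sub, ← mul_assoc, ← mul_assoc, h2]
      have : (gr G (e^2) - 1) * gr G y * geo G K e = gr G y * (1 + gr G e) * (gr G (e^K) - 1) := by
        rw [sub_mul, hc, one_mul, ← mul_sub_one, h4, ← h3]; noncomm_ring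
      rw [this, gr_mul, gr_pow]
      have h7 := (Commute.refl (gr G e)).pow_right K
      have h8 : gr G e * gr G e ^ K = gr G e ^ K * gr G e := h7
      have : gr G y * (1 + gr G e) * (gr G e ^ K - 1) = gr G y * ((gr G e ^ K - 1) * (1 + gr G e)) := by
        rw [mul_assoc]; congr 1
        have : (1 + gr G e) * (gr G e ^ K - 1) = gr G e ^ K - 1 - gr G e + gr G e * gr G e ^ K := by
          noncomm_ring
        rw [this, h8]; noncomm_ring
      rw [this]; noncomm_ring
    rw [mul_assoc, mul_assoc, h6]
    simp only [Finsupp.coe_zero, Pi.zero_apply]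
    noncomm_ring
  · rw [D1_true, D2_true, D2_false, mul_assoc, mul_assoc, neg_mul, h1, h2]
    simp only [Finsupp.coe_zero, Pi.zero_apply]
    noncomm_ring

theorem D2_D3 [Fintype G] (v : Unit →₀ MonoidAlgebra ℤ G) :
    D2 G K y e (D3 G v) = 0 := by
  ext b : 1
  cases b
  · rw [D2_false, D3_apply, mul_assoc, mul_sub, nrm_mul]; simp
  · rw [D2_true, D3_apply, mul_assoc, mul_neg, mul_sub, nrm_mul]; simp

theorem D3_D0 [Fintype G] (v : Bool →₀ MonoidAlgebra ℤ G) :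
    D3 G (D0 G y e v) = 0 := by
  refine Finsupp.ext fun _ => ?_
  rw [D3_apply, D0_apply, mul_nrm]
  simp [aug_gr]


theorem exact_aug (hgen : Subgroup.closure {y, e} = ⊤) (x : MonoidAlgebra ℤ G)
    (hx : aug G x = 0) : ∃ w, D0 G y e w () = x := by
  let J : AddSubgroup (MonoidAlgebra ℤ G) :=
    ((Finsupp.lapply () : (Unit →₀ MonoidAlgebra ℤ G) →ₗ[MonoidAlgebra ℤ G] _) ∘ₗ D0 G y e).toAddMonoidHom.range
  have hJ : ∀ x, x ∈ J ↔ ∃ w, D0 G y e w () = x := fun x => Iff.rfl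
  have hJm : ∀ r x, x ∈ J → r * x ∈ J := by
    intro r x hx
    rw [hJ] at hx ⊢
    obtain ⟨w, rfl⟩ := hx
    exact ⟨r • w, by simp⟩
  have h1 : ∀ g : G, gr G g - 1 ∈ J := by
    intro g
    have hg : g ∈ Subgroup.closure {y, e} := by rw [hgen]; trivial
    induction hg using Subgroup.closure_induction with
    | mem x hx =>
      rw [hJ]
      rcases hx with rfl | rfl
      · exact ⟨Finsupp.single true 1, by rw [D0_apply]; simp⟩
      · exact ⟨Finsupp.single false 1, by rw [D0_apply]; simp⟩
    | one => rw [gr_one, sub_self]; exact J.zero_mem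
    | mul a b _ _ ha hb =>
      have : gr G (a * b) - 1 = gr G a * (gr G b - 1) + (gr G a - 1) := by
        rw [gr_mul]; noncomm_ring
      rw [this]
      exact J.add_mem (hJm _ _ hb) ha
    | inv a _ ha =>
      have : gr G a⁻¹ - 1 = - (gr G a⁻¹ * (gr G a - 1)) := by
        rw [mul_sub, ← gr_mul, inv_mul_cancel, gr_one]; noncomm_ring
      rw [this]
      exact J.neg_mem (hJm _ _ ha)
  have h2 : ∀ x, x - aug G x • (1 : MonoidAlgebra ℤ G) ∈ J := by
    intro x
    induction x using MonoidAlgebra.induction_linear with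
    | zero => simp
    | add f g hf hg =>
      have := J.add_mem hf hg
      rw [map_add, add_smul]
      convert this using 1
      abel
    | single g r =>
      rw [gr_smul_single, map_zsmul, aug_gr, smul_eq_mul, mul_one, ← smul_sub]
      exact J.zsmul_mem (h1 g) r
  have := h2 x
  rw [hx, zero_smul, sub_zero] at this
  exact this

theorem exact0 (hgen : Subgroup.closure {y, e} = ⊤) (v : Unit →₀ MonoidAlgebra ℤ G)
    (hx : aug G (v ()) = 0) : ∃ w, D0 G y e w = v := by
  obtain ⟨w, hw⟩ := exact_aug hgen _ hx
  exact ⟨w, Finsupp.ext fun _ => hw⟩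

theorem exact3 [Fintype G] (hgen : Subgroup.closure {y, e} = ⊤) (v : Unit →₀ MonoidAlgebra ℤ G)
    (hx : D3 G v = 0) : ∃ w, D0 G y e w = v := by
  refine exact0 hgen v ?_
  have := DFunLike.congr_fun hx ()
  rw [D3_apply, mul_nrm] at this
  have h2 := congrArg (fun x => MonoidAlgebra.coeff x 1) this
  simpa [nrm_coeff, -zsmul_eq_mul] using h2

theorem gen_c (h : TRel K y e) (hK : Odd K) (hgen : Subgroup.closure {y, e} = ⊤) :
    Subgroup.closure {y, y * e ^ K} = ⊤ := by
  have hy : y ∈ Subgroup.closure {y, y * e ^ K} := Subgroup.subset_closure (by simp)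
  have hc : y * e ^ K ∈ Subgroup.closure {y, y * e ^ K} := Subgroup.subset_closure (by simp)
  rw [← top_le_iff, ← hgen, Subgroup.closure_le]
  rintro x (rfl | rfl)
  · exact hy
  · obtain ⟨k, hk⟩ := hK
    have h1 : x ^ 2 ∈ Subgroup.closure {y, y * x ^ K} := by
      rw [← h.r1]; exact Subgroup.pow_mem _ hy 3
    have h2 : x ^ K ∈ Subgroup.closure {y, y * x ^ K} := by
      have := Subgroup.mul_mem _ (Subgroup.inv_mem _ hy) hc
      rwa [inv_mul_cancel_left] at this
    have h3 : x = ((x ^ 2) ^ k)⁻¹ * x ^ K := by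
      rw [hk, pow_succ x (2 * k), pow_mul]; group
    have h4 := Subgroup.mul_mem _ (Subgroup.inv_mem _ (Subgroup.pow_mem _ h1 k)) h2
    rw [← h3] at h4
    exact h4

theorem inv_mod (h : TRel K y e) (hK : Odd K) (hgen : Subgroup.closure {y, e} = ⊤)
    (m : ℤ) (x : MonoidAlgebra ℤ G)
    (h1 : ∀ g, m ∣ (x * (gr G y - 1)).coeff g)
    (h2 : ∀ g, m ∣ (x * (gr G (y * e ^ K) - 1)).coeff g) (g : G) :
    m ∣ x.coeff g - x.coeff 1 := by
  have key : ∀ a : G, (∀ g, m ∣ (x * (gr G a - 1)).coeff g) → ∀ g, m ∣ x.coeff (g * a) - x.coeff g := by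
    intro a ha g
    have := ha (g * a)
    rw [mul_sub, mul_one, MonoidAlgebra.coeff_sub, Finsupp.sub_apply, coeff_mul_gr,
      mul_inv_cancel_right] at this
    rw [← dvd_neg, neg_sub]
    exact this
  have hg : g ∈ Subgroup.closure {y, y * e ^ K} := by rw [gen_c h hK hgen]; trivial
  have main : ∀ k, m ∣ x.coeff (k * g) - x.coeff k := by
    induction hg using Subgroup.closure_induction with
    | mem a ha =>
      rcases ha with rfl | rfl
      · exact key _ h1
      · exact key _ h2
    | one => simp
    | mul a b _ _ ha hb =>
      intro k
      have := dvd_add (hb (k * a)) (ha k)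
      rw [← mul_assoc]
      simpa using this
    | inv a _ ha =>
      intro k
      have := ha (k * a⁻¹)
      rw [inv_mul_cancel_right] at this
      rw [← dvd_neg, neg_sub]
      exact this
  simpa using main 1

theorem exact2 [Fintype G] (h : TRel K y e) (hK : Odd K) (hgen : Subgroup.closure {y, e} = ⊤)
    (v : Unit →₀ MonoidAlgebra ℤ G)
    (hx : D2 G K y e v = 0) : ∃ w, D3 G w = v := by
  have h1 := DFunLike.congr_fun hx true
  have h2 := DFunLike.congr_fun hx false
  rw [D2_true, mul_neg, Finsupp.zero_apply, neg_eq_zero] at h1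
  rw [D2_false, Finsupp.zero_apply] at h2
  have := inv_mod h hK hgen 0 (v ()) (by simp [h1]) (by simp [h2])
  refine ⟨Finsupp.single () ((v ()).coeff 1 • (1 : MonoidAlgebra ℤ G)), Finsupp.ext fun _ => ?_⟩
  rw [D3_apply]
  refine MonoidAlgebra.ext (Finsupp.ext fun g => ?_)
  have h3 := this g
  rw [zero_dvd_iff, sub_eq_zero] at h3
  rw [Finsupp.single_eq_same, smul_mul_assoc, one_mul]
  simp [nrm_coeff, h3, -zsmul_eq_mul]

theorem tf2 [Fintype G] (h : TRel K y e) (hK : Odd K) (hgen : Subgroup.closure {y, e} = ⊤)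
    (m : ℤ) (hm : m ≠ 0) (v : Bool →₀ MonoidAlgebra ℤ G) (w : Unit →₀ MonoidAlgebra ℤ G)
    (hx : D2 G K y e w = m • v) : ∃ w, D2 G K y e w = v := by
  have h1 := DFunLike.congr_fun hx true
  have h2 := DFunLike.congr_fun hx false
  rw [D2_true, mul_neg, Finsupp.smul_apply] at h1
  rw [D2_false, Finsupp.smul_apply] at h2
  have := inv_mod h hK hgen m (w ()) (fun g => by
      rw [← dvd_neg]
      have := congrArg (fun x => MonoidAlgebra.coeff x g) h1
      simp only [MonoidAlgebra.coeff_neg, MonoidAlgebra.coeff_smul, Finsupp.neg_apply, Finsupp.smul_apply] at this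
      rw [this]; exact ⟨_, rfl⟩) (fun g => by rw [h2]; exact ⟨_, rfl⟩)
  choose f hf using this
  let w' : Unit →₀ MonoidAlgebra ℤ G := Finsupp.single () (∑ g, f g • gr G g)
  have hw : w = D3 G (Finsupp.single () ((w ()).coeff 1 • (1 : MonoidAlgebra ℤ G))) + m • w' := by
    classical
    refine Finsupp.ext fun _ => MonoidAlgebra.ext (Finsupp.ext fun g => ?_)
    rw [Finsupp.add_apply, D3_apply]
    rw [Finsupp.single_eq_same, smul_mul_assoc, one_mul]
    simp [nrm_coeff, w', MonoidAlgebra.coeff_sum, gr, Finsupp.single_apply, -zsmul_eq_mul, ← hf]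
  rw [hw, map_add, D2_D3, zero_add, map_zsmul] at hx
  exact ⟨w', smul_right_injective _ hm hx⟩

/-- universal property -/
def UP (K : ℕ) (y e : G) : Prop := ∀ (H : Type) [Group H] (y' e' : H), TRel K y' e' →
  ∃ φ : G →* H, φ y = y' ∧ φ e = e'

section affine

variable {M : Type} [AddCommGroup M] [Module (MonoidAlgebra ℤ G) M]

/-- the affine permutation `m ↦ g m + a` -/
noncomputable def aff (g : G) (a : M) : Equiv.Perm M where
  toFun m := gr G g • m + a
  invFun m := gr G g⁻¹ • (m - a)
  left_inv m := by
    beta_reduce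
    rw [add_sub_cancel_right, ← mul_smul, ← gr_mul, inv_mul_cancel, gr_one, one_smul]
  right_inv m := by
    beta_reduce
    rw [← mul_smul, ← gr_mul, mul_inv_cancel, gr_one, one_smul, sub_add_cancel]

theorem aff_apply (g : G) (a m : M) : aff g a m = gr G g • m + a := rfl

theorem aff_mul (g g' : G) (a a' : M) : aff g a * aff g' a' = aff (g * g') (gr G g • a' + a) := by
  ext m
  simp only [Equiv.Perm.mul_apply, aff_apply, gr_mul, mul_smul, smul_add, add_assoc]

theorem aff_pow (g : G) (a : M) (n : ℕ) : aff g a ^ n = aff (g ^ n) (geo G n g • a) := by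
  induction n with
  | zero => ext m; simp [aff_apply, geo, gr_one]
  | succ n ih =>
    rw [pow_succ', ih, aff_mul, ← pow_succ']
    congr 1
    rw [← mul_smul]
    nth_rewrite 2 [← one_smul (MonoidAlgebra ℤ G) a]
    rw [← add_smul, geo, geo, Finset.sum_range_succ', Finset.mul_sum, pow_zero]
    simp only [pow_succ']

end affine

theorem exact1 (h : TRel K y e) (hgen : Subgroup.closure {y, e} = ⊤) (hup : UP K y e)
    (v : Bool →₀ MonoidAlgebra ℤ G) (hv : D0 G y e v = 0) : ∃ w, D1 G K y e w = v := by
  let S := LinearMap.range (D1 G K y e)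
  let ey : (Bool →₀ MonoidAlgebra ℤ G) ⧸ S := S.mkQ (Finsupp.single true 1)
  let ee : (Bool →₀ MonoidAlgebra ℤ G) ⧸ S := S.mkQ (Finsupp.single false 1)
  have hmk : ∀ v : Bool →₀ MonoidAlgebra ℤ G, S.mkQ v = v true • ey + v false • ee := by
    intro v
    rw [← map_smul, ← map_smul, ← map_add]
    congr 1
    ext b : 1
    cases b <;> simp
  have q1 : geo G 3 y • ey - (1 + gr G e) • ee = 0 := by
    have : S.mkQ (D1 G K y e (Finsupp.single true 1)) = 0 :=
      (Submodule.Quotient.mk_eq_zero S).2 ⟨_, rfl⟩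
    rw [hmk, D1_true, D1_false] at this
    simpa [sub_eq_add_neg, add_smul] using this
  have q2 : geo G 3 (y * e ^ K) • ey + (geo G 3 (y * e ^ K) * gr G y * geo G K e) • ee
      - (1 + gr G e) • ee = 0 := by
    have : S.mkQ (D1 G K y e (Finsupp.single false 1)) = 0 :=
      (Submodule.Quotient.mk_eq_zero S).2 ⟨_, rfl⟩
    rw [hmk, D1_true, D1_false] at this
    simpa [sub_eq_add_neg, add_smul, add_assoc] using this
  have e2 : geo G 2 e = 1 + gr G e := by simp [geo, Finset.sum_range_succ]
  obtain ⟨φ, hφy, hφe⟩ := hup (Equiv.Perm ((Bool →₀ MonoidAlgebra ℤ G) ⧸ S)) (aff y ey) (aff e ee)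
    ⟨by rw [aff_pow, aff_pow, h.r1, sub_eq_zero.1 q1, e2],
     by
      rw [aff_pow, aff_mul, aff_pow, aff_pow, h.r2, e2, ← sub_eq_zero.1 q2, smul_add,
        ← mul_smul, ← mul_smul, add_comm, mul_assoc]⟩
  have hφ : ∀ g m, φ g m = gr G g • m + φ g 0 := by
    intro g
    have hg : g ∈ Subgroup.closure {y, e} := by rw [hgen]; trivial
    induction hg using Subgroup.closure_induction with
    | mem x hx =>
      rcases hx with rfl | rfl
      · intro m; rw [hφy, aff_apply, aff_apply, smul_zero, zero_add]
      · intro m; rw [hφe, aff_apply, aff_apply, smul_zero, zero_add]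
    | one => simp [gr_one]
    | mul a b _ _ ha hb =>
      intro m
      rw [map_mul, Equiv.Perm.mul_apply, Equiv.Perm.mul_apply, hb, ha, ha (φ b 0), smul_add,
        gr_mul, mul_smul, add_assoc]
    | inv a _ ha =>
      intro m
      apply (φ a).injective
      have hi : ∀ m, φ a (φ a⁻¹ m) = m := fun m => by
        rw [← Equiv.Perm.mul_apply, ← map_mul, mul_inv_cancel, map_one, Equiv.Perm.one_apply]
      rw [hi, ha, smul_add, ← mul_smul, ← gr_mul, mul_inv_cancel,
        gr_one, one_smul, add_assoc, ← ha, hi, add_zero]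
  let Φ : MonoidAlgebra ℤ G →+ ((Bool →₀ MonoidAlgebra ℤ G) ⧸ S) :=
    (Finsupp.liftAddHom (fun g => zmultiplesHom _ (φ g 0))).comp
      MonoidAlgebra.coeffAddEquiv.toAddMonoidHom
  have hΦg : ∀ g, Φ (gr G g) = φ g 0 := by
    intro g
    have : MonoidAlgebra.coeffAddEquiv (gr G g) = Finsupp.single g (1 : ℤ) := rfl
    simp only [Φ, AddMonoidHom.comp_apply, AddEquiv.toAddMonoidHom_eq_coe, AddMonoidHom.coe_coe, this]
    simp
  have hΦ : ∀ (a : G) (x : MonoidAlgebra ℤ G), Φ (x * (gr G a - 1)) = x • φ a 0 := by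
    intro a x
    induction x using MonoidAlgebra.induction_linear with
    | zero => simp
    | add f g hf hg => rw [add_mul, map_add, hf, hg, add_smul]
    | single g r =>
      rw [gr_smul_single, smul_mul_assoc, map_zsmul, mul_sub, mul_one, ← gr_mul, map_sub,
        hΦg, hΦg, map_mul, Equiv.Perm.mul_apply, hφ g (φ a 0), add_sub_cancel_right, smul_assoc]
  have h1 := congrArg Φ (DFunLike.congr_fun hv ())
  rw [D0_apply, map_add, hΦ, hΦ, hφy, hφe, aff_apply, aff_apply, smul_zero, smul_zero, zero_add,
    zero_add, ← hmk, Finsupp.zero_apply, map_zero] at h1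
  exact (Submodule.Quotient.mk_eq_zero S).1 h1

theorem rank_nullity {A B : Type} [AddCommGroup A] [AddCommGroup B] [Module.Finite ℤ A]
    (f : A →ₗ[ℤ] B) : Module.finrank ℤ (LinearMap.range f) + Module.finrank ℤ (LinearMap.ker f)
      = Module.finrank ℤ A := by
  rw [← f.quotKerEquivRange.finrank_eq, Submodule.finrank_quotient_add_finrank]

theorem exact_rank [Fintype G] (h : TRel K y e) (hK : Odd K)
    (hgen : Subgroup.closure {y, e} = ⊤) (hup : UP K y e)
    (v : Bool →₀ MonoidAlgebra ℤ G) (hv : D1 G K y e v = 0) : ∃ w, D2 G K y e w = v := by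
  let R := MonoidAlgebra ℤ G
  let d0 : (Bool →₀ R) →ₗ[ℤ] (Unit →₀ R) := (D0 G y e).restrictScalars ℤ
  let d1 : (Bool →₀ R) →ₗ[ℤ] (Bool →₀ R) := (D1 G K y e).restrictScalars ℤ
  let d2 : (Unit →₀ R) →ₗ[ℤ] (Bool →₀ R) := (D2 G K y e).restrictScalars ℤ
  let d3 : (Unit →₀ R) →ₗ[ℤ] (Unit →₀ R) := (D3 G).restrictScalars ℤ
  have E0 : LinearMap.ker d0 = LinearMap.range d1 := by
    ext v
    exact ⟨fun hv => exact1 h hgen hup v hv, by rintro ⟨w, rfl⟩; exact D0_D1 h w⟩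
  have E2 : LinearMap.ker d2 = LinearMap.range d3 := by
    ext v
    exact ⟨fun hv => exact2 h hK hgen v hv, by rintro ⟨w, rfl⟩; exact D2_D3 w⟩
  have E3 : LinearMap.ker d3 = LinearMap.range d0 := by
    ext v
    exact ⟨fun hv => exact3 hgen v hv, by rintro ⟨w, rfl⟩; exact D3_D0 w⟩
  have fR : Module.Finite ℤ R := inferInstance
  have fF : Module.Free ℤ R := inferInstance
  have n0 := rank_nullity d0
  have n1 := rank_nullity d1
  have n2 := rank_nullity d2
  have n3 := rank_nullity d3
  rw [E0] at n0
  rw [E2] at n2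
  rw [E3] at n3
  have hle : LinearMap.range d2 ≤ LinearMap.ker d1 := by
    rintro _ ⟨w, rfl⟩; exact D1_D2 h w
  have hrank : Module.finrank ℤ (LinearMap.range d2) = Module.finrank ℤ (LinearMap.ker d1) := by
    omega
  let N := (LinearMap.range d2).submoduleOf (LinearMap.ker d1)
  have hN : Module.finrank ℤ N = Module.finrank ℤ (LinearMap.range d2) :=
    (Submodule.submoduleOfEquivOfLe hle).finrank_eq
  have hq := Submodule.finrank_quotient_add_finrank N
  have hq0 : Module.finrank ℤ (LinearMap.ker d1 ⧸ N) = 0 := by omega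
  rw [Module.finrank_eq_zero_iff_isTorsion] at hq0
  obtain ⟨⟨m, hm⟩, hmx⟩ := @hq0 (N.mkQ ⟨v, hv⟩)
  have hmx' : N.mkQ (m • ⟨v, hv⟩) = 0 := by rw [map_smul]; exact hmx
  have hmem := (Submodule.Quotient.mk_eq_zero N).1 hmx'
  obtain ⟨w, hw⟩ := hmem
  exact tf2 h hK hgen m (nonZeroDivisors.ne_zero hm) v w hw



theorem augX_unit (v : Unit →₀ MonoidAlgebra ℤ G) : augX G Unit v = aug G (v ()) := by
  have : augX G Unit = (aug G).toAddMonoidHom.comp (Finsupp.applyAddHom ()) := by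
    refine Finsupp.addHom_ext fun i r => ?_
    simp [augX]
  rw [this]; rfl

theorem aug_D0 (v : Bool →₀ MonoidAlgebra ℤ G) : aug G (D0 G y e v ()) = 0 := by
  rw [D0_apply]; simp [aug_gr]

theorem concrete_bridge [Fintype G] (h : TRel K y e) (hK : Odd K)
    (hgen : Subgroup.closure {y, e} = ⊤) (hup : UP K y e) (n : ℕ) :
    Nonempty (groupHomologyTriv G ℤ n ≃+
      HQ (mE G XX (MM G K y e) n).toAddMonoidHom (mEFrom G XX (MM G K y e) n).toAddMonoidHom) := by
  haveI : Nonempty (XX 0) := ⟨()⟩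
  have H1 : ∀ n v, mD G XX (MM G K y e) n (mD G XX (MM G K y e) (n+1) v) = 0 := by
    intro n
    induction n using Nat.strong_induction_on with
    | _ n ih =>
      match n with
      | 0 => exact D0_D1 h
      | 1 => exact D1_D2 h
      | 2 => exact D2_D3
      | 3 => exact D3_D0
      | (n + 4) => exact ih n (by omega)
  have H2 : ∀ n v, mD G XX (MM G K y e) n v = 0 → ∃ w, mD G XX (MM G K y e) (n+1) w = v := by
    intro n
    induction n using Nat.strong_induction_on with
    | _ n ih =>
      match n with
      | 0 => exact exact1 h hgen hup
      | 1 => exact exact_rank h hK hgen hup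
      | 2 => exact exact2 h hK hgen
      | 3 => exact exact3 hgen
      | (n + 4) => exact ih n (by omega)
  have H3 : ∀ v, augX G (XX 0) (mD G XX (MM G K y e) 0 v) = 0 := by
    intro v
    exact (augX_unit (D0 G y e v)).trans (aug_D0 v)
  have H4 : ∀ v, augX G (XX 0) v = 0 → ∃ w, mD G XX (MM G K y e) 0 w = v := by
    intro v hv
    exact exact0 hgen v ((augX_unit v).symm.trans hv)
  exact bridge G XX (MM G K y e) H1 H2 H3 H4 n

theorem aug_geo (k : ℕ) (g : G) : aug G (geo G k g) = k := by simp [geo, aug_gr]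

noncomputable def E0 (y e : G) : (Bool →₀ ℤ) →ₗ[ℤ] (Unit →₀ ℤ) :=
  Finsupp.linearCombination ℤ (fun i => (A0 G y e i).mapRange (aug G) (map_zero _))
noncomputable def E1 (K : ℕ) (y e : G) : (Bool →₀ ℤ) →ₗ[ℤ] (Bool →₀ ℤ) :=
  Finsupp.linearCombination ℤ (fun i => (A1 G K y e i).mapRange (aug G) (map_zero _))
noncomputable def E2 (K : ℕ) (y e : G) : (Unit →₀ ℤ) →ₗ[ℤ] (Bool →₀ ℤ) :=
  Finsupp.linearCombination ℤ (fun i => (A2 G K y e i).mapRange (aug G) (map_zero _))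
noncomputable def E3 (G : Type) [Group G] [Fintype G] : (Unit →₀ ℤ) →ₗ[ℤ] (Unit →₀ ℤ) :=
  Finsupp.linearCombination ℤ (fun i => (A3 G i).mapRange (aug G) (map_zero _))

theorem E0_eq (v) : E0 (G := G) y e v = 0 := by
  refine Finsupp.ext fun _ => ?_
  rw [E0, lc_bool]; simp [A0, aug_gr]

theorem E2_eq (v) : E2 (G := G) K y e v = 0 := by
  refine Finsupp.ext fun b => ?_
  rw [E2, lc_unit]; cases b <;> simp [A2, aug_gr]

theorem E3_eq [Fintype G] (v) : E3 G v () = v () * (Nat.card G : ℤ) := by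
  rw [E3, lc_unit]; simp [A3, nrm, aug_gr]

theorem E1_true (v) : E1 (G := G) K y e v true = 3 * v true + 3 * v false := by
  rw [E1, lc_bool]; simp [A1, aug_gr, aug_geo]; ring

theorem E1_false (v) : E1 (G := G) K y e v false = -2 * v true + (3 * K - 2) * v false := by
  rw [E1, lc_bool]; simp [A1, aug_gr, aug_geo]; ring

theorem HQ_sub {A B C : Type} [AddCommGroup A] [AddCommGroup B] [AddCommGroup C]
    (f : A →+ B) (g : B →+ C) (h : ∀ x, g x = 0 → x = 0) : Subsingleton (HQ f g) := by
  have : Subsingleton g.ker := ⟨fun a b => Subtype.ext ((h _ a.2).trans (h _ b.2).symm)⟩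
  constructor
  intro a b
  obtain ⟨a, rfl⟩ := QuotientAddGroup.mk_surjective a
  obtain ⟨b, rfl⟩ := QuotientAddGroup.mk_surjective b
  rw [Subsingleton.elim a b]

theorem HQ_equiv {A B C Z : Type} [AddCommGroup A] [AddCommGroup B] [AddCommGroup C]
    [AddCommGroup Z] (f : A →+ B) (g : B →+ C) (hg : ∀ x, g x = 0) (p : B →+ Z)
    (hp : Function.Surjective p) (hk : ∀ x, p x = 0 ↔ ∃ w, f w = x) : Nonempty (HQ f g ≃+ Z) := by
  let p' : g.ker →+ Z := p.comp g.ker.subtype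
  have hs : Function.Surjective p' := fun z => by
    obtain ⟨b, rfl⟩ := hp z
    exact ⟨⟨b, hg b⟩, rfl⟩
  have hker : f.range.addSubgroupOf g.ker = p'.ker := by
    ext ⟨x, hx⟩
    exact (hk x).symm
  exact ⟨(QuotientAddGroup.quotientAddEquivOfEq hker).trans
    (QuotientAddGroup.quotientKerEquivOfSurjective p' hs)⟩

theorem calc0 [Fintype G] (h : TRel K y e) (hK : Odd K)
    (hgen : Subgroup.closure {y, e} = ⊤) (hup : UP K y e) :
    Nonempty (groupHomologyTriv G ℤ 0 ≃+ ℤ) := by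
  obtain ⟨a⟩ := concrete_bridge h hK hgen hup 0
  obtain ⟨b⟩ := HQ_equiv (E0 (G := G) y e).toAddMonoidHom (0 : (Unit →₀ ℤ) →+ (Unit →₀ ℤ))
    (fun _ => rfl) (Finsupp.applyAddHom ()) (fun z => ⟨Finsupp.single () z, by simp⟩) (fun x => by
      constructor
      · intro hx
        exact ⟨0, by rw [map_zero]; exact Finsupp.ext fun _ => hx.symm⟩
      · rintro ⟨w, rfl⟩
        change (E0 (G := G) y e w) () = 0
        rw [E0_eq]; rfl)
  exact ⟨a.trans b⟩

theorem calcP [Fintype G] : ∀ n,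
    (n % 4 = 0 → Nonempty (HQ (mE G XX (MM G K y e) (n + 1)).toAddMonoidHom
      (mE G XX (MM G K y e) n).toAddMonoidHom ≃+ ZMod (9 * K))) ∧
    (n % 4 = 1 → 0 < K → Subsingleton (HQ (mE G XX (MM G K y e) (n + 1)).toAddMonoidHom
      (mE G XX (MM G K y e) n).toAddMonoidHom)) ∧
    (n % 4 = 2 → Nonempty (HQ (mE G XX (MM G K y e) (n + 1)).toAddMonoidHom
      (mE G XX (MM G K y e) n).toAddMonoidHom ≃+ ZMod (Nat.card G))) ∧
    (n % 4 = 3 → Subsingleton (HQ (mE G XX (MM G K y e) (n + 1)).toAddMonoidHom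
      (mE G XX (MM G K y e) n).toAddMonoidHom)) := by
  intro n
  induction n using Nat.strong_induction_on with
  | _ n ih =>
    match n with
    | 0 =>
      refine ⟨fun _ => ?_, by simp, by simp, by simp⟩
      refine HQ_equiv (E1 (G := G) K y e).toAddMonoidHom (E0 (G := G) y e).toAddMonoidHom
        E0_eq ((Int.castAddHom (ZMod (9 * K))).comp
          (2 • Finsupp.applyAddHom true + 3 • Finsupp.applyAddHom false)) ?_ ?_
      · intro z
        obtain ⟨a, rfl⟩ := ZMod.intCast_surjective z
        exact ⟨Finsupp.single true (-a) + Finsupp.single false a, by simp; ring⟩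
      · intro x
        have : ((Int.castAddHom (ZMod (9 * K))).comp
          (2 • Finsupp.applyAddHom true + 3 • Finsupp.applyAddHom false)) x =
            ((2 * x true + 3 * x false : ℤ) : ZMod (9 * K)) := by simp
        rw [this, ZMod.intCast_zmod_eq_zero_iff_dvd]
        constructor
        · rintro ⟨t, ht⟩
          push_cast at ht
          obtain ⟨u, hu⟩ : ∃ u, x true = 3 * u := ⟨x true + x false - 3 * (K * t), by linarith⟩
          refine ⟨Finsupp.single true (u - t) + Finsupp.single false t, Finsupp.ext fun b => ?_⟩
          cases b
          · refine (E1_false _).trans ?_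
            simp
            rw [hu] at ht
            linarith
          · refine (E1_true _).trans ?_
            simp
            rw [hu]; ring
        · rintro ⟨w, rfl⟩
          change _ ∣ 2 * E1 (G := G) K y e w true + 3 * E1 (G := G) K y e w false
          rw [E1_true, E1_false]
          exact ⟨w false, by push_cast; ring⟩
    | 1 =>
      refine ⟨by simp, fun _ hK => ?_, by simp, by simp⟩
      refine HQ_sub (E2 (G := G) K y e).toAddMonoidHom (E1 (G := G) K y e).toAddMonoidHom ?_
      intro x hx
      have h1 := DFunLike.congr_fun hx true
      have h2 := DFunLike.congr_fun hx false
      replace h1 := (E1_true x).symm.trans h1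
      replace h2 := (E1_false x).symm.trans h2
      simp only [Finsupp.coe_zero, Pi.zero_apply] at h1 h2
      have h3 : (3 * K : ℤ) * x false = 0 := by linarith
      have h4 : x false = 0 := by
        rcases mul_eq_zero.1 h3 with h | h
        · omega
        · exact h
      refine Finsupp.ext fun b => ?_
      cases b
      · exact h4
      · change x true = 0
        omega
    | 2 =>
      refine ⟨by simp, by simp, fun _ => ?_, by simp⟩
      refine HQ_equiv (E3 G).toAddMonoidHom (E2 (G := G) K y e).toAddMonoidHom
        E2_eq ((Int.castAddHom (ZMod (Nat.card G))).comp (Finsupp.applyAddHom ())) ?_ ?_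
      · intro z
        obtain ⟨a, rfl⟩ := ZMod.intCast_surjective z
        exact ⟨Finsupp.single () a, by simp⟩
      · intro x
        change ((x () : ℤ) : ZMod (Nat.card G)) = 0 ↔ _
        rw [ZMod.intCast_zmod_eq_zero_iff_dvd]
        constructor
        · rintro ⟨t, ht⟩
          refine ⟨Finsupp.single () t, Finsupp.ext fun _ => ?_⟩
          refine (E3_eq _).trans ?_
          rw [ht]
          simp [mul_comm]
        · rintro ⟨w, rfl⟩
          change _ ∣ E3 G w ()
          rw [E3_eq]
          exact dvd_mul_left _ _
    | 3 =>
      refine ⟨by simp, by simp, by simp, fun _ => ?_⟩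
      refine HQ_sub (E0 (G := G) y e).toAddMonoidHom (E3 G).toAddMonoidHom ?_
      intro x hx
      have h1 := (E3_eq x).symm.trans (DFunLike.congr_fun hx ())
      refine Finsupp.ext fun _ => ?_
      rcases mul_eq_zero.1 h1 with h | h
      · exact h
      · have := Nat.card_pos (α := G)
        omega
    | (n + 4) =>
      have := ih n (by omega)
      rw [← Nat.add_mod_right n 4] at this
      exact this

theorem calc_all [Fintype G] (h : TRel K y e) (hK : Odd K)
    (hgen : Subgroup.closure {y, e} = ⊤) (hup : UP K y e) :
    Nonempty (groupHomologyTriv G ℤ 0 ≃+ ℤ) ∧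
    (∀ n : ℕ, 0 < n → n % 4 = 0 → Subsingleton (groupHomologyTriv G ℤ n)) ∧
    (∀ n : ℕ, n % 4 = 1 → Nonempty (groupHomologyTriv G ℤ n ≃+ ZMod (9 * K))) ∧
    (∀ n : ℕ, n % 4 = 2 → Subsingleton (groupHomologyTriv G ℤ n)) ∧
    (∀ n : ℕ, n % 4 = 3 → Nonempty (groupHomologyTriv G ℤ n ≃+ ZMod (Nat.card G))) := by
  refine ⟨calc0 h hK hgen hup, fun n h0 hn => ?_, fun n hn => ?_, fun n hn => ?_, fun n hn => ?_⟩
  all_goals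
    obtain ⟨n, rfl⟩ : ∃ m, n = m + 1 := ⟨n - 1, by omega⟩
    obtain ⟨a⟩ := concrete_bridge h hK hgen hup (n + 1)
    obtain ⟨c1, c2, c3, c4⟩ := calcP (G := G) (K := K) (y := y) (e := e) n
  · exact @Equiv.subsingleton _ _ a.toEquiv (c4 (by omega))
  · obtain ⟨b⟩ := c1 (by omega)
    exact ⟨a.trans b⟩
  · exact @Equiv.subsingleton _ _ a.toEquiv (c2 (by omega) hK.pos)
  · obtain ⟨b⟩ := c3 (by omega)
    exact ⟨a.trans b⟩

end concrete


section grp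

/-- The relations of the binary tetrahedral presentation, in an arbitrary group. -/
structure QRel {H : Type} [Group H] (N : ℕ) (p q z : H) : Prop where
  a1 : p ^ 2 = q ^ 2
  a2 : (p * q) ^ 2 = q ^ 2
  a3 : z * p * z⁻¹ = q
  a4 : z * q * z⁻¹ = p * q
  a5 : z ^ N = 1

namespace QRel
variable {H : Type} [Group H] {N : ℕ} {p q z : H}

theorem pqp (h : QRel N p q z) : p * q * p = q := by
  have := h.a2
  simp only [pow_two, ← mul_assoc] at this
  exact mul_right_cancel this

theorem qpq (h : QRel N p q z) : q * p * q = p := by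
  have := h.a2.trans h.a1.symm
  simp only [pow_two, mul_assoc] at this
  simpa [mul_assoc] using mul_left_cancel this

theorem p4 (h : QRel N p q z) : p ^ 4 = 1 := by
  have h1 : q⁻¹ * p * q = p⁻¹ := by
    have := h.pqp
    rw [eq_inv_iff_mul_eq_one]
    calc q⁻¹ * p * q * p = q⁻¹ * (p * q * p) := by group
      _ = 1 := by rw [this]; group
  have h2 : q⁻¹ * p ^ 2 * q = (p ^ 2)⁻¹ := by
    calc q⁻¹ * p ^ 2 * q = (q⁻¹ * p * q) * (q⁻¹ * p * q) := by simp [pow_succ, mul_assoc]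
      _ = (p ^ 2)⁻¹ := by rw [h1]; group
  have h3 : q⁻¹ * p ^ 2 * q = p ^ 2 := by rw [h.a1]; group
  rw [h3, eq_inv_iff_mul_eq_one, ← pow_add] at h2
  exact h2

theorem cqn (h : QRel N p q z) : Commute (p ^ 2) q := by
  rw [h.a1]; exact (Commute.refl q).pow_left 2

theorem czn (h : QRel N p q z) : Commute (p ^ 2) z := by
  have : z * p ^ 2 * z⁻¹ = p ^ 2 := by
    calc z * p ^ 2 * z⁻¹ = (z * p * z⁻¹) ^ 2 := by simp [pow_succ, mul_assoc]
      _ = p ^ 2 := by rw [h.a3, h.a1]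
  exact (mul_inv_eq_iff_eq_mul.1 this).symm

theorem czp (h : QRel N p q z) : Commute (z ^ 3) p := by
  have : z ^ 3 * p * (z ^ 3)⁻¹ = p := by
    calc z ^ 3 * p * (z ^ 3)⁻¹ = z * (z * (z * p * z⁻¹) * z⁻¹) * z⁻¹ := by simp [pow_succ, mul_assoc]
      _ = (z * p * z⁻¹) * (z * q * z⁻¹) := by
        rw [h.a3, h.a4, show z * (p * q) * z⁻¹ = (z * p * z⁻¹) * (z * q * z⁻¹) by group, h.a3, h.a4]
      _ = p := by rw [h.a3, h.a4, ← mul_assoc, h.qpq]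
  exact mul_inv_eq_iff_eq_mul.1 this

theorem n2 (h : QRel N p q z) : (p ^ 2) ^ 2 = 1 := by rw [← pow_mul]; exact h.p4

theorem npow_odd (h : QRel N p q z) {k : ℕ} (hk : Odd k) : (p ^ 2) ^ k = p ^ 2 := by
  obtain ⟨j, rfl⟩ := hk
  rw [pow_succ, pow_mul, h.n2, one_pow, one_mul]

theorem npow_even (h : QRel N p q z) {k : ℕ} (hk : Even k) : (p ^ 2) ^ k = 1 := by
  obtain ⟨j, rfl⟩ := hk
  rw [← two_mul, pow_mul, h.n2, one_pow]

theorem hpow {K : ℕ} (hK : Odd K) (h : QRel (9 * K) p q z) :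
    (z ^ 3 * p ^ 2) ^ (3 * K) = p ^ 2 := by
  rw [(h.czn.symm.pow_left 3).mul_pow, ← pow_mul, show 3 * (3 * K) = 9 * K by ring, h.a5, one_mul]
  exact h.npow_odd (Odd.mul (by decide) hK)

theorem ypow (h : QRel N p q z) : (z * p ^ 2) ^ 3 = z ^ 3 * p ^ 2 := by
  rw [h.czn.symm.mul_pow, h.npow_odd (by decide)]

theorem e2 {K m : ℕ} (hK : Odd K) (hm : 2 * m = 3 * K + 1) (h : QRel (9 * K) p q z) :
    (p⁻¹ * (z ^ 3 * p ^ 2) ^ m) ^ 2 = z ^ 3 * p ^ 2 := by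
  have c : Commute (z ^ 3 * p ^ 2) p := h.czp.mul_left ((Commute.refl p).pow_left 2)
  rw [((c.pow_left m).symm.inv_left).mul_pow, ← pow_mul, mul_comm m, hm, pow_succ _ (3 * K), hpow hK h,
    ← mul_assoc]
  simp

theorem zpi (h : QRel N p q z) : (z * p⁻¹) ^ 3 = z ^ 3 := by
  have e1 : z * p⁻¹ * z⁻¹ = q⁻¹ := by rw [← h.a3]; group
  have e2 : z * q⁻¹ * z⁻¹ = (p * q)⁻¹ := by rw [← h.a4]; group
  have c := h.czp.inv_right
  calc (z * p⁻¹) ^ 3 = (z * p⁻¹ * z⁻¹) * (z * (z * p⁻¹ * z⁻¹) * z⁻¹) * (z ^ 3 * p⁻¹) := by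
        simp only [pow_succ, pow_zero, one_mul]; group
    _ = (q ^ 2)⁻¹ * (p ^ 2)⁻¹ * z ^ 3 := by
        rw [e1, e2, c.eq]; simp [pow_succ, mul_assoc]
    _ = z ^ 3 := by rw [← h.a1, ← mul_inv_rev, ← pow_add, h.p4]; simp

theorem trel {K m : ℕ} (hK : Odd K) (hm : 2 * m = 3 * K + 1) (h : QRel (9 * K) p q z) :
    TRel K (z * p ^ 2) (p⁻¹ * (z ^ 3 * p ^ 2) ^ m) := by
  refine ⟨h.ypow.trans (h.e2 hK hm).symm, ?_⟩
  obtain ⟨j, hj⟩ := hK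
  have hK : Odd K := ⟨j, hj⟩
  have cp : Commute (z ^ 3 * p ^ 2) p := h.czp.mul_left ((Commute.refl p).pow_left 2)
  have cz : Commute (z ^ 3 * p ^ 2) z := ((Commute.refl z).pow_left 3).mul_left h.czn
  rw [h.e2 hK hm]
  have hh := h.hpow hK
  have e2 := h.e2 hK hm
  generalize hx : z ^ 3 * p ^ 2 = x at *
  have e1 : (p⁻¹ * x ^ m) ^ K = p⁻¹ * x ^ (m + j) := by
    rw [hj, pow_succ, pow_mul, e2, pow_add, ← mul_assoc, ← mul_assoc]
    rw [((cp.pow_left j).inv_right).eq, mul_assoc, mul_assoc, ← pow_add, ← pow_add, add_comm]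
  have cn : Commute (p ^ 2) (z * p⁻¹) := h.czn.mul_right ((Commute.refl p).pow_left 2).inv_right
  have cx : Commute (z * p⁻¹) (x ^ (m + j)) :=
    ((cz.mul_right cp.inv_right).pow_left _).symm
  have cnx : Commute (p ^ 2) (x ^ (m + j)) := ((cp.pow_right 2).pow_left _).symm
  have e3 : z * p ^ 2 * (p⁻¹ * x ^ (m + j)) = p ^ 2 * ((z * p⁻¹) * x ^ (m + j)) := by
    rw [← h.czn.eq]; group
  rw [e1, e3, (cn.mul_right cnx).mul_pow, cx.mul_pow, h.zpi, ← pow_mul x,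
    show (m + j) * 3 = 3 * K * 2 by omega, pow_mul x, hh, h.n2, h.npow_odd (by decide), mul_one,
    (h.czn.pow_right 3).eq, hx]

theorem of_trel {K : ℕ} (hK : Odd K) {y e : H} (h : TRel K y e) :
    QRel (9 * K) (e ^ (3 * K)) (y * e ^ (3 * K) * y⁻¹) (y * e ^ (6 * K)) := by
  have cy : Commute (e ^ 2) y := by rw [← h.r1]; exact (Commute.refl y).pow_left 3
  have cye : Commute (y ^ 3) e := by rw [h.r1]; exact (Commute.refl e).pow_left 2
  have cc : Commute (e ^ (2 * K)) y := by rw [pow_mul]; exact cy.pow_left K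
  have cn : Commute (e ^ (6 * K)) y := by
    rw [show 6 * K = 2 * (3 * K) by ring, pow_mul]; exact cy.pow_left _
  have k1 : (y * e ^ (3 * K)) ^ 3 = y ^ 3 * e ^ (6 * K) := by
    have : y * e ^ (3 * K) = (y * e ^ K) * e ^ (2 * K) := by
      rw [mul_assoc, ← pow_add]; congr 2; ring
    rw [this, Commute.mul_pow, h.r2, h.r1, ← pow_mul]
    · congr 2; ring
    · exact (cc.mul_right (((Commute.refl e).pow_left _).pow_right _)).symm
  have hn : e ^ (6 * K) = e ^ (3 * K) * e ^ (3 * K) := by rw [← pow_add]; congr 1; ring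
  have cp : Commute (y ^ 3) (e ^ (3 * K)) := cye.pow_right _
  have hz9 : (y ^ 3) ^ (3 * K) = e ^ (6 * K) := by
    rw [h.r1, ← pow_mul]; congr 1; ring
  generalize e ^ (6 * K) = n at *
  generalize e ^ (3 * K) = p at *
  have k2 : (y * p * y⁻¹) * (y * (y * p * y⁻¹) * y⁻¹) = p := by
    have : (y * p) ^ 3 = (y * p * y⁻¹) * (y * (y * p * y⁻¹) * y⁻¹) * (y ^ 3 * p) := by
      simp only [pow_succ, pow_zero, one_mul]; group
    rw [this, cp.eq, (cn.symm.pow_left 3).eq, hn, ← mul_assoc] at k1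
    have k3 := mul_right_cancel k1
    exact mul_right_cancel k3
  have k4 : y ^ 3 * p * (y ^ 3)⁻¹ = p := by rw [cp.eq]; group
  have k5 : p * (y * p * y⁻¹) = y * (y * p * y⁻¹) * y⁻¹ := by
    have e2 : y ^ 2 * ((y * p * y⁻¹) * (y * (y * p * y⁻¹) * y⁻¹)) * (y ^ 2)⁻¹ =
      (y ^ 3 * p * (y ^ 3)⁻¹) * (y * (y ^ 3 * p * (y ^ 3)⁻¹) * y⁻¹) := by group
    rw [k2, k4] at e2
    rw [← e2]; simp [pow_succ, mul_assoc]
  have a1 : p ^ 2 = (y * p * y⁻¹) ^ 2 := by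
    have : (y * p * y⁻¹) ^ 2 = y * (p * p) * y⁻¹ := by simp only [pow_two]; group
    rw [this, ← hn, ← cn.eq, pow_two, ← hn]; group
  have a2 : (p * (y * p * y⁻¹)) ^ 2 = (y * p * y⁻¹) ^ 2 := by
    have : (y * (y * p * y⁻¹) * y⁻¹) ^ 2 = y * (y * p * y⁻¹) ^ 2 * y⁻¹ := by
      simp only [pow_two]; group
    rw [k5, this, ← a1, pow_two, ← hn, ← cn.eq]; group
  have cnp : Commute n p := by rw [hn]; exact (Commute.refl p).mul_left (Commute.refl p)
  have conj : ∀ x, Commute n x → y * n * x * (y * n)⁻¹ = y * x * y⁻¹ := by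
    intro x hx
    rw [mul_assoc y, hx.eq]; group
  have a3 := conj p cnp
  have a4 := (conj (y * p * y⁻¹) ((cn.mul_right cnp).mul_right cn.inv_right)).trans k5.symm
  have q0 : QRel 0 p (y * p * y⁻¹) (y * n) := ⟨a1, a2, a3, a4, pow_zero _⟩
  refine ⟨a1, a2, a3, a4, ?_⟩
  rw [cn.symm.mul_pow, show 9 * K = 3 * (3 * K) by ring, pow_mul y, hz9, ← pow_succ', hn, ← pow_two]
  apply q0.npow_even
  obtain ⟨j, rfl⟩ := hK
  exact ⟨9 * j + 5, by ring⟩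

/-- The monoid of elements `p ^ i * q ^ j`. -/
theorem qp (h : QRel N p q z) (j i : ℕ) : ∃ i', q ^ j * p ^ i = p ^ i' * q ^ j := by
  have h0 : q * p = p ^ 3 * q := by
    have h1 : q * p = p⁻¹ * q := by
      have := h.pqp
      rw [eq_inv_mul_iff_mul_eq, ← mul_assoc, this]
    have h2 : p⁻¹ = p ^ 3 := by
      rw [inv_eq_iff_mul_eq_one, ← pow_succ', h.p4]
    rw [h1, h2]
  have h1 : SemiconjBy q p (p ^ 3) := h0
  induction j generalizing i with
  | zero => exact ⟨i, by simp⟩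
  | succ j ih =>
    obtain ⟨i', hi⟩ := ih (3 * i)
    refine ⟨i', ?_⟩
    rw [pow_succ, mul_assoc, (h1.pow_right i).eq, ← pow_mul, ← mul_assoc, hi, mul_assoc]

/-- The monoid of elements `p ^ i * q ^ j`. -/
def TT (h : QRel N p q z) : Submonoid H where
  carrier := {x | ∃ i j : ℕ, x = p ^ i * q ^ j}
  one_mem' := ⟨0, 0, by simp⟩
  mul_mem' := by
    rintro _ _ ⟨i, j, rfl⟩ ⟨a, b, rfl⟩
    obtain ⟨c, hc⟩ := h.qp j a
    refine ⟨i + c, j + b, ?_⟩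
    rw [pow_add, pow_add, mul_assoc, ← mul_assoc (q ^ j), hc]
    simp only [mul_assoc]

theorem pT (h : QRel N p q z) : p ∈ h.TT := ⟨1, 0, by simp⟩
theorem qT (h : QRel N p q z) : q ∈ h.TT := ⟨0, 1, by simp⟩

theorem Tz (h : QRel N p q z) {x : H} (hx : x ∈ h.TT) : ∃ x' ∈ h.TT, x * z = z * x' := by
  obtain ⟨i, j, rfl⟩ := hx
  have h1 : q * z = z * p := by rw [← h.a3]; group
  have h3 : p = (p * q) * q⁻¹ := by group
  have hq : q⁻¹ = q ^ 3 := by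
    rw [inv_eq_iff_mul_eq_one, ← pow_succ', show 3 + 1 = 2 * 2 by rfl, pow_mul, ← h.a1, h.n2]
  have hp' : p⁻¹ = p ^ 3 := by
    rw [inv_eq_iff_mul_eq_one, ← pow_succ', h.p4]
  have h2 : p * z = z * (q * p ^ 3) := by
    have e1 : (p * q) * z = z * q := by rw [← h.a4]; group
    rw [← hp', ← mul_assoc, ← e1, mul_assoc p, h1]; group
  have s1 : SemiconjBy z (q * p ^ 3) p := h2.symm
  have s2 : SemiconjBy z p q := h1.symm
  exact ⟨_, mul_mem (pow_mem (mul_mem h.qT (pow_mem h.pT 3)) i) (pow_mem h.pT j),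
    ((s1.pow_right i).mul_right (s2.pow_right j)).eq.symm⟩

/-- Normal form for elements of a group generated by `p, q, z`. -/
theorem normal_form (h : QRel N p q z) (hN : 0 < N) (hc : Subgroup.closure {p, q, z} = ⊤) (g : H) :
    ∃ k, k < N ∧ ∃ i, i < 4 ∧ ∃ j, j < 2 ∧ g = z ^ k * (p ^ i * q ^ j) := by
  let P : H → Prop := fun g => ∃ k : ℕ, ∃ x ∈ h.TT, g = z ^ k * x
  have stp : ∀ g s, s ∈ ({p, q, z} : Set H) → P g → P (g * s) := by
    rintro _ s hs ⟨k, x, hx, rfl⟩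
    rcases hs with rfl | rfl | rfl
    · exact ⟨k, _, mul_mem hx h.pT, mul_assoc _ _ _⟩
    · exact ⟨k, _, mul_mem hx h.qT, mul_assoc _ _ _⟩
    · obtain ⟨x', hx', e⟩ := h.Tz hx
      exact ⟨k + 1, x', hx', by rw [mul_assoc, e, pow_succ, mul_assoc]⟩
  have stps : ∀ g s, s ∈ ({p, q, z} : Set H) → P g → ∀ m : ℕ, P (g * s ^ m) := by
    intro g s hs hg m
    induction m with
    | zero => simpa using hg
    | succ m ih => rw [pow_succ, ← mul_assoc]; exact stp _ _ hs ih
  have inv : ∀ s, s ∈ ({p, q, z} : Set H) → ∃ m : ℕ, s⁻¹ = s ^ m := by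
    rintro s (rfl | rfl | rfl)
    · exact ⟨3, by rw [inv_eq_iff_mul_eq_one, ← pow_succ', h.p4]⟩
    · refine ⟨3, ?_⟩
      rw [inv_eq_iff_mul_eq_one, ← pow_succ', show 3 + 1 = 2 * 2 by rfl, pow_mul, ← h.a1, h.n2]
    · refine ⟨N - 1, ?_⟩
      rw [inv_eq_iff_mul_eq_one, ← pow_succ', Nat.sub_add_cancel hN, h.a5]
  have hP : P g := by
    have hg : g ∈ Subgroup.closure {p, q, z} := by rw [hc]; trivial
    induction hg using Subgroup.closure_induction_right with
    | one => exact ⟨0, 1, one_mem _, by simp⟩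
    | mul_right x hx y hy ih => exact stp _ _ hy ih
    | mul_inv_cancel x hx y hy ih =>
      obtain ⟨m, hm⟩ := inv y hy
      rw [hm]; exact stps _ _ hy ih m
  obtain ⟨k, x, ⟨i, j, rfl⟩, rfl⟩ := hP
  refine ⟨k % N, Nat.mod_lt _ hN, (i + 2 * (j / 2)) % 4, Nat.mod_lt _ (by norm_num), j % 2,
    Nat.mod_lt _ (by norm_num), ?_⟩
  have e1 : z ^ k = z ^ (k % N) := pow_eq_pow_mod k h.a5
  have e2 : p ^ ((i + 2 * (j / 2)) % 4) = p ^ (i + 2 * (j / 2)) := (pow_eq_pow_mod _ h.p4).symm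
  have e3 : q ^ j = p ^ (2 * (j / 2)) * q ^ (j % 2) := by
    rw [pow_mul, h.a1, ← pow_mul, ← pow_add, Nat.div_add_mod]
  rw [e1, e2, e3, pow_add, mul_assoc (p ^ i)]

end QRel

section pres
variable (s : ℕ)

theorem rels_iff {H : Type} [Group H] (f : Gen → H) :
    (∀ r ∈ rels s, FreeGroup.lift f r = 1) ↔ QRel (3 ^ s) (f Gen.p) (f Gen.q) (f Gen.z) := by
  constructor
  · intro hr
    refine ⟨?_, ?_, ?_, ?_, ?_⟩
    · have := hr (FreeGroup.of Gen.p ^ 2 * (FreeGroup.of Gen.q ^ 2)⁻¹) (by simp [rels])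
      simp only [map_mul, map_inv, map_pow, FreeGroup.lift_apply_of] at this
      exact mul_inv_eq_one.1 this
    · have := hr ((FreeGroup.of Gen.p * FreeGroup.of Gen.q) ^ 2 * (FreeGroup.of Gen.q ^ 2)⁻¹)
        (by simp [rels])
      simp only [map_mul, map_inv, map_pow, FreeGroup.lift_apply_of] at this
      exact mul_inv_eq_one.1 this
    · have := hr (FreeGroup.of Gen.z * FreeGroup.of Gen.p * (FreeGroup.of Gen.z)⁻¹ *
        (FreeGroup.of Gen.q)⁻¹) (by simp [rels])
      simp only [map_mul, map_inv, map_pow, FreeGroup.lift_apply_of] at this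
      exact mul_inv_eq_one.1 this
    · have := hr (FreeGroup.of Gen.z * FreeGroup.of Gen.q * (FreeGroup.of Gen.z)⁻¹ *
        (FreeGroup.of Gen.p * FreeGroup.of Gen.q)⁻¹) (by simp [rels])
      simp only [map_mul, map_inv, map_pow, FreeGroup.lift_apply_of] at this
      exact mul_inv_eq_one.1 (by simpa only [mul_inv_rev] using this)
    · have := hr (FreeGroup.of Gen.z ^ (3 ^ s)) (by simp [rels])
      simpa only [map_pow, FreeGroup.lift_apply_of] using this
  · intro h r hr
    rcases hr with rfl | rfl | rfl | rfl | rfl <;>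
      simp only [map_mul, map_inv, map_pow, FreeGroup.lift_apply_of]
    · rw [h.a1, mul_inv_cancel]
    · rw [h.a2, mul_inv_cancel]
    · rw [h.a3, mul_inv_cancel]
    · rw [h.a4, mul_inv_cancel]
    · exact h.a5

theorem pres_rel : QRel (3 ^ s) (PresentedGroup.of Gen.p : PresentedGroup (rels s))
    (PresentedGroup.of Gen.q) (PresentedGroup.of Gen.z) := by
  rw [← rels_iff s (fun x => (PresentedGroup.of x : PresentedGroup (rels s)))]
  intro r hr
  have : FreeGroup.lift (fun x => (PresentedGroup.of x : PresentedGroup (rels s))) =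
      PresentedGroup.mk (rels s) := by
    ext x; simp [PresentedGroup.of]
  rw [this]
  exact PresentedGroup.one_of_mem hr

theorem pres_closure : Subgroup.closure {(PresentedGroup.of Gen.p : PresentedGroup (rels s)),
    PresentedGroup.of Gen.q, PresentedGroup.of Gen.z} = ⊤ := by
  rw [eq_top_iff, ← PresentedGroup.closure_range_of, Subgroup.closure_le]
  rintro _ ⟨x, rfl⟩
  apply Subgroup.subset_closure
  cases x <;> simp

theorem pres_lift {H : Type} [Group H] {p q z : H} (h : QRel (3 ^ s) p q z) :
    ∃ φ : PresentedGroup (rels s) →* H, φ (PresentedGroup.of Gen.p) = p ∧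
      φ (PresentedGroup.of Gen.q) = q ∧ φ (PresentedGroup.of Gen.z) = z := by
  let f : Gen → H := fun x => match x with | .p => p | .q => q | .z => z
  refine ⟨PresentedGroup.toGroup (f := f) ((rels_iff s f).2 h), ?_, ?_, ?_⟩ <;>
  exact PresentedGroup.toGroup.of _

theorem chi : QRel (3 ^ s) (1 : Multiplicative (ZMod (3 ^ s))) 1 (Multiplicative.ofAdd 1) := by
  refine ⟨by simp, by simp, by simp, by simp, ?_⟩
  rw [← ofAdd_nsmul]
  simp

/-- The image of `p` in `SL₂(𝔽₃)`. -/
def slp : Matrix.SpecialLinearGroup (Fin 2) (ZMod 3) := ⟨!![0, -1; 1, 0], by decide⟩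
/-- The image of `q` in `SL₂(𝔽₃)`. -/
def slq : Matrix.SpecialLinearGroup (Fin 2) (ZMod 3) := ⟨!![1, 1; 1, -1], by decide⟩
/-- The image of `z` in `SL₂(𝔽₃)`. -/
def slz : Matrix.SpecialLinearGroup (Fin 2) (ZMod 3) := ⟨!![1, 1; 0, 1], by decide⟩

theorem sl_rel (hs : 1 ≤ s) : QRel (3 ^ s) slp slq slz := by
  refine ⟨by decide, by decide, by decide, by decide, ?_⟩
  obtain ⟨t, rfl⟩ : ∃ t, s = t + 1 := ⟨s - 1, by omega⟩
  rw [pow_succ', pow_mul, show slz ^ 3 = 1 by decide, one_pow]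

theorem sl_inj : ∀ i i' : Fin 4, ∀ j j' : Fin 2,
    slp ^ (i : ℕ) * slq ^ (j : ℕ) = slp ^ (i' : ℕ) * slq ^ (j' : ℕ) → i = i' ∧ j = j' := by
  decide

theorem pres_bij (hs : 1 ≤ s) : Function.Bijective
    (fun t : Fin (3 ^ s) × Fin 4 × Fin 2 =>
      ((PresentedGroup.of Gen.z) ^ (t.1 : ℕ) * ((PresentedGroup.of Gen.p) ^ (t.2.1 : ℕ) *
        (PresentedGroup.of Gen.q) ^ (t.2.2 : ℕ)) : PresentedGroup (rels s))) := by
  constructor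
  · rintro ⟨k, i, j⟩ ⟨k', i', j'⟩ h
    simp only at h
    obtain ⟨φ, hp, hq, hz⟩ := pres_lift s (chi s)
    obtain ⟨ψ, hp', hq', hz'⟩ := pres_lift s (sl_rel s hs)
    have h1 := congrArg φ h
    simp only [map_mul, map_pow, hp, hq, hz, one_pow, mul_one, ← ofAdd_nsmul, nsmul_eq_mul] at h1
    have h2 : ((k : ℕ) : ZMod (3 ^ s)) = ((k' : ℕ) : ZMod (3 ^ s)) := Multiplicative.ofAdd.injective h1
    rw [ZMod.natCast_eq_natCast_iff', Nat.mod_eq_of_lt k.2, Nat.mod_eq_of_lt k'.2] at h2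
    obtain rfl := Fin.ext h2
    have h3 := congrArg ψ (mul_left_cancel h)
    simp only [map_mul, map_pow, hp', hq'] at h3
    obtain ⟨rfl, rfl⟩ := sl_inj _ _ _ _ h3
    rfl
  · intro g
    obtain ⟨k, hk, i, hi, j, hj, rfl⟩ :=
      (pres_rel s).normal_form (pow_pos (by norm_num) s) (pres_closure s) g
    exact ⟨(⟨k, hk⟩, ⟨i, hi⟩, ⟨j, hj⟩), rfl⟩

theorem pres_card (hs : 1 ≤ s) : Nat.card (PresentedGroup (rels s)) = 8 * 3 ^ s := by
  rw [← Nat.card_congr (Equiv.ofBijective _ (pres_bij s hs))]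
  simp
  ring

theorem pres_finite (hs : 1 ≤ s) : Finite (PresentedGroup (rels s)) :=
  Finite.of_equiv _ (Equiv.ofBijective _ (pres_bij s hs))

theorem pres_ab : Nonempty (Abelianization (PresentedGroup (rels s)) ≃*
    Multiplicative (ZMod (3 ^ s))) := by
  obtain ⟨φ, hp, hq, hz⟩ := pres_lift s (chi s)
  refine ⟨MulEquiv.ofBijective (Abelianization.lift φ) ⟨?_, ?_⟩⟩
  · rw [injective_iff_map_eq_one]
    intro a ha
    obtain ⟨g, rfl⟩ := QuotientGroup.mk_surjective a
    change Abelianization.lift φ (Abelianization.of g) = 1 at ha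
    change Abelianization.of g = 1
    rw [Abelianization.lift_apply_of] at ha
    have hr := pres_rel s
    obtain ⟨k, hk, i, hi, j, hj, rfl⟩ :=
      hr.normal_form (pow_pos (by norm_num) s) (pres_closure s) g
    simp only [map_mul, map_pow, hp, hq, hz, one_pow, mul_one, ← ofAdd_nsmul, nsmul_eq_mul] at ha
    have h2 : ((k : ℕ) : ZMod (3 ^ s)) = 0 := Multiplicative.ofAdd.injective ha
    rw [ZMod.natCast_eq_zero_iff] at h2
    obtain rfl := Nat.eq_zero_of_dvd_of_lt h2 hk
    have e1 := congrArg Abelianization.of hr.a3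
    have e2 := congrArg Abelianization.of hr.a4
    simp only [map_mul, map_inv, mul_inv_cancel_comm] at e1 e2
    have e3 := right_eq_mul.1 e2
    simp only [map_mul, map_pow]
    rw [← e1, e3]; simp
  · intro m
    obtain ⟨k, hk⟩ := ZMod.intCast_surjective (Multiplicative.toAdd m)
    refine ⟨Abelianization.of (PresentedGroup.of Gen.z) ^ k, ?_⟩
    rw [map_zpow, Abelianization.lift_apply_of, hz, ← ofAdd_zsmul]
    apply Multiplicative.toAdd.injective
    simp [← hk]

theorem pres_up {K m : ℕ} (hK : Odd K) (hm : 2 * m = 3 * K + 1) (h9 : 3 ^ s = 9 * K) :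
    UP K (PresentedGroup.of Gen.z * PresentedGroup.of Gen.p ^ 2 : PresentedGroup (rels s))
      ((PresentedGroup.of Gen.p)⁻¹ *
        (PresentedGroup.of Gen.z ^ 3 * PresentedGroup.of Gen.p ^ 2) ^ m) := by
  intro H _ y e h
  have hq := QRel.of_trel hK h
  rw [← h9] at hq
  obtain ⟨φ, hp, _, hz⟩ := pres_lift s hq
  have cy : Commute (e ^ 2) y := by rw [← h.r1]; exact (Commute.refl y).pow_left 3
  have cn : Commute y (e ^ (6 * K)) := by
    rw [show 6 * K = 2 * (3 * K) by ring, pow_mul]; exact (cy.pow_left _).symm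
  have hn : (e ^ (3 * K)) ^ 2 = e ^ (6 * K) := by rw [← pow_mul]; congr 1; ring
  have hn2 : e ^ (6 * K) * e ^ (6 * K) = 1 := by rw [← hn, ← pow_two, hq.n2]
  have e1 : y * e ^ (6 * K) * (e ^ (3 * K)) ^ 2 = y := by
    rw [hn, mul_assoc, hn2, mul_one]
  refine ⟨φ, by simp only [map_mul, map_pow, hp, hz, e1], ?_⟩
  have e2 : (y * e ^ (6 * K)) ^ 3 * (e ^ (3 * K)) ^ 2 = e ^ 2 := by
    rw [← hq.ypow, e1, h.r1]
  simp only [map_mul, map_pow, map_inv, hp, hz, e2]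
  rw [← pow_mul, hm, pow_succ, inv_mul_cancel_left]

theorem pres_gen (m : ℕ) :
    Subgroup.closure {(PresentedGroup.of Gen.z * PresentedGroup.of Gen.p ^ 2 :
        PresentedGroup (rels s)),
      (PresentedGroup.of Gen.p)⁻¹ *
        (PresentedGroup.of Gen.z ^ 3 * PresentedGroup.of Gen.p ^ 2) ^ m} = ⊤ := by
  have hr := pres_rel s
  rw [← top_le_iff, ← pres_closure s, Subgroup.closure_le]
  rw [← hr.ypow]
  generalize PresentedGroup.of Gen.p = p at *
  generalize PresentedGroup.of Gen.q = q at *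
  generalize PresentedGroup.of Gen.z = z at *
  generalize hS : Subgroup.closure {z * p ^ 2, p⁻¹ * ((z * p ^ 2) ^ 3) ^ m} = S
  have hy : z * p ^ 2 ∈ S := by rw [← hS]; exact Subgroup.subset_closure (by simp)
  have he : p⁻¹ * ((z * p ^ 2) ^ 3) ^ m ∈ S := by
    rw [← hS]; exact Subgroup.subset_closure (by simp)
  have hp : p ∈ S := by
    have := S.mul_mem (S.pow_mem (S.pow_mem hy 3) m) (S.inv_mem he)
    simpa using this
  have hz : z ∈ S := by
    have := S.mul_mem hy (S.inv_mem (S.pow_mem hp 2))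
    simpa using this
  have hq : q ∈ S := by
    rw [← hr.a3]; exact S.mul_mem (S.mul_mem hz hp) (S.inv_mem hz)
  rintro x (rfl | rfl | rfl)
  · exact hp
  · exact hq
  · exact hz

end pres

end grp

/-- the integral homology of the generalized binary tetrahedral group
`G = P'_{8·3^s}` is `ℤ` in degree `0`, `ℤ/3^s` in degrees `≡ 1 (mod 4)`, `ℤ/8·3^s` in degrees
`≡ 3 (mod 4)` and `0` in positive even degrees; in particular the abelianization of `G` is
cyclic of order `3^s`. -/
theorem stmt15 (s : ℕ) (hs : 2 ≤ s) :
    Nonempty (groupHomologyTriv (PresentedGroup (rels s)) ℤ 0 ≃+ ℤ) ∧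
    (∀ n : ℕ, 0 < n → n % 4 = 0 →
      Subsingleton (groupHomologyTriv (PresentedGroup (rels s)) ℤ n)) ∧
    (∀ n : ℕ, n % 4 = 1 →
      Nonempty (groupHomologyTriv (PresentedGroup (rels s)) ℤ n ≃+ ZMod (3 ^ s))) ∧
    (∀ n : ℕ, n % 4 = 2 →
      Subsingleton (groupHomologyTriv (PresentedGroup (rels s)) ℤ n)) ∧
    (∀ n : ℕ, n % 4 = 3 →
      Nonempty (groupHomologyTriv (PresentedGroup (rels s)) ℤ n ≃+ ZMod (8 * 3 ^ s))) ∧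
    IsCyclic (Abelianization (PresentedGroup (rels s))) ∧
    Nat.card (Abelianization (PresentedGroup (rels s))) = 3 ^ s := by
  have h9 : 3 ^ s = 9 * 3 ^ (s - 2) := by
    rw [show (9 : ℕ) = 3 ^ 2 by norm_num, ← pow_add]; congr 1; omega
  have hK : Odd (3 ^ (s - 2)) := Odd.pow (by decide)
  obtain ⟨m, hm⟩ : ∃ m, 2 * m = 3 * 3 ^ (s - 2) + 1 := by
    obtain ⟨j, hj⟩ := hK
    exact ⟨3 * j + 2, by rw [hj]; ring⟩
  have hfin := pres_finite s (by omega)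
  letI : Fintype (PresentedGroup (rels s)) := Fintype.ofFinite _
  have hr := pres_rel s
  rw [h9] at hr
  obtain ⟨c0, c1, c2, c3, c4⟩ := calc_all (hr.trel hK hm) hK (pres_gen s m) (pres_up s hK hm h9)
  rw [pres_card s (by omega)] at c4
  rw [← h9] at c2
  obtain ⟨E⟩ := pres_ab s
  refine ⟨c0, c1, c2, c3, c4, ?_, ?_⟩
  · exact isCyclic_of_surjective E.symm E.symm.surjective
  · rw [Nat.card_congr E.toEquiv]
    exact Nat.card_zmod _
end

section
/- Let s ≥ 2 and let G = P'_{8·3^s} be the generalized binary tetrahedral group. For every n ≥ 0, the group homology of G with coefficients in the trivial G-module ℤ/3ℤ satisfies H_n(G; ℤ/3ℤ) ≅ ℤ/3ℤ. -/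
section GroupPart
variable (s : ℕ)

local notation "GG" => PresentedGroup (rels s)

def gp : PresentedGroup (rels s) := PresentedGroup.of Gen.p
def gq : PresentedGroup (rels s) := PresentedGroup.of Gen.q
def gz : PresentedGroup (rels s) := PresentedGroup.of Gen.z

lemma rel_pq : gp s ^ 2 = gq s ^ 2 := by
  have := PresentedGroup.one_of_mem (rels := rels s)
    (x := FreeGroup.of Gen.p ^ 2 * (FreeGroup.of Gen.q ^ 2)⁻¹) (by simp [rels])
  exact mul_inv_eq_one.1 this

lemma rel_pqpq : (gp s * gq s) ^ 2 = gq s ^ 2 := by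
  have := PresentedGroup.one_of_mem (rels := rels s)
    (x := (FreeGroup.of Gen.p * FreeGroup.of Gen.q) ^ 2 * (FreeGroup.of Gen.q ^ 2)⁻¹)
    (by simp [rels])
  exact mul_inv_eq_one.1 this

lemma rel_zp : gz s * gp s * (gz s)⁻¹ = gq s := by
  have := PresentedGroup.one_of_mem (rels := rels s)
    (x := FreeGroup.of Gen.z * FreeGroup.of Gen.p * (FreeGroup.of Gen.z)⁻¹ *
     (FreeGroup.of Gen.q)⁻¹)
    (by simp [rels])
  exact mul_inv_eq_one.1 this

lemma rel_zq : gz s * gq s * (gz s)⁻¹ = gp s * gq s := by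
  have := PresentedGroup.one_of_mem (rels := rels s)
    (x := FreeGroup.of Gen.z * FreeGroup.of Gen.q * (FreeGroup.of Gen.z)⁻¹ *
     (FreeGroup.of Gen.p * FreeGroup.of Gen.q)⁻¹)
    (by simp [rels])
  exact mul_inv_eq_one.1 this

lemma rel_z : gz s ^ (3 ^ s) = 1 := by
  have := PresentedGroup.one_of_mem (rels := rels s)
    (x := FreeGroup.of Gen.z ^ (3 ^ s))
    (by simp [rels])
  exact this

/-- The projection to the cyclic group. -/
def phi : PresentedGroup (rels s) →* Multiplicative (ZMod (3 ^ s)) :=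
  PresentedGroup.toGroup (f := fun
    | Gen.p => 1
    | Gen.q => 1
    | Gen.z => Multiplicative.ofAdd 1) (by
    intro r hr
    simp only [rels, Set.mem_insert_iff, Set.mem_singleton_iff] at hr
    rcases hr with rfl | rfl | rfl | rfl | rfl <;> simp
    rw [← ofAdd_nsmul]
    simp)

lemma phi_p : phi s (gp s) = 1 := PresentedGroup.toGroup.of _
lemma phi_q : phi s (gq s) = 1 := PresentedGroup.toGroup.of _
lemma phi_z : phi s (gz s) = Multiplicative.ofAdd 1 := PresentedGroup.toGroup.of _

lemma qpq {G : Type*} [Group G] {p q : G} (h1 : p ^ 2 = q ^ 2) (h2 : (p * q) ^ 2 = q ^ 2) :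
    p ^ 4 = 1 ∧ p * q = q * p⁻¹ := by
  have a : p * q * p = q := by
    have : p * q * p * q = q * q := by simpa [pow_two, mul_assoc] using h2
    exact mul_right_cancel this
  have b : p * q = q * p⁻¹ := by rw [eq_mul_inv_iff_mul_eq]; exact a
  have c : p * p * q = q * (p⁻¹ * p⁻¹) := by
    rw [mul_assoc, b, ← mul_assoc, b, mul_assoc]
  have d : p * p * q = q * (p * p) := by
    have : p * p = q * q := by simpa [pow_two] using h1
    rw [this, mul_assoc]
  have e : p⁻¹ * p⁻¹ = p * p := mul_left_cancel (c.symm.trans d)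
  refine ⟨?_, b⟩
  calc p ^ 4 = (p * p) * (p * p) := by rw [← pow_two, ← pow_two, ← pow_mul]
    _ = (p⁻¹ * p⁻¹) * (p * p) := by rw [e]
    _ = 1 := by group

lemma zpow_comm_q {G : Type*} [Group G] {p q : G} (b : p * q = q * p⁻¹) (i : ℤ) :
    p ^ i * q = q * p ^ (-i) := by
  have : SemiconjBy q p⁻¹ p := b.symm
  have := this.zpow_right i
  rw [zpow_neg, ← inv_zpow]
  exact this.eq.symm

/-- Finite subgroup of order dividing 8 -/
lemma exists_sub {G : Type*} [Group G] {p q : G} (h1 : p ^ 2 = q ^ 2)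
    (h2 : (p * q) ^ 2 = q ^ 2) : Finite (Subgroup.closure {p, q}) ∧
      Nat.card (Subgroup.closure {p, q}) ∣ 8 := by
  obtain ⟨h4, b⟩ := qpq h1 h2
  have key : ∀ i j : ℤ, ((i : ZMod 4) = (j : ZMod 4)) → p ^ i = p ^ j := by
    intro i j h
    rw [ZMod.intCast_eq_intCast_iff_dvd_sub] at h
    obtain ⟨c, hc⟩ := h
    have : j = i + 4 * c := by push_cast at hc; linarith
    rw [this, zpow_add, zpow_mul]
    have : p ^ (4:ℤ) = 1 := by exact_mod_cast h4
    simp [this]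
  have cc : ∀ i : ZMod 4, ((i.cast : ℤ) : ZMod 4) = i := fun i => ZMod.intCast_zmod_cast i
  have k1 : ∀ i j : ZMod 4, p ^ ((i + j).cast : ℤ) = p ^ ((i.cast : ℤ) + (j.cast : ℤ)) := by
    intro i j; apply key; rw [cc]; push_cast; rfl
  have k2 : ∀ i j : ZMod 4, p ^ ((j - i).cast : ℤ) = p ^ (-(i.cast : ℤ) + (j.cast : ℤ)) := by
    intro i j; apply key; rw [cc]; push_cast; ring
  have k3 : ∀ i j : ZMod 4, p ^ (((2 : ℕ) + j - i : ZMod 4).cast : ℤ) =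
      p ^ (((2 : ℕ) : ℤ) + (-(i.cast : ℤ) + (j.cast : ℤ))) := by
    intro i j; apply key; rw [cc]; push_cast; ring
  let f : QuaternionGroup 2 →* G :=
    { toFun := fun
        | .a i => p ^ (ZMod.cast (i : ZMod 4) : ℤ)
        | .xa i => q * p ^ (ZMod.cast (i : ZMod 4) : ℤ)
      map_one' := by
        change p ^ (ZMod.cast (0 : ZMod 4) : ℤ) = 1
        simp
      map_mul' := by
        rintro (i | i) (j | j)
        · change p ^ (ZMod.cast (i + j : ZMod 4) : ℤ) = _ * _
          rw [← zpow_add]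
          exact k1 i j
        · change q * p ^ (ZMod.cast (j - i : ZMod 4) : ℤ) = _ * (_ * _)
          rw [← mul_assoc, zpow_comm_q b, mul_assoc, ← zpow_add]
          exact congrArg (q * ·) (k2 i j)
        · change q * p ^ (ZMod.cast (i + j : ZMod 4) : ℤ) = (_ * _) * _
          rw [mul_assoc, ← zpow_add]
          exact congrArg (q * ·) (k1 i j)
        · change p ^ (ZMod.cast ((2 : ℕ) + j - i : ZMod 4) : ℤ) = (_ * _) * (_ * _)
          rw [mul_assoc, ← mul_assoc _ q, zpow_comm_q b, mul_assoc, ← zpow_add, ← mul_assoc,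
            ← pow_two q, ← h1, ← zpow_natCast p 2, ← zpow_add]
          exact k3 i j }
  have hf : f.range = Subgroup.closure {p, q} := by
    apply le_antisymm
    · rintro _ ⟨i | i, rfl⟩
      · exact Subgroup.zpow_mem _ (Subgroup.subset_closure (by simp)) _
      · exact Subgroup.mul_mem _ (Subgroup.subset_closure (by simp))
          (Subgroup.zpow_mem _ (Subgroup.subset_closure (by simp)) _)
    · rw [Subgroup.closure_le]
      rintro x (rfl | rfl)
      · refine ⟨.a 1, ?_⟩
        change x ^ (ZMod.cast (1 : ZMod 4) : ℤ) = x
        rw [key _ 1 (by simp [cc]), zpow_one]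
      · refine ⟨.xa 0, ?_⟩
        change x * p ^ (ZMod.cast (0 : ZMod 4) : ℤ) = x
        simp
  rw [← hf]
  refine ⟨Finite.of_surjective _ f.rangeRestrict_surjective, ?_⟩
  have := Subgroup.card_range_dvd f
  rwa [Nat.card_eq_fintype_card (α := QuaternionGroup 2), QuaternionGroup.card] at this

lemma ker_le : (phi s).ker ≤ Subgroup.closure {gp s, gq s} := by
  set N := Subgroup.closure {gp s, gq s} with hN
  have hp : gp s ∈ N := Subgroup.subset_closure (by simp)
  have hq : gq s ∈ N := Subgroup.subset_closure (by simp)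
  have hz : ∀ n ∈ N, gz s * n * (gz s)⁻¹ ∈ N := by
    intro n hn
    have : N ≤ N.comap (MulAut.conj (gz s)).toMonoidHom := by
      rw [hN, Subgroup.closure_le]
      rintro x (rfl | rfl)
      · simp [rel_zp, ← hN, hq]
      · simp [rel_zq, ← hN, mul_mem hp hq]
    simpa using this hn
  have hzn : ∀ k : ℕ, ∀ n ∈ N, gz s ^ k * n * (gz s ^ k)⁻¹ ∈ N := by
    intro k
    induction k with
    | zero => simp
    | succ k ih =>
      intro n hn
      have := ih _ (hz n hn)
      simpa [pow_succ, mul_assoc] using this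
  -- every element is n * z ^ k
  have hall : ∀ g : GG, ∃ k : ℕ, ∃ n ∈ N, g = n * gz s ^ k := by
    let S : Submonoid GG :=
      { carrier := {g | ∃ k : ℕ, ∃ n ∈ N, g = n * gz s ^ k}
        one_mem' := ⟨0, 1, one_mem _, by simp⟩
        mul_mem' := by
          rintro _ _ ⟨k, n, hn, rfl⟩ ⟨l, m, hm, rfl⟩
          refine ⟨k + l, n * (gz s ^ k * m * (gz s ^ k)⁻¹), mul_mem hn (hzn k m hm), ?_⟩
          rw [pow_add]; group }
    have hSN : ∀ n ∈ N, n ∈ S := fun n hn => ⟨0, n, hn, by simp⟩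
    have hSz : ∀ k : ℕ, gz s ^ k ∈ S := fun k => ⟨k, 1, one_mem _, by simp⟩
    have hzinv : (gz s)⁻¹ = gz s ^ (3 ^ s - 1) := by
      rw [inv_eq_iff_mul_eq_one, ← pow_succ', Nat.sub_add_cancel (Nat.one_le_pow _ _ (by norm_num)),
        rel_z]
    have hgen : ∀ i : Gen, (PresentedGroup.of i : GG) ∈ S ∧ (PresentedGroup.of i : GG)⁻¹ ∈ S := by
      rintro (_ | _ | _)
      · exact ⟨hSN _ hp, hSN _ (inv_mem hp)⟩
      · exact ⟨hSN _ hq, hSN _ (inv_mem hq)⟩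
      · refine ⟨by simpa using! hSz 1, ?_⟩
        change (gz s)⁻¹ ∈ S
        rw [hzinv]; exact hSz _
    intro g
    have hg : g ∈ Subgroup.closure (Set.range (PresentedGroup.of : Gen → GG)) := by
      rw [PresentedGroup.closure_range_of]; trivial
    change g ∈ S
    have hS : ∀ g : GG, g ∈ Subgroup.closure (Set.range (PresentedGroup.of : Gen → GG)) →
        g ∈ S ∧ g⁻¹ ∈ S := by
      intro g hg
      induction hg using Subgroup.closure_induction with
      | mem x hx => obtain ⟨i, rfl⟩ := hx; exact hgen i
      | one => simp [one_mem]
      | mul x y _ _ hx hy => exact ⟨mul_mem hx.1 hy.1, by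
          rw [mul_inv_rev]; exact mul_mem hy.2 hx.2⟩
      | inv x _ hx => exact ⟨hx.2, by simpa using hx.1⟩
    exact (hS g hg).1
  intro g hg
  obtain ⟨k, n, hn, rfl⟩ := hall g
  have hn1 : phi s n = 1 := by
    have : N ≤ (phi s).ker := by
      rw [hN, Subgroup.closure_le]
      rintro x (rfl | rfl)
      · exact phi_p s
      · exact phi_q s
    exact this hn
  rw [MonoidHom.mem_ker, map_mul, hn1, one_mul, map_pow, phi_z, ← ofAdd_nsmul,
    ofAdd_eq_one] at hg
  have : ((k : ℕ) : ZMod (3 ^ s)) = 0 := by simpa using hg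
  rw [ZMod.natCast_eq_zero_iff] at this
  obtain ⟨c, rfl⟩ := this
  rw [pow_mul, rel_z, one_pow, mul_one]
  exact hn

lemma phi_surj : Function.Surjective (phi s) := by
  intro x
  refine ⟨gz s ^ (ZMod.cast (x.toAdd) : ℤ), ?_⟩
  rw [map_zpow, phi_z, ← ofAdd_zsmul]
  simp

lemma gen_cyc (x : Multiplicative (ZMod (3 ^ s))) :
    x ∈ Subgroup.zpowers (Multiplicative.ofAdd (1 : ZMod (3 ^ s))) := by
  refine ⟨(ZMod.cast (x.toAdd) : ℤ), ?_⟩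
  change _ ^ (_ : ℤ) = x
  rw [← ofAdd_zsmul]
  simp

lemma ker_fin : Finite (phi s).ker ∧ Nat.card (phi s).ker ∣ 8 := by
  obtain ⟨h1, h2⟩ := exists_sub (rel_pq s) (rel_pqpq s)
  exact ⟨Finite.of_injective _ (Subgroup.inclusion_injective (ker_le s)),
    (Subgroup.card_dvd_of_le (ker_le s)).trans h2⟩

lemma finG : Finite (PresentedGroup (rels s)) := by
  have := (ker_fin s).1
  have : NeZero (3 ^ s) := ⟨by positivity⟩
  have : Finite (GG ⧸ (phi s).ker) :=
    Finite.of_injective _ (QuotientGroup.kerLift_injective (phi s))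
  exact Finite.of_subgroup_quotient (phi s).ker

end GroupPart


section HomologyPart
open CategoryTheory Limits Rep

variable {k G C : Type} [CommRing k] [Group G] [CommGroup C] [Finite G] [Fintype C]
  (φ : G →* C)

lemma mlhom_ext {X : Type} {N : Type*} [AddCommMonoid N] [Module k N]
    {f g : MonoidAlgebra k X →ₗ[k] N}
    (H : ∀ c r, f (MonoidAlgebra.single c r) = g (MonoidAlgebra.single c r)) : f = g :=
  MonoidAlgebra.lhom_ext' fun c => LinearMap.ext fun r => H c r

/-- Push-forward `k[G] → k[C]`. -/
noncomputable def pushHom : leftRegular k G ⟶ res φ (leftRegular k C) :=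
  leftRegularHom (res φ (leftRegular k C)) (MonoidAlgebra.single 1 1 : MonoidAlgebra k C)

/-- Pull-back `k[C] → k[G]`. -/
noncomputable def pullLin : MonoidAlgebra k C →ₗ[k] MonoidAlgebra k G :=
  (MonoidAlgebra.coeffLinearEquiv k).symm.toLinearMap ∘ₗ
    (Finsupp.linearEquivFunOnFinite k k G).symm.toLinearMap ∘ₗ
    LinearMap.funLeft k k φ ∘ₗ (Finsupp.linearEquivFunOnFinite k k C).toLinearMap ∘ₗ
    (MonoidAlgebra.coeffLinearEquiv k).toLinearMap

lemma pullLin_coeff (x : MonoidAlgebra k C) (g : G) :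
    (pullLin φ x).coeff g = x.coeff (φ g) := rfl

noncomputable def pullHom : res φ (leftRegular k C) ⟶ leftRegular k G :=
  Rep.ofHom ⟨pullLin φ, fun g => by
    apply LinearMap.ext
    intro x
    ext h
    change (pullLin φ (Representation.ofMulAction k C C (φ g) x)).coeff h =
      (Representation.ofMulAction k G G g (pullLin φ x)).coeff h
    simp [pullLin_coeff]⟩

lemma pushHom_apply [Fintype G] (y : MonoidAlgebra k G) :
    (pushHom (k := k) φ).hom y = ∑ g : G, MonoidAlgebra.single (φ g) (y.coeff g) := by
  have h : (pushHom (k := k) φ).hom.toLinearMap = ∑ g : G, MonoidAlgebra.lsingle (φ g) ∘ₗ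
      Finsupp.lapply g ∘ₗ (MonoidAlgebra.coeffLinearEquiv k).toLinearMap := by
    apply mlhom_ext
    intro c r
    refine (leftRegularHom_hom_single c _ r).trans ?_
    classical
    simp [Finsupp.single_apply]
    rw [Finset.sum_eq_single c]
    · simp
    · intro b _ hb
      simp [hb.symm]
    · simp
  refine (LinearMap.congr_fun h y).trans ?_
  simp

lemma push_pull (hφ : Function.Surjective φ) : pullHom (k := k) φ ≫ pushHom φ =
    (Nat.card φ.ker : k) • 𝟙 _ := by
  classical
  have := Fintype.ofFinite G
  ext x₀ c
  change ((pushHom (k := k) φ).hom (pullLin φ (MonoidAlgebra.single x₀ 1)) :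
      MonoidAlgebra k C).coeff c =
    ((Nat.card φ.ker : k) • (MonoidAlgebra.single x₀ 1 : MonoidAlgebra k C)).coeff c
  generalize (MonoidAlgebra.single x₀ 1 : MonoidAlgebra k C) = x
  rw [pushHom_apply]
  have hc : (Finset.univ.filter (fun g => φ g = c)).card = Nat.card φ.ker := by
    rw [MonoidHom.card_fiber_eq_of_mem_range φ (hφ c) (hφ 1), Nat.card_eq_fintype_card,
      Fintype.card_subtype]
    congr 1
    ext g
    simp [MonoidHom.mem_ker]
  rw [← hc]
  simp only [pullLin_coeff, MonoidAlgebra.coeff_sum, Finsupp.finsetSum_apply,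
    MonoidAlgebra.coeff_single, Finsupp.single_apply, MonoidAlgebra.coeff_smul,
    Finsupp.smul_apply, smul_eq_mul]
  rw [← Finset.sum_filter, Finset.sum_congr rfl (g := fun _ => x.coeff c), Finset.sum_const,
    nsmul_eq_mul]
  intro g hg
  rw [(Finset.mem_filter.1 hg).2]


lemma proj_res (hφ : Function.Surjective φ) (hu : IsUnit (Nat.card φ.ker : k)) :
    Projective (res φ (leftRegular k C)) := by
  obtain ⟨u, hu⟩ := hu
  have : Retract (res φ (leftRegular k C)) (leftRegular k G) :=
    { i := pullHom φ
      r := (↑u⁻¹ : k) • pushHom φ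
      retract := by
        rw [Linear.comp_smul, push_pull φ hφ, ← hu, smul_smul]; simp }
  exact this.projective

noncomputable def resRes (hφ : Function.Surjective φ) (hu : IsUnit (Nat.card φ.ker : k))
    (g : C) (hg : ∀ x, x ∈ Subgroup.zpowers g) :
    ProjectiveResolution (Rep.trivial k G k) where
  complex := ((resFunctor φ).mapHomologicalComplex _).obj
    (Rep.FiniteCyclicGroup.resolution k g hg).complex
  projective _ := proj_res φ hφ hu
  π := ((resFunctor φ).mapHomologicalComplex _).map (Rep.FiniteCyclicGroup.resolution k g hg).π ≫
    (HomologicalComplex.singleMapHomologicalComplex _ _ _).hom.app _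
  quasiIso := by
    have : ((resFunctor (k := k) φ)).PreservesHomology := inferInstance
    have h1 : QuasiIso (((resFunctor φ).mapHomologicalComplex _).map
      (Rep.FiniteCyclicGroup.resolution k g hg).π) := by
      have := (Rep.FiniteCyclicGroup.resolution k g hg).quasiIso
      infer_instance
    have h2 : QuasiIso ((HomologicalComplex.singleMapHomologicalComplex (resFunctor (k := k) φ)
      (ComplexShape.down ℕ) 0).hom.app (Rep.trivial k C k)) := by
      have : IsIso ((HomologicalComplex.singleMapHomologicalComplex (resFunctor (k := k) φ)
        (ComplexShape.down ℕ) 0).hom.app (Rep.trivial k C k)) :=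
        NatIso.hom_app_isIso _ _
      exact quasiIso_of_isIso _
    exact quasiIso_comp (hφ := h1) (hφ' := h2) _ _

lemma isoOfZero (K : ChainComplex (ModuleCat k) ℕ) (h : ∀ i j, K.d i j = 0) (n : ℕ) :
    Nonempty (K.homology n ≅ K.X n) :=
  ⟨(ShortComplex.LeftHomologyData.ofZeros (K.sc n) (h _ _) (h _ _)).homologyIso⟩


open scoped TensorProduct

lemma coinv_mk_res (X : Rep k C) (g : G) (a : k) (x : X) :
    coinvariantsTensorMk (Rep.trivial k G k) (res φ X) a (X.ρ (φ g) x) =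
    coinvariantsTensorMk (Rep.trivial k G k) (res φ X) a x := by
  rw [coinvariantsTensorMk_apply, coinvariantsTensorMk_apply]
  exact Representation.Coinvariants.mk_self_apply
    ((Rep.trivial k G k).ρ.tprod (res φ X).ρ) g (a ⊗ₜ x)

lemma map_mk (X Y : Rep k C) (f : X ⟶ Y) (a : k) (x : X) :
    (((coinvariantsTensor k G).obj (Rep.trivial k G k)).map ((resFunctor φ).map f)).hom
      (coinvariantsTensorMk (Rep.trivial k G k) (res φ X) a x) =
    coinvariantsTensorMk (Rep.trivial k G k) (res φ Y) a (f.hom x) := by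
  rfl

lemma map_zero_sub (hφ : Function.Surjective φ) (X : Rep k C) (g : C) :
    ((coinvariantsTensor k G).obj (Rep.trivial k G k)).map
      ((resFunctor φ).map (applyAsHom X g - 𝟙 X)) = 0 := by
  obtain ⟨h, rfl⟩ := hφ g
  apply coinvariantsTensor_hom_ext
  apply LinearMap.ext
  intro a
  apply LinearMap.ext
  intro x
  refine (map_mk φ X X _ a x).trans ?_
  have : (applyAsHom X (φ h) - 𝟙 X).hom x = X.ρ (φ h) x - x := by simp [sub_hom, applyAsHom]
  rw [this]
  refine (map_sub _ _ _).trans ?_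
  rw [coinv_mk_res, sub_self]
  rfl

lemma map_zero_norm (hφ : Function.Surjective φ) (X : Rep k C)
    (hC : (Fintype.card C : k) = 0) :
    ((coinvariantsTensor k G).obj (Rep.trivial k G k)).map
      ((resFunctor φ).map X.norm) = 0 := by
  apply coinvariantsTensor_hom_ext
  apply LinearMap.ext
  intro a
  apply LinearMap.ext
  intro x
  refine (map_mk φ X X _ a x).trans ?_
  have : X.norm.hom x = ∑ c : C, X.ρ c x := by simp [Rep.norm, Representation.norm]
  rw [this]
  refine (map_sum _ _ _).trans ?_
  have : ∀ c ∈ (Finset.univ : Finset C),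
      coinvariantsTensorMk (Rep.trivial k G k) (res φ X) a (X.ρ c x) =
      coinvariantsTensorMk (Rep.trivial k G k) (res φ X) a x := by
    intro c _
    obtain ⟨h, rfl⟩ := hφ c
    exact coinv_mk_res φ X h a x
  refine (Finset.sum_congr rfl this).trans ?_
  rw [Finset.sum_const, Finset.card_univ, ← Nat.cast_smul_eq_nsmul k, hC, zero_smul]
  rfl

lemma d_zero (hφ : Function.Surjective φ) (hu : IsUnit (Nat.card φ.ker : k))
    (g : C) (hg : ∀ x, x ∈ Subgroup.zpowers g) (hC : (Fintype.card C : k) = 0) (i j : ℕ) :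
    ((resRes φ hφ hu g hg).complex.coinvariantsTensorObj (Rep.trivial k G k)).d i j = 0 := by
  by_cases hij : j + 1 = i
  swap
  · exact HomologicalComplex.shape _ _ _ hij
  subst hij
  change ((coinvariantsTensor k G).obj (Rep.trivial k G k)).map
      ((resFunctor φ).map (((Rep.FiniteCyclicGroup.chainComplexFunctor k g).obj
        (leftRegular k C)).d (j + 1) j)) = 0
  by_cases hj : Even (j + 1)
  · have : (((Rep.FiniteCyclicGroup.chainComplexFunctor k g).obj
        (leftRegular k C)).d (j + 1) j) = (leftRegular k C).norm :=
      (dif_pos rfl).trans (if_pos hj)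
    rw [this]
    exact map_zero_norm φ hφ _ hC
  · have : (((Rep.FiniteCyclicGroup.chainComplexFunctor k g).obj
        (leftRegular k C)).d (j + 1) j) = applyAsHom (leftRegular k C) g - 𝟙 _ :=
      (dif_pos rfl).trans (if_neg hj)
    rw [this]
    exact map_zero_sub φ hφ _ g

/-- augmentation -/
noncomputable def augm : MonoidAlgebra k C →ₗ[k] k :=
  Finsupp.linearCombination k (fun _ => (1 : k)) ∘ₗ
        (MonoidAlgebra.coeffLinearEquiv k).toLinearMap

lemma augm_single (c : C) (r : k) : augm (MonoidAlgebra.single c r) = r := by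
  simp [augm]

lemma X_iso (hφ : Function.Surjective φ) (hu : IsUnit (Nat.card φ.ker : k))
    (g : C) (hg : ∀ x, x ∈ Subgroup.zpowers g) (j : ℕ) :
    Nonempty
    (((resRes φ hφ hu g hg).complex.coinvariantsTensorObj (Rep.trivial k G k)).X j ≃ₗ[k] k) := by
  change Nonempty (((coinvariantsTensor k G).obj (Rep.trivial k G k)).obj
    (res φ (leftRegular k C)) ≃ₗ[k] k)
  let F : ((Rep.trivial k G k).ρ.tprod (res φ (leftRegular k C)).ρ).Coinvariants →ₗ[k] k :=
    Representation.Coinvariants.lift _ (TensorProduct.lift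
      (LinearMap.compl₂ (LinearMap.mul k k) augm)) (by
      intro g
      apply TensorProduct.ext
      apply LinearMap.ext
      intro a
      apply mlhom_ext
      intro c r
      simp [augm_single])
  let I : k →ₗ[k] ((Rep.trivial k G k).ρ.tprod (res φ (leftRegular k C)).ρ).Coinvariants :=
    (coinvariantsTensorMk (Rep.trivial k G k) (res φ (leftRegular k C))).flip
      (MonoidAlgebra.single 1 1 : MonoidAlgebra k C)
  refine ⟨LinearEquiv.ofLinearMap F I ?_ ?_⟩
  · apply LinearMap.ext
    intro a
    change a * augm (MonoidAlgebra.single (1 : C) (1 : k)) = a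
    rw [augm_single, mul_one]
  · apply Representation.Coinvariants.hom_ext
    apply TensorProduct.ext
    apply LinearMap.ext
    intro a
    apply mlhom_ext
    intro c r
    obtain ⟨g, rfl⟩ := hφ c
    change coinvariantsTensorMk (Rep.trivial k G k) (res φ (leftRegular k C))
      (a * augm (MonoidAlgebra.single (φ g) r)) (MonoidAlgebra.single 1 1 : MonoidAlgebra k C) =
      coinvariantsTensorMk (Rep.trivial k G k) (res φ (leftRegular k C)) a
        (MonoidAlgebra.single (φ g) r : MonoidAlgebra k C)
    rw [augm_single, ← coinv_mk_res φ (leftRegular k C) g _ (MonoidAlgebra.single 1 1)]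
    have h1 : (leftRegular k C).ρ (φ g) (MonoidAlgebra.single 1 1 : MonoidAlgebra k C) =
        (MonoidAlgebra.single (φ g) 1 : MonoidAlgebra k C) := by simp
    have h2 : (MonoidAlgebra.single (φ g) r : MonoidAlgebra k C) =
        r • (MonoidAlgebra.single (φ g) 1 : MonoidAlgebra k C) := by simp
    have h3 : (a * r : k) = r • (a : k) := mul_comm _ _
    rw [h1, h2, h3]
    refine (LinearMap.congr_fun (map_smul (coinvariantsTensorMk (Rep.trivial k G k)
      (res φ (leftRegular k C))) r a) _).trans ?_
    exact (map_smul (coinvariantsTensorMk (Rep.trivial k G k)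
      (res φ (leftRegular k C)) a) r _).symm


lemma quotEquiv (S : ShortComplex (ModuleCat k)) {A B D : Type} [AddCommGroup A]
    [AddCommGroup B] [AddCommGroup D] (f : A →+ B) (g : B →+ D)
    (eA : A ≃+ S.X₁) (eB : B ≃+ S.X₂) (eD : D ≃+ S.X₃)
    (hf : ∀ a, eB (f a) = S.f.hom (eA a)) (hg : ∀ b, eD (g b) = S.g.hom (eB b)) :
    Nonempty (g.ker ⧸ f.range.addSubgroupOf g.ker ≃+ S.homology) := by
  let e : g.ker ≃+ LinearMap.ker S.g.hom :=
    { toFun := fun x => ⟨eB x.1, by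
        have := hg x.1
        rw [x.2, map_zero] at this
        exact this.symm⟩
      invFun := fun x => ⟨eB.symm x.1, by
        have := hg (eB.symm x.1)
        rw [AddEquiv.apply_symm_apply, x.2] at this
        simpa using this⟩
      left_inv := fun x => by ext; simp
      right_inv := fun x => by ext; simp
      map_add' := fun x y => by ext; simp }
  have e2 := QuotientAddGroup.congr (f.range.addSubgroupOf g.ker)
    (LinearMap.range S.moduleCatToCycles).toAddSubgroup e (by
      ext x
      constructor
      · rintro ⟨y, ⟨a, ha⟩, rfl⟩
        refine ⟨eA a, ?_⟩
        ext
        change S.f.hom (eA a) = eB y.1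
        rw [← hf]
        exact congrArg eB ha
      · rintro ⟨a, rfl⟩
        refine ⟨e.symm _, ⟨eA.symm a, ?_⟩, AddEquiv.apply_symm_apply e _⟩
        change f (eA.symm a) = eB.symm (S.f.hom a)
        rw [AddEquiv.eq_symm_apply, hf, AddEquiv.apply_symm_apply])
  exact ⟨e2.trans (S.moduleCatHomologyIso.toLinearEquiv.symm.toAddEquiv)⟩

lemma d_compare (n : ℕ) (x : (Fin (n + 1) → G) →₀ k) :
    trivialChainsD G k n x =
      (groupHomology.inhomogeneousChains.d (Rep.trivial k G k) n).hom x := by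
  induction x using Finsupp.induction_linear with
  | zero => simp
  | add x y hx hy => rw [map_add, map_add, hx, hy]
  | single g a =>
    refine Eq.trans ?_
      (groupHomology.inhomogeneousChains.d_single (A := Rep.trivial k G k) n g a).symm
    simp [trivialChainsD, Finsupp.mapDomain_single]
    rfl

lemma homology_compare (n : ℕ) :
    Nonempty (groupHomologyTriv G k n ≃+ groupHomology (Rep.trivial k G k) n) := by
  let K := groupHomology.inhomogeneousChains (Rep.trivial k G k)
  have hf : ∀ a, AddEquiv.refl _ (trivialChainsD G k n a) = (K.d (n + 1) n).hom a := by
    intro a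
    rw [groupHomology.inhomogeneousChains.d_def]
    exact d_compare n a
  have hg : ∀ a, AddEquiv.refl _ (trivialChainsDFrom G k n a) = (K.d n (n - 1)).hom a := by
    intro a
    cases n with
    | zero =>
      rw [K.shape _ _ (by simp)]
      rfl
    | succ m =>
      refine Eq.trans ?_ (congrArg (fun f => f.hom a)
        (groupHomology.inhomogeneousChains.d_def (Rep.trivial k G k) m)).symm
      exact d_compare m a
  obtain ⟨e⟩ := quotEquiv (K.sc' (n + 1) n (n - 1)) (trivialChainsD G k n)
    (trivialChainsDFrom G k n) (AddEquiv.refl _) (AddEquiv.refl _) (AddEquiv.refl _) hf hg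
  have e3 : K.homology n ≅ (K.sc' (n + 1) n (n - 1)).homology :=
    ShortComplex.homologyMapIso (K.isoSc' (n + 1) n (n - 1) (by simp) (by cases n <;> simp))
  exact ⟨e.trans e3.symm.toLinearEquiv.toAddEquiv⟩

lemma main_general (hφ : Function.Surjective φ) (hu : IsUnit (Nat.card φ.ker : k))
    (g : C) (hg : ∀ x, x ∈ Subgroup.zpowers g) (hC : (Fintype.card C : k) = 0) (n : ℕ) :
    Nonempty (groupHomologyTriv G k n ≃+ k) := by
  classical
  obtain ⟨e1⟩ := homology_compare (G := G) (k := k) n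
  have e2 := groupHomologyIso (Rep.trivial k G k) n (resRes φ hφ hu g hg)
  obtain ⟨e3⟩ := isoOfZero _ (d_zero φ hφ hu g hg hC) n
  obtain ⟨e4⟩ := X_iso φ hφ hu g hg n
  exact ⟨(e1.trans (e2 ≪≫ e3).toLinearEquiv.toAddEquiv).trans e4.toAddEquiv⟩

end HomologyPart

/-- the homology of the generalized binary tetrahedral group `G = P'_{8·3^s}`
with trivial coefficients `ℤ/3ℤ` is `ℤ/3ℤ` in every degree. -/
theorem stmt16 (s : ℕ) (hs : 2 ≤ s) :
    ∀ n : ℕ, Nonempty (groupHomologyTriv (PresentedGroup (rels s)) (ZMod 3) n ≃+ ZMod 3) := by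
  intro n
  have := finG s
  have : NeZero (3 ^ s) := ⟨by positivity⟩
  obtain ⟨_, hd⟩ := ker_fin s
  refine main_general (k := ZMod 3) (phi s) (phi_surj s) ?_
    (Multiplicative.ofAdd (1 : ZMod (3 ^ s))) (gen_cyc s) ?_ n
  · exact (ZMod.isUnit_iff_coprime _ 3).2 (Nat.Coprime.coprime_dvd_left hd (by norm_num))
  · rw [Fintype.card_multiplicative, ZMod.card, Nat.cast_pow]
    have h3 : ((3 : ℕ) : ZMod 3) = 0 := by decide
    rw [h3, zero_pow (by omega)]
end
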